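/- arXiv:1602.00429 — 2 statements merged into one kernel-verified Lean document; each statement's English description precedes it below -/
import Mathlib

section
/- Let R be an unramified regular local ring, i.e., a regular local ring that either contains a field or has mixed characteristic p with p ∉ m² (m the maximal ideal). Let M and N be nonzero finitely generated R-modules with Tor_i^R(M,N) = 0 for all i > 0. Then dim M + dim N = dim R + dim(M ⊗_R N). -/
/-!
STATEMENT 15: Let `R` be an unramified regular local ring (it contains a field, or has mixed
characteristic `p` with `p ∉ m²`). If `M`, `N` are nonzero finitely generated `R`-modules with
`Tor_i^R(M, N) = 0` for all `i > 0`, then `dim M + dim N = dim R + dim (M ⊗_R N)`.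
-/

open CategoryTheory CategoryTheory.Limits

open scoped TensorProduct

universe u

/-- A Noetherian local ring is regular if its maximal ideal can be generated by
(Krull dimension of the ring) many elements. -/
def IsRegularLocal (Q : Type u) [CommRing Q] [IsLocalRing Q] : Prop :=
  IsNoetherianRing Q ∧ ∃ s : Finset Q, Ideal.span (s : Set Q) = IsLocalRing.maximalIdeal Q ∧
    (s.card : WithBot ℕ∞) = ringKrullDim Q

/-- A local ring is unramified if it contains a field (equal characteristic) or has mixed
characteristic `p` with `p ∉ m²`. -/
def IsUnramifiedLocal (R : Type u) [CommRing R] [IsLocalRing R] : Prop :=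
  (∃ K : Subring R, IsField K) ∨
    (CharZero R ∧ ∃ p : ℕ, p.Prime ∧ CharP (IsLocalRing.ResidueField R) p ∧
      (p : R) ∉ IsLocalRing.maximalIdeal R ^ 2)

/-- The Krull dimension of a commutative ring, valued in `WithBot ℕ∞`. -/
noncomputable def ringDim (R : Type u) [CommRing R] : WithBot ℕ∞ := ringKrullDim R

/-- The Krull dimension of a module `M`: the Krull dimension of `R ⧸ ann M`. -/
noncomputable def moduleDim (R : Type u) [CommRing R] (M : Type u) [AddCommGroup M]
    [Module R M] : WithBot ℕ∞ :=
  ringDim (R ⧸ Module.annihilator R M)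

set_option linter.unusedSectionVars false

section TorIndependentResolutions

variable (R : Type u) [CommRing R]

/-- `N` has a free resolution of length at most `n` by finite free modules that remains exact after
tensoring with `X`. -/
def TensorExactResolution : ℕ → ∀ (N X : Type u) [AddCommGroup N] [Module R N]
    [AddCommGroup X] [Module R X], Prop
  | 0, N, _, _, _, _, _ => Module.Free R N
  | n + 1, N, X, _, _, _, _ => ∃ (k : ℕ) (f : (Fin k → R) →ₗ[R] N), Function.Surjective f ∧
      Function.Injective ((LinearMap.ker f).subtype.lTensor X) ∧
      TensorExactResolution n (LinearMap.ker f) X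

/-- The first `n` syzygies of `N` with respect to any choice of finite free covers
stay exact after tensoring with `X`. -/
def SyzygyTensorExact : ℕ → ∀ (N X : Type u) [AddCommGroup N] [Module R N]
    [AddCommGroup X] [Module R X], Prop
  | 0, _, _, _, _, _, _ => True
  | n + 1, N, X, _, _, _, _ => ∀ (k : ℕ) (f : (Fin k → R) →ₗ[R] N), Function.Surjective f →
      Function.Injective ((LinearMap.ker f).subtype.lTensor X) ∧
      SyzygyTensorExact n (LinearMap.ker f) X

/-- There is a regular sequence of length `n` on `M` inside the maximal ideal. -/
def HasRegularLength [IsLocalRing R] : ℕ → ∀ (M : Type u) [AddCommGroup M] [Module R M], Prop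
  | 0, _, _, _ => True
  | n + 1, M, _, _ => ∃ x ∈ IsLocalRing.maximalIdeal R, IsSMulRegular M x ∧
      HasRegularLength n (QuotSMulTop x M)

/-- `M` contains a nonzero element annihilated by the maximal ideal. -/
def HasSocle [IsLocalRing R] (M : Type u) [AddCommGroup M] [Module R M] : Prop :=
  ∃ u : M, u ≠ 0 ∧ ∀ y ∈ IsLocalRing.maximalIdeal R, y • u = 0

variable {R}
variable {N X Y : Type u} [AddCommGroup N] [Module R N] [AddCommGroup X] [Module R X]
  [AddCommGroup Y] [Module R Y]

theorem TensorExactResolution.of_syzygyTensorExact {n : ℕ} :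
    ∀ {N : Type u} [AddCommGroup N] [Module R N], TensorExactResolution R n N X →
      SyzygyTensorExact R n N Y → TensorExactResolution R n N Y := by
  induction n with
  | zero => intro N _ _ h _; exact h
  | succ n ih =>
    rintro N _ _ ⟨k, f, hf, -, h⟩ h'
    exact ⟨k, f, hf, (h' k f hf).1, ih h (h' k f hf).2⟩

theorem isSMulRegular_of_injective {f : X →ₗ[R] Y} (hf : Function.Injective f) {x : R}
    (h : IsSMulRegular Y x) : IsSMulRegular X x := by
  intro a b hab
  apply hf
  apply h
  simpa using congrArg f hab

theorem isSMulRegular_tensor_of_flat [Module.Flat R N] {x : R} (h : IsSMulRegular X x) :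
    IsSMulRegular (X ⊗[R] N) x := by
  have := Module.Flat.rTensor_preserves_injective_linearMap (M := N)
    (LinearMap.lsmul R X x) h
  have e : (LinearMap.lsmul R X x).rTensor N = LinearMap.lsmul R (X ⊗[R] N) x := by
    ext a b
    simp [TensorProduct.smul_tmul']
  rw [e] at this
  exact this

theorem lTensor_quotSMulTop_injective {Z F N X : Type u} [AddCommGroup Z] [Module R Z]
    [AddCommGroup F] [Module R F] [AddCommGroup N] [Module R N] [AddCommGroup X] [Module R X]
    {ι : Z →ₗ[R] F} {f : F →ₗ[R] N} (hex : Function.Exact ι f) (hf : Function.Surjective f)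
    (hinj : Function.Injective (ι.lTensor X)) {x : R} (hN : IsSMulRegular (X ⊗[R] N) x) :
    Function.Injective (ι.lTensor (QuotSMulTop x X)) := by
  have hex' := lTensor_exact X hex hf
  have key : Function.Injective (QuotSMulTop.map x (ι.lTensor X)) := by
    rw [injective_iff_map_eq_zero]
    intro a ha
    obtain ⟨w, rfl⟩ := Submodule.Quotient.mk_surjective _ a
    rw [QuotSMulTop.map_apply_mk, Submodule.Quotient.mk_eq_zero,
      Submodule.mem_smul_pointwise_iff_exists] at ha
    obtain ⟨v, -, hv⟩ := ha
    have h0 : f.lTensor X v = 0 := by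
      apply hN
      simp only [smul_zero, ← map_smul]
      rw [hv]
      exact hex'.apply_apply_eq_zero w
    obtain ⟨w', rfl⟩ := (hex' v).1 h0
    rw [Submodule.Quotient.mk_eq_zero, Submodule.mem_smul_pointwise_iff_exists]
    refine ⟨w', trivial, hinj ?_⟩
    rw [map_smul, hv]
  have nat : (QuotSMulTop.quotSMulTopTensorEquivQuotSMulTop x F X).toLinearMap ∘ₗ
      ι.lTensor (QuotSMulTop x X) = QuotSMulTop.map x (ι.lTensor X) ∘ₗ
      (QuotSMulTop.quotSMulTopTensorEquivQuotSMulTop x Z X).toLinearMap := by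
    apply TensorProduct.ext'
    intro a z
    obtain ⟨a, rfl⟩ := Submodule.Quotient.mk_surjective _ a
    have h1 : ∀ (F : Type u) [AddCommGroup F] [Module R F] (z : F),
        QuotSMulTop.quotSMulTopTensorEquivQuotSMulTop x F X
          ((Submodule.Quotient.mk a : QuotSMulTop x X) ⊗ₜ[R] z)
        = Submodule.Quotient.mk (a ⊗ₜ z) := by
      intro F _ _ z
      rw [QuotSMulTop.quotSMulTopTensorEquivQuotSMulTop]
      simp only [LinearEquiv.trans_apply]
      rw [LinearEquiv.symm_apply_eq]
      rfl
    simp [h1]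
  have : Function.Injective ((QuotSMulTop.quotSMulTopTensorEquivQuotSMulTop x F X).toLinearMap ∘ₗ
      ι.lTensor (QuotSMulTop x X)) := by
    rw [nat]
    exact key.comp (LinearEquiv.injective _)
  rw [LinearMap.coe_comp] at this
  exact this.of_comp

theorem TensorExactResolution.quotSMulTop {n : ℕ} {x : R} (hX : IsSMulRegular X x) :
    ∀ {N : Type u} [AddCommGroup N] [Module R N], IsSMulRegular (X ⊗[R] N) x →
      TensorExactResolution R n N X → TensorExactResolution R n N (QuotSMulTop x X) := by
  induction n with
  | zero => intro N _ _ _ h; exact h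
  | succ n ih =>
    rintro N _ _ hN ⟨k, f, hf, hi, h⟩
    refine ⟨k, f, hf, lTensor_quotSMulTop_injective (f.exact_subtype_ker_map) hf hi hN, ih ?_ h⟩
    exact isSMulRegular_of_injective hi (isSMulRegular_tensor_of_flat hX)

theorem SyzygyTensorExact.quotSMulTop {n : ℕ} {x : R} (hX : IsSMulRegular X x) :
    ∀ {N : Type u} [AddCommGroup N] [Module R N], IsSMulRegular (X ⊗[R] N) x →
      SyzygyTensorExact R n N X → SyzygyTensorExact R n N (QuotSMulTop x X) := by
  induction n with
  | zero => intros; trivial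
  | succ n ih =>
    intro N _ _ hN H k f hf
    obtain ⟨hi, h⟩ := H k f hf
    refine ⟨lTensor_quotSMulTop_injective (f.exact_subtype_ker_map) hf hi hN, ih ?_ h⟩
    exact isSMulRegular_of_injective hi (isSMulRegular_tensor_of_flat hX)

theorem TensorExactResolution.self {n : ℕ} : ∀ {N : Type u} [AddCommGroup N] [Module R N],
    TensorExactResolution R n N X → TensorExactResolution R n N R := by
  induction n with
  | zero => intro N _ _ h; exact h
  | succ n ih =>
    rintro N _ _ ⟨k, f, hf, hi, h⟩
    exact ⟨k, f, hf, Module.Flat.lTensor_preserves_injective_linearMap _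
      (Submodule.subtype_injective _), ih h⟩

theorem SyzygyTensorExact.self (n : ℕ) : ∀ (N : Type u) [AddCommGroup N] [Module R N],
    SyzygyTensorExact R n N R := by
  induction n with
  | zero => intros; trivial
  | succ n ih =>
    intro N _ _ k f hf
    exact ⟨Module.Flat.lTensor_preserves_injective_linearMap _
      (Submodule.subtype_injective _), ih _⟩

section Local

variable [IsLocalRing R] [IsNoetherianRing R]

open IsLocalRing

theorem free_of_lTensor_injective_of_hasSocle {Z F N : Type u} [AddCommGroup Z] [Module R Z]
    [AddCommGroup F] [Module R F] [AddCommGroup N] [Module R N] [Module.Finite R Z]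
    [Module.Finite R F] [Module.Free R F] [Module.Flat R Z]
    {ι : Z →ₗ[R] F} {f : F →ₗ[R] N} (hex : Function.Exact ι f) (hf : Function.Surjective f)
    (hX : HasSocle R X) (hinj : Function.Injective (ι.lTensor X)) : Module.Free R N := by
  obtain ⟨u, hu, hm⟩ := hX
  let g : ResidueField R →ₗ[R] X := (maximalIdeal R).liftQ (LinearMap.toSpanSingleton R X u)
    (fun y hy => by simpa using hm y hy)
  have hg : Function.Injective g := by
    rw [← LinearMap.ker_eq_bot]
    refine Submodule.ker_liftQ_eq_bot _ _ _ ?_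
    intro y hy
    by_contra hny
    have : IsUnit y := by simpa using hny
    apply hu
    rw [LinearMap.mem_ker, LinearMap.toSpanSingleton_apply] at hy
    exact (this.smul_eq_zero).1 hy
  refine Module.free_of_lTensor_residueField_injective ι f hf hex ?_
  have h1 : Function.Injective (g.rTensor Z) :=
    Module.Flat.rTensor_preserves_injective_linearMap g hg
  have h2 : ι.lTensor X ∘ₗ g.rTensor Z = g.rTensor F ∘ₗ ι.lTensor (ResidueField R) := by
    apply TensorProduct.ext'
    intro a b; simp
  have h3 : Function.Injective (g.rTensor F ∘ₗ ι.lTensor (ResidueField R)) := by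
    rw [← h2]; exact hinj.comp h1
  rw [LinearMap.coe_comp] at h3
  exact h3.of_comp

theorem TensorExactResolution.free_of_hasSocle {n : ℕ} (hX : HasSocle R X) :
    ∀ {N : Type u} [AddCommGroup N] [Module R N],
      TensorExactResolution R n N X → Module.Free R N := by
  induction n with
  | zero => intro N _ _ h; exact h
  | succ n ih =>
    rintro N _ _ ⟨k, f, hf, hi, h⟩
    have := ih h
    exact free_of_lTensor_injective_of_hasSocle f.exact_subtype_ker_map hf hX hi

end Local
end TorIndependentResolutions

section RegularElements

variable {R : Type u} [CommRing R] [IsNoetherianRing R]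

theorem exists_isSMulRegular_of_forall_eq_zero {M : Type u} [AddCommGroup M] [Module R M]
    [Module.Finite R M] {I : Ideal R} (h : ∀ u : M, (∀ y ∈ I, y • u = 0) → u = 0) :
    ∃ x ∈ I, IsSMulRegular M x := by
  by_contra! hc
  have h1 : (I : Set R) ⊆ ⋃ p ∈ associatedPrimes R M, (p : Set R) := by
    rw [biUnion_associatedPrimes_eq_zero_divisors]
    intro x hx
    have := hc x hx
    rw [isSMulRegular_iff_right_eq_zero_of_smul] at this
    push Not at this
    exact ⟨this.choose, this.choose_spec.2, this.choose_spec.1⟩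
  obtain ⟨p, hp, hIp⟩ := (I.subset_union_prime_finite (associatedPrimes.finite R M)
    (f := id) 0 0 fun _ h _ _ ↦ h.1).1 h1
  obtain ⟨hpp, u, hu⟩ := (isAssociatedPrime_iff_exists_injective_linearMap _ _).1 hp
  have := h (u 1) (fun y hy => by
    rw [← map_smul]
    have : y • (1 : R ⧸ p) = 0 := by
      rw [Algebra.smul_def, mul_one]
      exact Ideal.Quotient.eq_zero_iff_mem.2 (hIp hy)
    rw [this, map_zero])
  have h2 : (1 : R ⧸ p) = 0 := hu (by rw [this, map_zero])
  have := Ideal.Quotient.nontrivial_iff.2 hpp.ne_top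
  exact one_ne_zero h2

variable [IsLocalRing R]

open IsLocalRing

theorem exists_isSMulRegular_of_not_hasSocle {M : Type u} [AddCommGroup M] [Module R M]
    [Module.Finite R M] (h : ¬ HasSocle R M) : ∃ x ∈ maximalIdeal R, IsSMulRegular M x := by
  apply exists_isSMulRegular_of_forall_eq_zero
  intro u hu
  by_contra hne
  exact h ⟨u, hne, hu⟩

theorem nontrivial_quotSMulTop {M : Type u} [AddCommGroup M] [Module R M]
    [Module.Finite R M] [Nontrivial M] {x : R} (hx : x ∈ maximalIdeal R) :
    Nontrivial (QuotSMulTop x M) := by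
  rw [Submodule.Quotient.nontrivial_iff]
  intro h
  have := Submodule.eq_bot_of_le_smul_of_le_jacobson_bot (Ideal.span {x}) (⊤ : Submodule R M)
    Module.Finite.fg_top (by rw [Submodule.ideal_span_singleton_smul, h])
    (by rw [IsLocalRing.jacobson_eq_maximalIdeal _ bot_ne_top]
        simpa [Ideal.span_le] using hx)
  exact top_ne_bot this

theorem HasSocle.of_linearEquiv {M N : Type u} [AddCommGroup M] [Module R M] [AddCommGroup N]
    [Module R N] (e : M ≃ₗ[R] N) (h : HasSocle R M) : HasSocle R N := by
  obtain ⟨u, hu, hm⟩ := h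
  exact ⟨e u, by simpa using hu, fun y hy => by rw [← map_smul, hm y hy, map_zero]⟩

theorem TensorExactResolution.exists_le_supportDim {n : ℕ} :
    ∀ {N M : Type u} [AddCommGroup N] [Module R N] [AddCommGroup M] [Module R M]
      [Module.Finite R M] [Nontrivial M], TensorExactResolution R n N M →
      ∃ s : ℕ, TensorExactResolution R s N R ∧ (s : WithBot ℕ∞) ≤ Module.supportDim R M := by
  induction n with
  | zero =>
    intro N M _ _ _ _ _ _ h
    refine ⟨0, h, ?_⟩
    obtain ⟨d, hd⟩ := WithBot.ne_bot_iff_exists.1 (Module.supportDim_ne_bot_of_nontrivial R M)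
    rw [← hd]
    exact_mod_cast bot_le
  | succ n ih =>
    intro N M _ _ _ _ _ _ h
    by_cases hs : HasSocle R M
    · refine ⟨0, h.free_of_hasSocle hs, ?_⟩
      obtain ⟨d, hd⟩ := WithBot.ne_bot_iff_exists.1 (Module.supportDim_ne_bot_of_nontrivial R M)
      rw [← hd]
      exact_mod_cast bot_le
    · obtain ⟨x, hx, hreg⟩ := exists_isSMulRegular_of_not_hasSocle hs
      obtain ⟨k, f, hf, hi, h⟩ := h
      have := nontrivial_quotSMulTop (M := M) hx
      obtain ⟨s, hs, hle⟩ := ih (h.quotSMulTop hreg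
        (isSMulRegular_of_injective hi (isSMulRegular_tensor_of_flat hreg)))
      refine ⟨s + 1, ⟨k, f, hf, Module.Flat.lTensor_preserves_injective_linearMap _
        (Submodule.subtype_injective _), hs⟩, ?_⟩
      rw [← Module.supportDim_quotSMulTop_succ_eq_supportDim hreg hx]
      push_cast
      gcongr

theorem HasSocle.of_tensor_free {X N : Type u} [AddCommGroup X] [Module R X] [AddCommGroup N]
    [Module R N] [Module.Free R N] (h : HasSocle R (X ⊗[R] N)) : HasSocle R X := by
  let b := Module.Free.chooseBasis R N
  classical
  let e : X ⊗[R] N ≃ₗ[R] (Module.Free.ChooseBasisIndex R N →₀ X) :=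
    (b.repr.lTensor X) ≪≫ₗ TensorProduct.finsuppScalarRight R R X _
  obtain ⟨u, hu, hm⟩ := h.of_linearEquiv e
  obtain ⟨i, hi⟩ := Finsupp.ne_iff.1 hu
  exact ⟨u i, by simpa using hi, fun y hy => by
    simpa using DFunLike.congr_fun (hm y hy) i⟩

theorem TensorExactResolution.le_of_hasSocle {n : ℕ} :
    ∀ {N X : Type u} [AddCommGroup N] [Module R N] [AddCommGroup X] [Module R X] {h : ℕ},
      TensorExactResolution R n N X → HasSocle R (X ⊗[R] N) → HasRegularLength R h X → h ≤ n := by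
  induction n with
  | zero =>
    intro N X _ _ _ _ h hN hs hr
    cases h with
    | zero => rfl
    | succ h =>
      have : Module.Free R N := hN
      obtain ⟨u, hu, hm⟩ := hs.of_tensor_free
      obtain ⟨x, hx, hreg, -⟩ := hr
      exact absurd (hreg (by simp [hm x hx])) hu
  | succ n ih =>
    intro N X _ _ _ _ h hN hs hr
    cases h with
    | zero => exact Nat.zero_le _
    | succ h =>
      obtain ⟨u, hu, hm⟩ := hs
      obtain ⟨x, hx, hreg, hr⟩ := hr
      obtain ⟨k, f, hf, hi, hZ⟩ := hN
      have hF : IsSMulRegular (X ⊗[R] (Fin k → R)) x := isSMulRegular_tensor_of_flat hreg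
      have hex := lTensor_exact X f.exact_subtype_ker_map hf
      set ι := (LinearMap.ker f).subtype.lTensor X
      obtain ⟨v, rfl⟩ := LinearMap.lTensor_surjective X hf u
      have lift : ∀ y ∈ maximalIdeal R, ∃ w, ι w = y • v := fun y hy =>
        (hex _).1 (by rw [map_smul, hm y hy])
      obtain ⟨w, hw⟩ := lift x hx
      refine Nat.succ_le_succ (ih (hZ.quotSMulTop hreg (isSMulRegular_of_injective hi hF)) ?_ hr)
      refine HasSocle.of_linearEquiv
        (QuotSMulTop.quotSMulTopTensorEquivQuotSMulTop x (LinearMap.ker f) X).symm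
        ⟨Submodule.Quotient.mk w, ?_, ?_⟩
      · rw [Ne, Submodule.Quotient.mk_eq_zero, Submodule.mem_smul_pointwise_iff_exists]
        rintro ⟨w', -, rfl⟩
        apply hu
        rw [map_smul] at hw
        rw [← hF hw]
        exact hex.apply_apply_eq_zero w'
      · intro y hy
        obtain ⟨w'', hw''⟩ := lift y hy
        rw [← Submodule.Quotient.mk_smul, Submodule.Quotient.mk_eq_zero,
          Submodule.mem_smul_pointwise_iff_exists]
        refine ⟨w'', trivial, hi ?_⟩
        rw [map_smul, map_smul, hw, hw'', smul_comm]

end RegularElements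

section RegularBound

variable {R : Type u} [CommRing R] [IsNoetherianRing R] [IsLocalRing R]

open IsLocalRing RingTheory.Sequence

theorem SyzygyTensorExact.tensorExactResolution_of_isWeaklyRegular (rs : List R) :
    ∀ {X N : Type u} [AddCommGroup X] [Module R X] [AddCommGroup N] [Module R N]
      [Module.Finite R N], IsWeaklyRegular X rs →
      Nonempty ((X ⧸ Ideal.ofList rs • (⊤ : Submodule R X)) ≃ₗ[R] ResidueField R) →
      SyzygyTensorExact R (rs.length + 1) N X → TensorExactResolution R rs.length N R := by
  induction rs with
  | nil =>
    rintro X N _ _ _ _ _ - ⟨e⟩ h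
    obtain ⟨k, f, hf⟩ := Module.Finite.exists_fin' R N
    obtain ⟨hi, -⟩ := h k f hf
    let e' : X ≃ₗ[R] ResidueField R :=
      (Submodule.quotEquivOfEqBot _ (by simp)).symm ≪≫ₗ e
    refine Module.free_of_lTensor_residueField_injective (LinearMap.ker f).subtype f hf
      f.exact_subtype_ker_map ?_
    have h2 : (e'.rTensor (Fin k → R)).toLinearMap ∘ₗ (LinearMap.ker f).subtype.lTensor X =
        (LinearMap.ker f).subtype.lTensor (ResidueField R) ∘ₗ (e'.rTensor _).toLinearMap := by
      apply TensorProduct.ext'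
      intro a b; simp
    have h3 : Function.Injective ((LinearMap.ker f).subtype.lTensor (ResidueField R) ∘ₗ
        (e'.rTensor _).toLinearMap) := by
      rw [← h2]
      exact (e'.rTensor (Fin k → R)).injective.comp hi
    rw [LinearMap.coe_comp] at h3
    exact (Function.Injective.of_comp_iff' _ (e'.rTensor (LinearMap.ker f)).bijective).1 h3
  | cons x rs ih =>
    rintro X N _ _ _ _ _ hreg ⟨e⟩ h
    rw [isWeaklyRegular_cons_iff] at hreg
    obtain ⟨k, f, hf⟩ := Module.Finite.exists_fin' R N
    obtain ⟨hi, h⟩ := h k f hf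
    refine ⟨k, f, hf, Module.Flat.lTensor_preserves_injective_linearMap _
        (Submodule.subtype_injective _), ih hreg.2
        ⟨(Submodule.quotOfListConsSMulTopEquivQuotSMulTopInner X x rs).symm ≪≫ₗ e⟩ ?_⟩
    exact h.quotSMulTop hreg.1 (isSMulRegular_of_injective hi (isSMulRegular_tensor_of_flat hreg.1))

theorem tensorExactResolution_of_isWeaklyRegular {rs : List R} (hreg : IsWeaklyRegular R rs)
    (hm : Ideal.ofList rs = maximalIdeal R) (N : Type u) [AddCommGroup N] [Module R N]
    [Module.Finite R N] : TensorExactResolution R rs.length N R :=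
  (SyzygyTensorExact.self (rs.length + 1) N).tensorExactResolution_of_isWeaklyRegular rs hreg
    ⟨Submodule.quotEquivOfEq _ _ (by rw [← hm]; simp)⟩

theorem hasRegularLength_of_isWeaklyRegular {rs : List R} :
    ∀ {X : Type u} [AddCommGroup X] [Module R X], IsWeaklyRegular X rs →
      (∀ r ∈ rs, r ∈ maximalIdeal R) → HasRegularLength R rs.length X := by
  induction rs with
  | nil => intros; trivial
  | cons x rs ih =>
    intro X _ _ h hm
    rw [isWeaklyRegular_cons_iff] at h
    exact ⟨x, hm x (by simp), h.1, ih h.2 fun r hr => hm r (by simp [hr])⟩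

end RegularBound

section TorVanishing

variable {R : Type u} [CommRing R]

theorem isZero_tor_iff_exact {M N : ModuleCat.{u} R} (P : ProjectiveResolution N) (i : ℕ) :
    IsZero (((Tor (ModuleCat.{u} R) (i + 1)).obj M).obj N) ↔
      Function.Exact ((P.complex.d (i + 2) (i + 1)).hom.lTensor M)
        ((P.complex.d (i + 1) i).hom.lTensor M) := by
  have e := P.isoLeftDerivedObj ((MonoidalCategory.tensoringLeft (ModuleCat.{u} R)).obj M) (i + 1)
  refine (e.isZero_iff).trans ?_
  refine (HomologicalComplex.exactAt_iff_isZero_homology _ _).symm.trans ?_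
  rw [HomologicalComplex.exactAt_iff' _ (i + 2) (i + 1) i (by simp) (by simp),
    ShortComplex.ShortExact.moduleCat_exact_iff_function_exact]
  rfl

theorem exists_projectiveResolution_of_exact {N : ModuleCat.{u} R} (C : ChainComplex (ModuleCat.{u} R) ℕ)
    (hproj : ∀ n, Projective (C.X n)) (f : C.X 0 ⟶ N) (h0 : C.d 1 0 ≫ f = 0)
    (hf : Function.Surjective f.hom) (hex : Function.Exact (C.d 1 0).hom f.hom)
    (hC : ∀ n, Function.Exact (C.d (n + 2) (n + 1)).hom (C.d (n + 1) n).hom) :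
    ∃ Q : ProjectiveResolution N, Q.complex = C := by
  refine ⟨{ complex := C
            projective := hproj
            π := (ChainComplex.toSingle₀Equiv _ _).symm ⟨f, h0⟩
            quasiIso := ⟨fun n => ?_⟩ }, rfl⟩
  cases n with
  | zero =>
    rw [ChainComplex.quasiIsoAt₀_iff, ShortComplex.quasiIso_iff_of_zeros']
    · refine (ShortComplex.exact_and_epi_g_iff_of_iso
        (S₂ := ShortComplex.mk (C.d 1 0) f h0)
        (ShortComplex.isoMk (Iso.refl _) (Iso.refl _) (Iso.refl _)
          (by simp) (by simp))).2 ⟨?_, ?_⟩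
      · rw [ShortComplex.ShortExact.moduleCat_exact_iff_function_exact]
        exact hex
      · exact (ModuleCat.epi_iff_surjective _).2 hf
    · exact C.shape _ _ (by simp)
    all_goals rfl
  | succ n =>
    rw [quasiIsoAt_iff_exactAt']
    · rw [HomologicalComplex.exactAt_iff' _ (n + 2) (n + 1) n (by simp) (by simp),
        ShortComplex.ShortExact.moduleCat_exact_iff_function_exact]
      exact hC n
    · apply ChainComplex.exactAt_succ_single_obj

theorem exists_projectiveResolution_of_ker {F N : Type u} [AddCommGroup F] [Module R F]
    [AddCommGroup N] [Module R N] [Module.Projective R F] {f : F →ₗ[R] N}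
    (hf : Function.Surjective f) (P : ProjectiveResolution (ModuleCat.of R (LinearMap.ker f))) :
    ∃ (Q : ProjectiveResolution (ModuleCat.of R N)) (p : P.complex.X 0 →ₗ[R] LinearMap.ker f)
      (w : P.complex.d 1 0 ≫ ModuleCat.ofHom ((LinearMap.ker f).subtype ∘ₗ p) = 0),
      Function.Surjective p ∧ Function.Exact (P.complex.d 1 0).hom p ∧
      Q.complex = P.complex.augment (ModuleCat.ofHom ((LinearMap.ker f).subtype ∘ₗ p)) w := by
  let p : P.complex.X 0 ⟶ ModuleCat.of R (LinearMap.ker f) :=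
    (ChainComplex.toSingle₀Equiv P.complex _ P.π).1
  have hp : P.complex.d 1 0 ≫ p = 0 := (ChainComplex.toSingle₀Equiv P.complex _ P.π).2
  have hex : Function.Exact (P.complex.d 1 0).hom p.hom :=
    (ShortComplex.ShortExact.moduleCat_exact_iff_function_exact _).1 P.exact₀
  have hsurj : Function.Surjective p.hom := (ModuleCat.epi_iff_surjective _).1
    (inferInstance : Epi (P.π.f 0))
  have w : P.complex.d 1 0 ≫ ModuleCat.ofHom ((LinearMap.ker f).subtype ∘ₗ p.hom) = 0 := by
    have : ModuleCat.ofHom ((LinearMap.ker f).subtype ∘ₗ p.hom) =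
      p ≫ ModuleCat.ofHom (LinearMap.ker f).subtype := rfl
    rw [this, ← Category.assoc, hp, zero_comp]
  let C := P.complex.augment (ModuleCat.ofHom ((LinearMap.ker f).subtype ∘ₗ p.hom)) w
  have hproj : ∀ n, Projective (C.X n) := by
    intro n
    cases n with
    | zero => exact (IsProjective.iff_projective (R := R) F).1 inferInstance
    | succ n => exact P.projective n
  have h0 : C.d 1 0 ≫ ModuleCat.ofHom f = 0 := by
    ext x
    exact (p.hom x).2
  obtain ⟨Q, hQ⟩ := exists_projectiveResolution_of_exact C hproj (ModuleCat.ofHom f) h0 hf (by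
      intro y
      constructor
      · intro hy
        obtain ⟨z, hz⟩ := hsurj ⟨y, hy⟩
        exact ⟨z, congrArg Subtype.val hz⟩
      · rintro ⟨z, rfl⟩
        exact (p.hom z).2) (by
      intro n
      cases n with
      | zero =>
        intro y
        refine Iff.trans ?_ (hex y)
        exact ⟨fun h => Subtype.ext h, fun h => congrArg Subtype.val h⟩
      | succ n =>
        exact (ShortComplex.ShortExact.moduleCat_exact_iff_function_exact _).1 (P.exact_succ n))
  exact ⟨Q, p.hom, w, hsurj, hex, hQ⟩

theorem tor_ker_of_tor {M F N : Type u} [AddCommGroup M] [Module R M] [AddCommGroup F] [Module R F]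
    [AddCommGroup N] [Module R N] [Module.Projective R F] {f : F →ₗ[R] N}
    (hf : Function.Surjective f)
    (htor : ∀ i : ℕ, 0 < i →
      IsZero (((Tor (ModuleCat.{u} R) i).obj (ModuleCat.of R M)).obj (ModuleCat.of R N))) :
    Function.Injective ((LinearMap.ker f).subtype.lTensor M) ∧
    ∀ i : ℕ, 0 < i → IsZero (((Tor (ModuleCat.{u} R) i).obj (ModuleCat.of R M)).obj
      (ModuleCat.of R (LinearMap.ker f))) := by
  let P := ProjectiveResolution.of (ModuleCat.of R (LinearMap.ker f))
  obtain ⟨Q, p, w, hp, hex, hQ⟩ := exists_projectiveResolution_of_ker hf P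
  have key : ∀ i : ℕ, Function.Exact
      (((P.complex.augment (ModuleCat.ofHom ((LinearMap.ker f).subtype ∘ₗ p)) w).d
        (i + 2) (i + 1)).hom.lTensor M)
      (((P.complex.augment (ModuleCat.ofHom ((LinearMap.ker f).subtype ∘ₗ p)) w).d
        (i + 1) i).hom.lTensor M) := by
    intro i
    have := (isZero_tor_iff_exact Q i).1 (htor (i + 1) (by simp))
    rw [hQ] at this
    exact this
  constructor
  · have h0 : Function.Exact ((P.complex.d 1 0).hom.lTensor M)
      (((LinearMap.ker f).subtype ∘ₗ p).lTensor M) := key 0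
    have h1 := lTensor_exact M hex hp
    rw [injective_iff_map_eq_zero]
    intro z hz
    obtain ⟨y, rfl⟩ := LinearMap.lTensor_surjective M hp z
    rw [← LinearMap.comp_apply, ← LinearMap.lTensor_comp] at hz
    exact (h1 y).2 ((h0 y).1 hz)
  · intro i hi
    obtain ⟨i, rfl⟩ := Nat.exists_eq_succ_of_ne_zero hi.ne'
    exact (isZero_tor_iff_exact P i).2 (key (i + 1))

theorem syzygyTensorExact_of_tor {M : Type u} [AddCommGroup M] [Module R M] (n : ℕ) :
    ∀ {N : Type u} [AddCommGroup N] [Module R N], (∀ i : ℕ, 0 < i →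
      IsZero (((Tor (ModuleCat.{u} R) i).obj (ModuleCat.of R M)).obj (ModuleCat.of R N))) →
      SyzygyTensorExact R n N M := by
  induction n with
  | zero => intros; trivial
  | succ n ih =>
    intro N _ _ h k f hf
    obtain ⟨h1, h2⟩ := tor_ker_of_tor hf h
    exact ⟨h1, ih h2⟩

end TorVanishing

section BaseChange

variable {R : Type u} [CommRing R]

theorem TensorExactResolution.of_linearEquiv {X : Type u} [AddCommGroup X] [Module R X] {n : ℕ}
    {N N' : Type u} [AddCommGroup N] [Module R N] [AddCommGroup N'] [Module R N'] (e : N ≃ₗ[R] N')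
    (h : TensorExactResolution R n N X) : TensorExactResolution R n N' X := by
  cases n with
  | zero =>
    have : Module.Free R N := h
    exact Module.Free.of_equiv e
  | succ n =>
    obtain ⟨k, f, hf, hi, h⟩ := h
    refine ⟨k, e.toLinearMap ∘ₗ f, e.surjective.comp hf, ?_⟩
    rw [LinearEquiv.ker_comp]
    exact ⟨hi, h⟩

theorem TensorExactResolution.of_exact {X Z F N : Type u} [AddCommGroup X] [Module R X]
    [AddCommGroup Z] [Module R Z] [AddCommGroup F] [Module R F] [AddCommGroup N] [Module R N]
    {n k : ℕ} (e : (Fin k → R) ≃ₗ[R] F) {ι : Z →ₗ[R] F} {f : F →ₗ[R] N}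
    (hι : Function.Injective ι) (hex : Function.Exact ι f) (hf : Function.Surjective f)
    (hi : Function.Injective (ι.lTensor X)) (h : TensorExactResolution R n Z X) :
    TensorExactResolution R (n + 1) N X := by
  have hker : LinearMap.ker f = LinearMap.range ι := hex.linearMap_ker_eq
  let g : Z →ₗ[R] LinearMap.ker (f ∘ₗ e.toLinearMap) :=
    (e.symm.toLinearMap ∘ₗ ι).codRestrict _ (fun z => by
      simp [hex.apply_apply_eq_zero])
  have hg : Function.Bijective g := by
    constructor
    · intro a b hab
      have := congrArg Subtype.val hab
      exact hι (e.symm.injective this)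
    · rintro ⟨y, hy⟩
      obtain ⟨z, hz⟩ := (hex (e y)).1 hy
      exact ⟨z, Subtype.ext (by simp [g, hz])⟩
  let g' := LinearEquiv.ofBijective g hg
  refine ⟨k, f ∘ₗ e.toLinearMap, hf.comp e.surjective, ?_, h.of_linearEquiv g'⟩
  have h1 : (LinearMap.ker (f ∘ₗ e.toLinearMap)).subtype.lTensor X ∘ₗ (g'.lTensor X).toLinearMap =
      (e.symm.lTensor X).toLinearMap ∘ₗ ι.lTensor X := by
    apply TensorProduct.ext'
    intro a b
    simp [g', g]
  have h2 : Function.Injective ((LinearMap.ker (f ∘ₗ e.toLinearMap)).subtype.lTensor X ∘ₗ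
      (g'.lTensor X).toLinearMap) := by
    rw [h1]
    exact (e.symm.lTensor X).injective.comp hi
  rw [LinearMap.coe_comp] at h2
  exact (Function.Injective.of_comp_iff' _ (g'.lTensor X).bijective).1 h2

variable (S : Type u) [CommRing S] [Algebra R S] [Module.Flat R S]

theorem lTensor_baseChange_injective {X Z F : Type u} [AddCommGroup X] [Module R X]
    [AddCommGroup Z] [Module R Z] [AddCommGroup F] [Module R F] {ι : Z →ₗ[R] F}
    (hi : Function.Injective (ι.lTensor X)) :
    Function.Injective ((ι.baseChange S).lTensor (S ⊗[R] X)) := by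
  let eZ := TensorProduct.AlgebraTensorModule.distribBaseChange R S X Z
  let eF := TensorProduct.AlgebraTensorModule.distribBaseChange R S X F
  have h1 : (ι.baseChange S).lTensor (S ⊗[R] X) ∘ₗ eZ.toLinearMap =
      eF.toLinearMap ∘ₗ (ι.lTensor X).baseChange S := by
    ext x z
    simp [eZ, eF]
  have h2 : Function.Injective ((ι.lTensor X).baseChange S) :=
    Module.Flat.lTensor_preserves_injective_linearMap _ hi
  have h3 : Function.Injective ((ι.baseChange S).lTensor (S ⊗[R] X) ∘ₗ eZ.toLinearMap) := by
    rw [h1]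
    exact eF.injective.comp h2
  rw [LinearMap.coe_comp] at h3
  exact (Function.Injective.of_comp_iff' _ eZ.bijective).1 h3

theorem TensorExactResolution.baseChange {X : Type u} [AddCommGroup X] [Module R X] {n : ℕ} :
    ∀ {N : Type u} [AddCommGroup N] [Module R N], TensorExactResolution R n N X →
      TensorExactResolution S n (S ⊗[R] N) (S ⊗[R] X) := by
  induction n with
  | zero =>
    intro N _ _ h
    have : Module.Free R N := h
    exact (inferInstance : Module.Free S (S ⊗[R] N))
  | succ n ih =>
    rintro N _ _ ⟨k, f, hf, hi, h⟩
    refine TensorExactResolution.of_exact (F := S ⊗[R] (Fin k → R)) (k := k)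
      (TensorProduct.piScalarRight R S S (Fin k)).symm
      (ι := (LinearMap.ker f).subtype.baseChange S) (f := f.baseChange S) ?_ ?_ ?_
      (lTensor_baseChange_injective S hi) (ih h)
    · exact Module.Flat.lTensor_preserves_injective_linearMap _ (Submodule.subtype_injective _)
    · exact lTensor_exact S f.exact_subtype_ker_map hf
    · exact LinearMap.lTensor_surjective S hf

end BaseChange

theorem withBot_le_of_add_one_le {a b : WithBot ℕ∞} (h : a + 1 ≤ b + 1) : a ≤ b := by
  induction a with
  | bot => exact bot_le
  | coe a =>
    induction b with
    | bot =>
      rw [WithBot.bot_add] at h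
      exact absurd h (by rw [← WithBot.coe_one, ← WithBot.coe_add]; exact WithBot.not_coe_le_bot _)
    | coe b =>
      rw [← WithBot.coe_one, ← WithBot.coe_add, ← WithBot.coe_add, WithBot.coe_le_coe] at h
      exact WithBot.coe_le_coe.2 ((ENat.add_le_add_iff_right (by simp)).1 h)

section CohenMacaulay

variable {R : Type u} [CommRing R]

open scoped Pointwise
open IsLocalRing RingTheory.Sequence

/-- Reduction modulo two elements does not depend on their order. -/
noncomputable def quotSMulTopComm (M : Type u) [AddCommGroup M] [Module R M] (x y : R) :
    QuotSMulTop y (QuotSMulTop x M) ≃ₗ[R] QuotSMulTop x (QuotSMulTop y M) :=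
  have h (a b : R) : b • (⊤ : Submodule R (QuotSMulTop a M)) =
      Submodule.map (a • (⊤ : Submodule R M)).mkQ (b • ⊤) := by
    rw [Submodule.map_pointwise_smul, Submodule.map_top, Submodule.range_mkQ]
  Submodule.quotEquivOfEq _ _ (h x y) ≪≫ₗ Submodule.quotientQuotientEquivQuotientSup _ _ ≪≫ₗ
    Submodule.quotEquivOfEq _ _ (sup_comm _ _) ≪≫ₗ
    (Submodule.quotientQuotientEquivQuotientSup _ _).symm ≪≫ₗ
    Submodule.quotEquivOfEq _ _ (h y x).symm

theorem isSMulRegular_quotSMulTop_swap {M : Type u} [AddCommGroup M] [Module R M] {x z : R}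
    (hx : IsSMulRegular M x) (hz : IsSMulRegular (QuotSMulTop x M) z) :
    IsSMulRegular (QuotSMulTop z M) x := by
  rw [isSMulRegular_iff_right_eq_zero_of_smul]
  intro a ha
  obtain ⟨m, rfl⟩ := Submodule.Quotient.mk_surjective _ a
  rw [← Submodule.Quotient.mk_smul, Submodule.Quotient.mk_eq_zero,
    Submodule.mem_smul_pointwise_iff_exists] at ha
  obtain ⟨n, -, hn⟩ := ha
  have h0 : (Submodule.Quotient.mk n : QuotSMulTop x M) = 0 := by
    apply hz
    simp only [smul_zero]
    rw [← Submodule.Quotient.mk_smul, hn, Submodule.Quotient.mk_eq_zero]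
    exact Submodule.smul_mem_pointwise_smul _ _ _ trivial
  rw [Submodule.Quotient.mk_eq_zero, Submodule.mem_smul_pointwise_iff_exists] at h0
  obtain ⟨n', -, rfl⟩ := h0
  rw [smul_comm] at hn
  rw [← hx hn, Submodule.Quotient.mk_eq_zero]
  exact Submodule.smul_mem_pointwise_smul _ _ _ trivial

variable [IsLocalRing R]

theorem HasRegularLength.of_linearEquiv {n : ℕ} :
    ∀ {M N : Type u} [AddCommGroup M] [Module R M] [AddCommGroup N] [Module R N]
      (_ : M ≃ₗ[R] N), HasRegularLength R n M → HasRegularLength R n N := by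
  induction n with
  | zero => intros; trivial
  | succ n ih =>
    rintro M N _ _ _ _ e ⟨x, hx, hreg, h⟩
    exact ⟨x, hx, (e.isSMulRegular_congr x).1 hreg, ih (QuotSMulTop.congr x e) h⟩

theorem HasSocle.quotSMulTop_swap {M : Type u} [AddCommGroup M] [Module R M] {x y : R}
    (hx : IsSMulRegular M x) (hy : IsSMulRegular M y) (hym : y ∈ maximalIdeal R)
    (h : HasSocle R (QuotSMulTop x M)) : HasSocle R (QuotSMulTop y M) := by
  obtain ⟨a, ha, hm⟩ := h
  obtain ⟨u, rfl⟩ := Submodule.Quotient.mk_surjective _ a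
  have hm' : ∀ z ∈ maximalIdeal R, ∃ v : M, x • v = z • u := by
    intro z hz
    have := hm z hz
    rw [← Submodule.Quotient.mk_smul, Submodule.Quotient.mk_eq_zero,
      Submodule.mem_smul_pointwise_iff_exists] at this
    obtain ⟨v, -, hv⟩ := this
    exact ⟨v, hv⟩
  obtain ⟨v, hv⟩ := hm' y hym
  refine ⟨Submodule.Quotient.mk v, ?_, fun z hz => ?_⟩
  · rw [Ne, Submodule.Quotient.mk_eq_zero, Submodule.mem_smul_pointwise_iff_exists]
    rintro ⟨w, -, rfl⟩
    apply ha
    rw [smul_comm] at hv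
    rw [← hy hv, Submodule.Quotient.mk_eq_zero]
    exact Submodule.smul_mem_pointwise_smul _ _ _ trivial
  · obtain ⟨w, hw⟩ := hm' z hz
    rw [← Submodule.Quotient.mk_smul, Submodule.Quotient.mk_eq_zero,
      Submodule.mem_smul_pointwise_iff_exists]
    refine ⟨w, trivial, hx ?_⟩
    simp only
    rw [smul_comm x y, hw, smul_comm x z, hv, smul_comm]

theorem HasSocle.not_isSMulRegular {M : Type u} [AddCommGroup M] [Module R M] (h : HasSocle R M)
    {x : R} (hx : x ∈ maximalIdeal R) : ¬ IsSMulRegular M x := by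
  obtain ⟨u, hu, hm⟩ := h
  intro hreg
  exact hu (hreg (by simp [hm x hx]))

variable [IsNoetherianRing R]

theorem HasRegularLength.quotSMulTop {n : ℕ} :
    ∀ {M : Type u} [AddCommGroup M] [Module R M] [Module.Finite R M] {y : R},
      HasRegularLength R (n + 1) M → y ∈ maximalIdeal R → IsSMulRegular M y →
      HasRegularLength R n (QuotSMulTop y M) := by
  induction n with
  | zero => intros; trivial
  | succ n ih =>
    rintro M _ _ _ y ⟨x, hxm, hx, h⟩ hym hy
    have hsx : ¬ HasSocle R (QuotSMulTop x M) := by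
      obtain ⟨x', hx'm, hx', -⟩ := id h
      exact fun hs => hs.not_isSMulRegular hx'm hx'
    have hsy : ¬ HasSocle R (QuotSMulTop y M) := fun hs => hsx (hs.quotSMulTop_swap hy hx hxm)
    obtain ⟨z, hzm, hz⟩ := exists_isSMulRegular_of_not_hasSocle
      (M := M × QuotSMulTop x M × QuotSMulTop y M) (by
        rintro ⟨⟨a, b, c⟩, hu, hm⟩
        replace hm : ∀ y ∈ maximalIdeal R, y • a = 0 ∧ y • b = 0 ∧ y • c = 0 := fun y hy => by
          simpa only [Prod.smul_mk, Prod.mk_eq_zero] using hm y hy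
        apply hu
        simp only [Prod.mk_eq_zero]
        refine ⟨hx (by simp [(hm x hxm).1]), ?_, ?_⟩
        · by_contra hb
          exact hsx ⟨b, hb, fun y hy => (hm y hy).2.1⟩
        · by_contra hc
          exact hsy ⟨c, hc, fun y hy => (hm y hy).2.2⟩)
    have hz1 : IsSMulRegular M z := isSMulRegular_of_injective
      (f := LinearMap.inl R M (QuotSMulTop x M × QuotSMulTop y M)) LinearMap.inl_injective hz
    have hz' : IsSMulRegular (QuotSMulTop x M × QuotSMulTop y M) z := isSMulRegular_of_injective
      (f := LinearMap.inr R M (QuotSMulTop x M × QuotSMulTop y M)) LinearMap.inr_injective hz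
    have hz2 : IsSMulRegular (QuotSMulTop x M) z := isSMulRegular_of_injective
      (f := LinearMap.inl R (QuotSMulTop x M) (QuotSMulTop y M)) LinearMap.inl_injective hz'
    have hz3 : IsSMulRegular (QuotSMulTop y M) z := isSMulRegular_of_injective
      (f := LinearMap.inr R (QuotSMulTop x M) (QuotSMulTop y M)) LinearMap.inr_injective hz'
    have h1 : HasRegularLength R (n + 1) (QuotSMulTop z M) :=
      ⟨x, hxm, isSMulRegular_quotSMulTop_swap hx hz2,
        (ih h hzm hz2).of_linearEquiv (quotSMulTopComm M x z)⟩
    have h2 := ih h1 hym (isSMulRegular_quotSMulTop_swap hy hz3)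
    exact ⟨z, hzm, hz3, h2.of_linearEquiv (quotSMulTopComm M z y)⟩

theorem HasRegularLength.le_ringKrullDim_quotient {n : ℕ} :
    ∀ {M : Type u} [AddCommGroup M] [Module R M] [Module.Finite R M] {p : Ideal R},
      HasRegularLength R n M → p ∈ associatedPrimes R M →
      (n : WithBot ℕ∞) ≤ ringKrullDim (R ⧸ p) := by
  induction n with
  | zero =>
    intro M _ _ _ p _ hp
    have := Ideal.Quotient.nontrivial_iff.2 hp.1.ne_top
    exact_mod_cast ringKrullDim_nonneg_of_nontrivial
  | succ n ih =>
    rintro M _ _ _ p ⟨x, hxm, hx, h⟩ hp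
    obtain ⟨hpp, φ, hφ⟩ := (isAssociatedPrime_iff_exists_injective_linearMap _ _).1 hp
    let U : Submodule R M :=
      { carrier := {u | ∀ y ∈ p, y • u = 0}
        add_mem' := fun {a b} ha hb y hy => by rw [smul_add, ha y hy, hb y hy, add_zero]
        zero_mem' := fun y _ => smul_zero y
        smul_mem' := fun c a ha y hy => by rw [smul_comm, ha y hy, smul_zero] }
    have hφ1 : φ 1 ≠ 0 := by
      intro h0
      have := Ideal.Quotient.nontrivial_iff.2 hpp.ne_top
      exact one_ne_zero (hφ (h0.trans (map_zero φ).symm))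
    have hφU : φ 1 ∈ U := fun y hy => by
      rw [← map_smul]
      have : y • (1 : R ⧸ p) = 0 := by
        rw [Algebra.smul_def, mul_one]
        exact Ideal.Quotient.eq_zero_iff_mem.2 hy
      rw [this, map_zero]
    have hxp : x ∉ p := fun hxp => hφ1 (hx (by simp [hφU x hxp]))
    obtain ⟨u, huU, hux⟩ : ∃ u ∈ U, u ∉ x • (⊤ : Submodule R M) := by
      by_contra! hc
      have hle : U ≤ Ideal.span {x} • U := by
        intro u hu
        obtain ⟨v, -, rfl⟩ := (Submodule.mem_smul_pointwise_iff_exists _ _ _).1 (hc u hu)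
        rw [Submodule.ideal_span_singleton_smul]
        refine Submodule.smul_mem_pointwise_smul _ _ _ fun y hy => hx ?_
        simp only
        rw [smul_comm, hu y hy, smul_zero]
      have := Submodule.eq_bot_of_le_smul_of_le_jacobson_bot (Ideal.span {x}) U
        (IsNoetherian.noetherian U) hle
        (by rw [IsLocalRing.jacobson_eq_maximalIdeal _ bot_ne_top]
            simpa [Ideal.span_le] using hxm)
      rw [this] at hφU
      exact hφ1 hφU
    obtain ⟨q, hq, hle⟩ := exists_le_isAssociatedPrime_of_isNoetherianRing R
      (Submodule.Quotient.mk u : QuotSMulTop x M)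
      (by rwa [Ne, Submodule.Quotient.mk_eq_zero])
    have hqn := ih h hq
    have hpq : p ≤ q := fun y hy => hle (by
      rw [Submodule.mem_colon_singleton, ← Submodule.Quotient.mk_smul, huU y hy]
      simp)
    have hxq : x ∈ q := hle (by
      rw [Submodule.mem_colon_singleton, ← Submodule.Quotient.mk_smul, Submodule.mem_bot,
        Submodule.Quotient.mk_eq_zero]
      exact Submodule.smul_mem_pointwise_smul _ _ _ trivial)
    have hx0 : Ideal.Quotient.mk p x ∈ nonZeroDivisors (R ⧸ p) :=
      mem_nonZeroDivisors_of_ne_zero (by rwa [Ne, Ideal.Quotient.eq_zero_iff_mem])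
    refine le_trans ?_ (ringKrullDim_succ_le_of_surjective (Ideal.Quotient.factor hpq)
      (Ideal.Quotient.factor_surjective hpq) hx0 (by simpa using Ideal.Quotient.eq_zero_iff_mem.2 hxq))
    push_cast
    gcongr

theorem ringKrullDim_quotient_le_supportDim {M : Type u} [AddCommGroup M] [Module R M]
    [Module.Finite R M] {P : PrimeSpectrum R} (hP : P ∈ Module.support R M) :
    ringKrullDim (R ⧸ P.asIdeal) ≤ Module.supportDim R M := by
  rw [Module.supportDim_eq_ringKrullDim_quotient_annihilator]
  exact ringKrullDim_le_of_surjective _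
    (Ideal.Quotient.factor_surjective (Module.mem_support_iff_of_finite.1 hP))

theorem HasRegularLength.exists_isWeaklyRegular {n : ℕ} :
    ∀ {M : Type u} [AddCommGroup M] [Module R M] [Module.Finite R M] {P : PrimeSpectrum R},
      HasRegularLength R n M → Module.supportDim R M ≤ n → P ∈ Module.support R M →
      ∃ rs : List R, (∀ r ∈ rs, r ∈ P.asIdeal) ∧ IsWeaklyRegular M rs ∧
        (rs.length : WithBot ℕ∞) + ringKrullDim (R ⧸ P.asIdeal) = n := by
  induction n with
  | zero =>
    intro M _ _ _ P _ hd hP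
    refine ⟨[], by simp, IsWeaklyRegular.nil R M, ?_⟩
    have h1 := (ringKrullDim_quotient_le_supportDim hP).trans hd
    have h2 : (0 : WithBot ℕ∞) ≤ ringKrullDim (R ⧸ P.asIdeal) := ringKrullDim_nonneg_of_nontrivial
    simpa using le_antisymm h1 (by simpa using h2)
  | succ n ih =>
    intro M _ _ _ P hr hd hP
    by_cases hex : ∃ x ∈ P.asIdeal, IsSMulRegular M x
    · obtain ⟨x, hxP, hx⟩ := hex
      have hxm : x ∈ maximalIdeal R := IsLocalRing.le_maximalIdeal P.2.ne_top hxP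
      have hd' := Module.supportDim_quotSMulTop_succ_eq_supportDim hx hxm
      obtain ⟨rs, h1, h2, h3⟩ := ih (hr.quotSMulTop hxm hx) (P := P) (by
        rw [← hd'] at hd
        push_cast at hd
        exact withBot_le_of_add_one_le hd) (by
        rw [Module.support_quotSMulTop]
        exact ⟨hP, by simpa using hxP⟩)
      refine ⟨x :: rs, by simpa using ⟨hxP, h1⟩, (isWeaklyRegular_cons_iff _ _ _).2 ⟨hx, h2⟩, ?_⟩
      push_cast
      rw [← h3, List.length_cons]
      push_cast
      ring
    · refine ⟨[], by simp, IsWeaklyRegular.nil R M, ?_⟩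
      have hu : ∃ u : M, (∀ y ∈ P.asIdeal, y • u = 0) ∧ u ≠ 0 := by
        by_contra! hc
        exact hex (exists_isSMulRegular_of_forall_eq_zero hc)
      obtain ⟨u, hu, hu0⟩ := hu
      obtain ⟨q, hq, hle⟩ := exists_le_isAssociatedPrime_of_isNoetherianRing R u hu0
      have hPq : P.asIdeal ≤ q := fun y hy => hle (by
        rw [Submodule.mem_colon_singleton, hu y hy]; simp)
      have h1 := (ringKrullDim_quotient_le_supportDim hP).trans hd
      have h2 := hr.le_ringKrullDim_quotient hq
      have h3 := ringKrullDim_le_of_surjective _ (Ideal.Quotient.factor_surjective hPq)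
      simpa using le_antisymm h1 (h2.trans h3)

end CohenMacaulay

section HeightFormula

open IsLocalRing RingTheory.Sequence

theorem exists_natCast_eq_of_le {a : WithBot ℕ∞} {d : ℕ} (h0 : 0 ≤ a) (h : a ≤ d) :
    ∃ n : ℕ, a = n := by
  induction a with
  | bot => simp at h0
  | coe a =>
    induction a with
    | top => exact absurd (WithBot.coe_le_coe.1 h) (by simp)
    | coe a => exact ⟨a, rfl⟩

theorem ringKrullDim_quotient_eq_coheight {R : Type*} [CommRing R] (P : PrimeSpectrum R) :
    ringKrullDim (R ⧸ P.asIdeal) = (Order.coheight P : WithBot ℕ∞) := by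
  rw [ringKrullDim_quotient, Order.coheight_eq_krullDim_Ici]
  congr 1

theorem height_add_coheight_le_krullDim {α : Type*} [Preorder α] (a : α) :
    ((Order.height a : WithBot ℕ∞) + (Order.coheight a : WithBot ℕ∞)) ≤ Order.krullDim α := by
  have : Nonempty α := ⟨a⟩
  rw [Order.krullDim_eq_iSup_height_add_coheight_of_nonempty, ← WithBot.coe_add,
    WithBot.coe_le_coe]
  exact le_iSup (fun a : α => Order.height a + Order.coheight a) a

theorem Ideal.height_add_ringKrullDim_quotient_le {R : Type*} [CommRing R] (P : Ideal R)
    [hP : P.IsPrime] : (P.height : WithBot ℕ∞) + ringKrullDim (R ⧸ P) ≤ ringKrullDim R := by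
  have := height_add_coheight_le_krullDim (⟨P, hP⟩ : PrimeSpectrum R)
  rwa [← ringKrullDim_quotient_eq_coheight, ← PrimeSpectrum.height_eq_orderHeight] at this

theorem Ideal.length_le_height_of_isWeaklyRegular {R : Type*} [CommRing R] [IsNoetherianRing R]
    {P : Ideal R} [P.IsPrime] {rs : List R} (h : IsWeaklyRegular R rs) (hrs : ∀ r ∈ rs, r ∈ P) :
    (rs.length : WithBot ℕ∞) ≤ (P.height : WithBot ℕ∞) := by
  have hr := h.isRegular_of_isLocalization_of_mem (Localization.AtPrime P) P hrs
  have h1 := ringKrullDim_add_length_eq_ringKrullDim_of_isRegular _ hr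
  rw [← IsLocalization.AtPrime.ringKrullDim_eq_height P (Localization.AtPrime P), ← h1]
  have : Nontrivial (Localization.AtPrime P ⧸
      Ideal.ofList (rs.map (algebraMap R (Localization.AtPrime P)))) := by
    rw [Ideal.Quotient.nontrivial_iff]
    intro h
    apply hr.2
    rw [h]
    simp
  simpa using add_le_add_left (ringKrullDim_nonneg_of_nontrivial
    (R := Localization.AtPrime P ⧸ Ideal.ofList (rs.map (algebraMap R (Localization.AtPrime P)))))
    (rs.length : WithBot ℕ∞)

variable {R : Type u} [CommRing R] [IsLocalRing R] [IsNoetherianRing R]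

theorem HasRegularLength.exists_isWeaklyRegular_height {d : ℕ} (hR : HasRegularLength R d R)
    (hd : ringKrullDim R ≤ d) (P : Ideal R) [hP : P.IsPrime] :
    ∃ rs : List R, (∀ r ∈ rs, r ∈ P) ∧ IsWeaklyRegular R rs ∧
      (rs.length : WithBot ℕ∞) = (P.height : WithBot ℕ∞) ∧
      (P.height : WithBot ℕ∞) + ringKrullDim (R ⧸ P) = d := by
  obtain ⟨rs, h1, h2, h3⟩ := hR.exists_isWeaklyRegular (P := ⟨P, hP⟩)
    (by rwa [Module.supportDim_self_eq_ringKrullDim])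
    (by rw [Module.mem_support_iff_of_finite]; simp [(Module.annihilator_eq_bot (R := R) (M := R)).2 inferInstance])
  have h4 := Ideal.length_le_height_of_isWeaklyRegular h2 h1
  have h5 : (P.height : WithBot ℕ∞) + ringKrullDim (R ⧸ P) = d := by
    refine le_antisymm ((Ideal.height_add_ringKrullDim_quotient_le P).trans hd) ?_
    rw [← h3]
    gcongr
  refine ⟨rs, h1, h2, ?_, h5⟩
  rw [← h5] at h3
  simp only at h3
  obtain ⟨n, hn⟩ : ∃ n : ℕ, ringKrullDim (R ⧸ P) = n :=
    exists_natCast_eq_of_le ringKrullDim_nonneg_of_nontrivial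
      ((ringKrullDim_quotient_le P).trans hd)
  rw [hn] at h3
  have h6 : P.height ≠ ⊤ := Ideal.height_ne_top hP.ne_top
  lift P.height to ℕ using h6 with k
  norm_cast at h3 ⊢
  omega

end HeightFormula

section RegularLocal

open IsLocalRing RingTheory.Sequence

/-- The maximal ideal is generated by `d` elements, where `d` is at most the dimension. -/
def IsRegularLocalOfDim (R : Type u) [CommRing R] [IsLocalRing R] (d : ℕ) : Prop :=
  (∃ f : Fin d → R, Ideal.span (Set.range f) = maximalIdeal R) ∧ (d : WithBot ℕ∞) ≤ ringKrullDim R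

variable {R : Type u} [CommRing R] [IsLocalRing R]

theorem maximalIdeal_quotient_eq_map (I : Ideal R) [IsLocalRing (R ⧸ I)] :
    maximalIdeal (R ⧸ I) = (maximalIdeal R).map (Ideal.Quotient.mk I) := by
  ext y
  obtain ⟨y, rfl⟩ := Ideal.Quotient.mk_surjective y
  rw [Ideal.mem_map_iff_of_surjective _ Ideal.Quotient.mk_surjective]
  have hI : I ≤ maximalIdeal R := le_maximalIdeal (Ideal.Quotient.nontrivial_iff.1 inferInstance)
  have hloc : IsLocalHom (Ideal.Quotient.mk I) :=
    .of_surjective _ Ideal.Quotient.mk_surjective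
  refine ⟨fun h => ⟨y, ?_, rfl⟩, ?_⟩
  · rw [mem_maximalIdeal] at h ⊢
    exact fun hu => h (hu.map _)
  · rintro ⟨z, hz, hzy⟩
    rw [← hzy, mem_maximalIdeal] at *
    exact fun hu => hz (isUnit_of_map_unit (Ideal.Quotient.mk I) _ hu)

theorem IsRegularLocalOfDim.quotient [IsNoetherianRing R] {d : ℕ} (h : IsRegularLocalOfDim R (d + 1)) {x : R}
    (hx : x ∈ maximalIdeal R) (hx2 : x ∉ maximalIdeal R ^ 2) [IsLocalRing (R ⧸ Ideal.span {x})] :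
    IsRegularLocalOfDim (R ⧸ Ideal.span {x}) d := by
  obtain ⟨⟨f, hf⟩, hd⟩ := h
  refine ⟨?_, ?_⟩
  · have hx' := hx
    rw [← hf, Ideal.span, Submodule.mem_span_range_iff_exists_fun] at hx'
    obtain ⟨a, ha⟩ := hx'
    obtain ⟨i, hi⟩ : ∃ i, IsUnit (a i) := by
      by_contra! hc
      apply hx2
      rw [← ha, pow_two]
      refine Ideal.sum_mem _ fun i _ => Ideal.mul_mem_mul (hc i) ?_
      rw [← hf]
      exact Ideal.subset_span ⟨i, rfl⟩
    refine ⟨fun j => Ideal.Quotient.mk _ (f (i.succAbove j)), ?_⟩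
    rw [maximalIdeal_quotient_eq_map, ← hf, Ideal.map_span]
    apply le_antisymm
    · apply Ideal.span_mono
      rintro _ ⟨j, rfl⟩
      exact ⟨_, ⟨_, rfl⟩, rfl⟩
    · rw [Ideal.span_le]
      rintro _ ⟨_, ⟨j, rfl⟩, rfl⟩
      rcases eq_or_ne j i with rfl | hji
      · rw [Fin.sum_univ_succAbove _ j] at ha
        have h0 : Ideal.Quotient.mk (Ideal.span {x}) x = 0 :=
          Ideal.Quotient.eq_zero_iff_mem.2 (Ideal.mem_span_singleton_self x)
        replace ha := congrArg (Ideal.Quotient.mk (Ideal.span {x})) ha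
        rw [h0, map_add, smul_eq_mul, map_mul, map_sum] at ha
        have h1 := hi.map (Ideal.Quotient.mk (Ideal.span {x}))
        rw [SetLike.mem_coe, ← Ideal.unit_mul_mem_iff_mem _ h1, eq_neg_of_add_eq_zero_left ha,
          neg_mem_iff]
        refine Ideal.sum_mem _ fun k _ => ?_
        rw [smul_eq_mul, map_mul]
        exact Ideal.mul_mem_left _ _ (Ideal.subset_span ⟨k, rfl⟩)
      · obtain ⟨k, rfl⟩ := Fin.exists_succAbove_eq hji
        exact Ideal.subset_span ⟨k, rfl⟩
  · have h1 := ringKrullDim_le_ringKrullDim_quotient_add_card {x} (by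
      rw [ringJacobson_eq_maximalIdeal]; simpa using hx)
    rw [Finset.coe_singleton, Finset.card_singleton] at h1
    exact withBot_le_of_add_one_le (by simpa using hd.trans h1)

theorem IsRegularLocalOfDim.isDomain {d : ℕ} :
    ∀ {R : Type u} [CommRing R] [IsLocalRing R] [IsNoetherianRing R],
      IsRegularLocalOfDim R d → IsDomain R := by
  induction d with
  | zero =>
    intro R _ _ _ h
    obtain ⟨⟨f, hf⟩, -⟩ := h
    have : IsField R := by
      rw [isField_iff_maximalIdeal_eq, ← hf]
      simp
    exact this.isDomain
  | succ d ih =>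
    intro R _ _ _ h
    have hdim : ringKrullDim R ≠ 0 := by
      intro h0
      have := h.2
      rw [h0] at this
      norm_cast at this
    have hmin : ∀ q ∈ minimalPrimes R, ¬ maximalIdeal R ≤ q := by
      intro q hq hle
      have hqp : q.IsPrime := hq.1.1
      have : maximalIdeal R = q := le_antisymm hle (le_maximalIdeal hqp.ne_top)
      subst this
      rw [← Ideal.height_eq_zero_iff] at hq
      rw [← maximalIdeal_height_eq_ringKrullDim, hq] at hdim
      exact hdim rfl
    obtain ⟨x, hx, hx2, hxq⟩ : ∃ x ∈ maximalIdeal R, x ∉ maximalIdeal R ^ 2 ∧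
        ∀ q ∈ minimalPrimes R, x ∉ q := by
      by_contra! hc
      have hfin := minimalPrimes.finite_of_isNoetherianRing R
      classical
      have := (Ideal.subset_union_prime (s := insert (maximalIdeal R ^ 2) hfin.toFinset) (f := id)
        (maximalIdeal R ^ 2) (maximalIdeal R ^ 2) (by
          intro i hi hne _
          rw [Finset.mem_insert] at hi
          rcases hi with hi | hi
          · exact absurd hi hne
          · exact ((hfin.mem_toFinset).1 hi).1.1) (I := maximalIdeal R)).1 (by
          intro y hy
          simp only [Set.mem_iUnion]
          by_cases hy2 : y ∈ maximalIdeal R ^ 2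
          · exact ⟨_, by simp, hy2⟩
          · obtain ⟨q, hq, hyq⟩ := hc y hy hy2
            exact ⟨q, by simp [hq], hyq⟩)
      obtain ⟨q, hq, hle⟩ := this
      rw [Finset.mem_insert] at hq
      rcases hq with rfl | hq
      · have h0 : maximalIdeal R = ⊥ := Submodule.eq_bot_of_le_smul_of_le_jacobson_bot _ _
          (IsNoetherian.noetherian _) (by simpa [pow_two] using hle) (by
            rw [jacobson_eq_maximalIdeal _ bot_ne_top])
        obtain ⟨q, hq, -⟩ := Ideal.exists_minimalPrimes_le (bot_le : ⊥ ≤ maximalIdeal R)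
        exact hmin q hq (by rw [h0]; exact bot_le)
      · exact hmin q ((hfin.mem_toFinset).1 hq) hle
    have hnt : Nontrivial (R ⧸ Ideal.span {x}) := Ideal.Quotient.nontrivial_iff.2 (fun htop =>
      (maximalIdeal.isMaximal R).ne_top (top_le_iff.1 (htop ▸ (by simpa using hx))))
    have hloc : IsLocalRing (R ⧸ Ideal.span {x}) :=
      .of_surjective' _ Ideal.Quotient.mk_surjective
    have hdom := ih (h.quotient hx hx2)
    have hprime := (Ideal.Quotient.isDomain_iff_prime _).1 hdom
    obtain ⟨q, hq, hqx⟩ := Ideal.exists_minimalPrimes_le (bot_le : ⊥ ≤ Ideal.span {x})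
    have hqp : q.IsPrime := hq.1.1
    have hq0 : q = ⊥ := by
      refine Submodule.eq_bot_of_le_smul_of_le_jacobson_bot (maximalIdeal R) _
        (IsNoetherian.noetherian _) (fun y hy => ?_) (by
            rw [jacobson_eq_maximalIdeal _ bot_ne_top])
      obtain ⟨a, rfl⟩ := Ideal.mem_span_singleton'.1 (hqx hy)
      rw [mul_comm]
      exact Submodule.smul_mem_smul hx ((hqp.mem_or_mem hy).resolve_right (hxq q hq))
    rw [hq0] at hqp
    exact IsDomain.of_bot_isPrime R

theorem ringKrullDim_le_of_span_range_eq [IsNoetherianRing R] {d : ℕ} {f : Fin d → R}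
    (hf : Ideal.span (Set.range f) = maximalIdeal R) : ringKrullDim R ≤ d := by
  have h1 := ringKrullDim_le_ringKrullDim_quotient_add_encard (Set.range f) (by
    rw [ringJacobson_eq_maximalIdeal, ← hf]; exact Ideal.subset_span)
  rw [hf] at h1
  have h2 : ringKrullDim (R ⧸ maximalIdeal R) = 0 := by
    let : Field (R ⧸ maximalIdeal R) := Ideal.Quotient.field _
    exact ringKrullDim_eq_zero_of_field _
  rw [h2, zero_add] at h1
  refine h1.trans ?_
  have h3 : (Set.range f).encard ≤ d := by
    rw [← Set.image_univ]
    exact (Set.encard_image_le _ _).trans (by simp)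
  exact_mod_cast h3

theorem isWeaklyRegular_ofFn_of_span_range_eq {d : ℕ} :
    ∀ {R : Type u} [CommRing R] [IsLocalRing R] [IsNoetherianRing R] {f : Fin d → R},
      Ideal.span (Set.range f) = maximalIdeal R → (d : WithBot ℕ∞) ≤ ringKrullDim R →
      IsWeaklyRegular R (List.ofFn f) := by
  induction d with
  | zero => intros; simp
  | succ d ih =>
    intro R _ _ _ f hf hd
    have hdom : IsDomain R := IsRegularLocalOfDim.isDomain ⟨⟨f, hf⟩, hd⟩
    have hx : f 0 ∈ maximalIdeal R := by rw [← hf]; exact Ideal.subset_span ⟨0, rfl⟩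
    have hx0 : f 0 ≠ 0 := by
      intro h0
      have h1 : Ideal.span (Set.range (fun i : Fin d => f i.succ)) = maximalIdeal R := by
        rw [← hf, ← Set.insert_sdiff_self_of_mem (a := (0 : R)) (s := Set.range f) ⟨0, h0⟩]
        apply le_antisymm
        · rw [Ideal.span_le]
          rintro _ ⟨i, rfl⟩
          apply Ideal.subset_span
          simp only [Set.insert_sdiff_singleton]
          exact Or.inr ⟨_, rfl⟩
        · rw [Ideal.span_le]
          rintro y (rfl | ⟨⟨i, rfl⟩, hy⟩)
          · exact zero_mem _
          · refine Fin.cases (fun hy => absurd h0 hy) (fun i _ => Ideal.subset_span ⟨i, rfl⟩) i hy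
      have := hd.trans (ringKrullDim_le_of_span_range_eq h1)
      norm_cast at this
      omega
    have hreg : IsSMulRegular R (f 0) := by
      intro a b h
      exact mul_left_cancel₀ hx0 h
    have hloc : IsLocalRing (R ⧸ Ideal.span {f 0}) :=
      have : Nontrivial (R ⧸ Ideal.span {f 0}) := Ideal.Quotient.nontrivial_iff.2 (fun htop =>
        (maximalIdeal.isMaximal R).ne_top (top_le_iff.1 (htop ▸ (by simpa using hx))))
      .of_surjective' _ Ideal.Quotient.mk_surjective
    have hdim : (d : WithBot ℕ∞) ≤ ringKrullDim (R ⧸ Ideal.span {f 0}) := by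
      have h1 := ringKrullDim_quotient_span_singleton_succ_eq_ringKrullDim hreg hx
      rw [← h1] at hd
      exact withBot_le_of_add_one_le (by simpa using hd)
    have key := ih (R := R ⧸ Ideal.span {f 0})
      (f := fun i : Fin d => Ideal.Quotient.mk _ (f i.succ)) (by
        rw [maximalIdeal_quotient_eq_map, ← hf, Ideal.map_span]
        apply le_antisymm
        · rw [Ideal.span_le]
          rintro _ ⟨i, rfl⟩
          exact Ideal.subset_span ⟨_, ⟨_, rfl⟩, rfl⟩
        · rw [Ideal.span_le]
          rintro _ ⟨_, ⟨i, rfl⟩, rfl⟩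
          refine Fin.cases ?_ (fun i => Ideal.subset_span ⟨i, rfl⟩) i
          rw [Ideal.Quotient.eq_zero_iff_mem.2 (Ideal.mem_span_singleton_self _)]
          exact zero_mem _) hdim
    rw [List.ofFn_succ, isWeaklyRegular_cons_iff]
    refine ⟨hreg, ?_⟩
    have e : (R ⧸ Ideal.span {f 0}) ≃ₗ[R] QuotSMulTop (f 0) R :=
      Submodule.quotEquivOfEq _ _ (by simp [← Submodule.ideal_span_singleton_smul])
    rw [← e.isWeaklyRegular_congr, ← isWeaklyRegular_map_algebraMap_iff (R ⧸ Ideal.span {f 0})]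
    simpa [List.map_ofFn, Function.comp_def] using key

theorem ofList_ofFn {d : ℕ} (f : Fin d → R) : Ideal.ofList (List.ofFn f) = Ideal.span (Set.range f) := by
  rw [Ideal.ofList]
  congr 1
  ext y
  simp [List.mem_ofFn]

end RegularLocal

section TorIndependence

open IsLocalRing RingTheory.Sequence

variable {R : Type u} [CommRing R]

theorem Module.comap_mem_support_of_mem_support_baseChange {S M : Type u} [CommRing S] [Algebra R S]
    [AddCommGroup M] [Module R M] [Module.Finite R M] {Q : PrimeSpectrum S}
    (hQ : Q ∈ Module.support S (S ⊗[R] M)) :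
    PrimeSpectrum.comap (algebraMap R S) Q ∈ Module.support R M := by
  rw [Module.mem_support_iff_of_finite] at hQ ⊢
  intro r hr
  rw [Module.mem_annihilator] at hr
  refine hQ (Module.mem_annihilator.2 fun z => ?_)
  induction z with
  | zero => simp
  | add a b ha hb => rw [smul_add, ha, hb, add_zero]
  | tmul s m => rw [algebraMap_smul, ← TensorProduct.tmul_smul, hr, TensorProduct.tmul_zero]

theorem Module.nontrivial_localization_tensorProduct {M : Type u} [AddCommGroup M] [Module R M]
    {P : PrimeSpectrum R} (hP : P ∈ Module.support R M) :
    Nontrivial (Localization.AtPrime P.asIdeal ⊗[R] M) := by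
  rw [Module.mem_support_iff] at hP
  exact (LocalizedModule.equivTensorProduct P.asIdeal.primeCompl M).symm.toEquiv.nontrivial

theorem Module.supportDim_localization_add_ringKrullDim_quotient_le {M : Type u} [AddCommGroup M]
    [Module R M] [Module.Finite R M] {P : PrimeSpectrum R} (hP : P ∈ Module.support R M) :
    Module.supportDim (Localization.AtPrime P.asIdeal) (Localization.AtPrime P.asIdeal ⊗[R] M) +
      ringKrullDim (R ⧸ P.asIdeal) ≤ Module.supportDim R M := by
  let A := Localization.AtPrime P.asIdeal
  have hnt := Module.nontrivial_localization_tensorProduct hP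
  let t : Module.support R M := ⟨P, hP⟩
  let g : Module.support A (A ⊗[R] M) → Module.support R M := fun Q =>
    ⟨_, Module.comap_mem_support_of_mem_support_baseChange Q.2⟩
  have hg : StrictMono g := by
    intro Q Q' h
    have h1 : (PrimeSpectrum.comap (algebraMap R A) Q.1) < PrimeSpectrum.comap (algebraMap R A) Q'.1 :=
      lt_of_le_of_ne (Ideal.comap_mono (Subtype.coe_le_coe.2 h.le)) fun he =>
        h.ne (Subtype.ext (PrimeSpectrum.localization_comap_injective A P.asIdeal.primeCompl he))
    exact h1
  let m : Module.support A (A ⊗[R] M) := ⟨closedPoint A, closedPoint_mem_support A (A ⊗[R] M)⟩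
  have hgm : g m = t := by
    apply Subtype.ext
    apply PrimeSpectrum.ext
    exact Localization.AtPrime.under_maximalIdeal
  have h1 : Module.supportDim A (A ⊗[R] M) ≤ (Order.height t : WithBot ℕ∞) := by
    rw [← hgm]
    have hn : Nonempty (Module.support A (A ⊗[R] M)) := ⟨m⟩
    rw [Module.supportDim, Order.krullDim_eq_iSup_height_of_nonempty, WithBot.coe_le_coe]
    refine iSup_le fun Q => ?_
    exact (Order.height_mono (show Q ≤ m from le_maximalIdeal Q.1.2.ne_top)).trans
      (Order.height_le_height_apply_of_strictMono g hg m)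
  have h2 : ringKrullDim (R ⧸ P.asIdeal) ≤ (Order.coheight t : WithBot ℕ∞) := by
    rw [ringKrullDim_quotient, Order.coheight_eq_krullDim_Ici]
    refine Order.krullDim_le_of_strictMono (fun Q => ⟨⟨Q.1, Module.mem_support_mono Q.2 hP⟩, Q.2⟩) ?_
    intro Q Q' h
    exact h
  exact (add_le_add h1 h2).trans (height_add_coheight_le_krullDim t)

theorem hasSocle_localization_of_isAssociatedPrime {N : Type u} [AddCommGroup N] [Module R N]
    {q : Ideal R} [q.IsPrime] {v : N} (hv : ∀ a : R, a ∈ q ↔ a • v = 0) :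
    HasSocle (Localization.AtPrime q) (Localization.AtPrime q ⊗[R] N) := by
  let S := Localization.AtPrime q
  refine ⟨1 ⊗ₜ v, fun h0 => ?_, fun y hy => ?_⟩
  · have h1 := congrArg (LocalizedModule.equivTensorProduct q.primeCompl N).symm h0
    rw [← Localization.mk_one, LocalizedModule.equivTensorProduct_symm_apply_tmul, one_smul, map_zero] at h1
    rw [← LocalizedModule.mkLinearMap_apply, IsLocalizedModule.eq_zero_iff q.primeCompl] at h1
    obtain ⟨c, hc⟩ := h1
    exact c.2 ((hv c).2 hc)
  · rw [← Localization.AtPrime.map_eq_maximalIdeal] at hy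
    induction hy using Submodule.span_induction with
    | mem y h =>
      obtain ⟨a, ha, rfl⟩ := h
      rw [algebraMap_smul, ← TensorProduct.tmul_smul, (hv a).1 ha, TensorProduct.tmul_zero]
    | zero => simp
    | add a b _ _ ha hb => rw [add_smul, ha, hb, add_zero]
    | smul a b _ hb => rw [smul_assoc, hb, smul_zero]

theorem TensorExactResolution.height_le [IsNoetherianRing R] {N : Type u} [AddCommGroup N]
    [Module R N] {s : ℕ} (h : TensorExactResolution R s N R) {q : Ideal R} [q.IsPrime] {v : N}
    (hv : ∀ a : R, a ∈ q ↔ a • v = 0) {rs : List R} (hrs : IsWeaklyRegular R rs)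
    (hmem : ∀ r ∈ rs, r ∈ q) : rs.length ≤ s := by
  let S := Localization.AtPrime q
  have h1 := h.baseChange (S := S)
  have hflat : Module.Flat R S := IsLocalization.flat S q.primeCompl
  have h2 : HasRegularLength S rs.length S := by
    rw [← List.length_map (as := rs) (algebraMap R S)]
    refine hasRegularLength_of_isWeaklyRegular (hrs.of_flat (S := S)) ?_
    intro y hy
    obtain ⟨r, hr, rfl⟩ := List.mem_map.1 hy
    exact (IsLocalization.AtPrime.to_map_mem_maximal_iff S q r).2 (hmem r hr)
  have e : (S ⊗[R] R) ≃ₗ[S] S := TensorProduct.AlgebraTensorModule.rid R S S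
  refine h1.le_of_hasSocle ?_ (h2.of_linearEquiv e.symm)
  exact (hasSocle_localization_of_isAssociatedPrime hv).of_linearEquiv
    ((TensorProduct.lid S _).symm ≪≫ₗ TensorProduct.congr e.symm (LinearEquiv.refl S _))

variable [IsLocalRing R] [IsNoetherianRing R]

theorem ringKrullDim_add_ringKrullDim_quotient_le_of_tor_eq_zero {d : ℕ} {rs : List R}
    (hreg : IsWeaklyRegular R rs) (hm : Ideal.ofList rs = maximalIdeal R) (hlen : rs.length = d)
    (hd : ringKrullDim R = d) {M N : Type u} [AddCommGroup M] [Module R M] [AddCommGroup N]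
    [Module R N] [Module.Finite R M] [Module.Finite R N]
    (htor : ∀ i : ℕ, 0 < i →
      IsZero (((Tor (ModuleCat.{u} R) i).obj (ModuleCat.of R M)).obj (ModuleCat.of R N)))
    {P : PrimeSpectrum R} (hPM : P ∈ Module.support R M) (hPN : P ∈ Module.support R N) :
    ringKrullDim R + ringKrullDim (R ⧸ P.asIdeal) ≤
      Module.supportDim R M + Module.supportDim R N := by
  let A := Localization.AtPrime P.asIdeal
  have hflat : Module.Flat R A := IsLocalization.flat A P.asIdeal.primeCompl
  have h1 := ((tensorExactResolution_of_isWeaklyRegular hreg hm N).of_syzygyTensorExact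
    (syzygyTensorExact_of_tor rs.length htor)).baseChange (S := A)
  have hMn := Module.nontrivial_localization_tensorProduct hPM
  have hNn := Module.nontrivial_localization_tensorProduct hPN
  obtain ⟨s, hs, hsM⟩ := h1.exists_le_supportDim
  obtain ⟨v, hv⟩ := exists_ne (0 : A ⊗[R] N)
  obtain ⟨q, hq, -⟩ := exists_le_isAssociatedPrime_of_isNoetherianRing A v hv
  have hqp : q.IsPrime := hq.isPrime
  obtain ⟨φ, hφ⟩ := (isAssociatedPrime_iff_exists_injective_linearMap q _).1 hq |>.2
  have hw : ∀ a : A, a ∈ q ↔ a • φ (Ideal.Quotient.mk q 1) = 0 := by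
    intro a
    rw [← map_smul, map_eq_zero_iff φ hφ, ← Ideal.Quotient.eq_zero_iff_mem]
    simp [Algebra.smul_def]
  let P' : PrimeSpectrum R := PrimeSpectrum.comap (algebraMap R A) ⟨q, hqp⟩
  have hHR : HasRegularLength R d R := by
    rw [← hlen]
    exact hasRegularLength_of_isWeaklyRegular hreg fun r hr => by
      rw [← hm]; exact Ideal.subset_span hr
  obtain ⟨ts, ht1, ht2, ht3, ht4⟩ := hHR.exists_isWeaklyRegular_height hd.le P'.asIdeal
  have hle : ts.length ≤ s := by
    rw [← List.length_map (as := ts) (algebraMap R A)]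
    refine hs.height_le hw (ht2.of_flat (S := A)) ?_
    intro y hy
    obtain ⟨r, hr, rfl⟩ := List.mem_map.1 hy
    exact ht1 r hr
  have hP'N : P' ∈ Module.support R N := by
    apply Module.comap_mem_support_of_mem_support_baseChange
    rw [Module.mem_support_iff_of_finite]
    intro a ha
    exact (hw a).2 (Module.mem_annihilator.1 ha _)
  calc ringKrullDim R + ringKrullDim (R ⧸ P.asIdeal)
      = ts.length + ringKrullDim (R ⧸ P'.asIdeal) + ringKrullDim (R ⧸ P.asIdeal) := by
        rw [hd, ← ht4, ht3]
    _ ≤ Module.supportDim A (A ⊗[R] M) + Module.supportDim R N + ringKrullDim (R ⧸ P.asIdeal) := by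
        gcongr
        · exact le_trans (by exact_mod_cast hle) hsM
        · exact ringKrullDim_quotient_le_supportDim hP'N
    _ = (Module.supportDim A (A ⊗[R] M) + ringKrullDim (R ⧸ P.asIdeal)) +
        Module.supportDim R N := by ring
    _ ≤ _ := by
        gcongr
        exact Module.supportDim_localization_add_ringKrullDim_quotient_le hPM

theorem Module.exists_mem_support_supportDim_le (M : Type u) [AddCommGroup M]
    [Module R M] [Module.Finite R M] [Nontrivial M] : ∃ P ∈ Module.support R M,
      Module.supportDim R M ≤ ringKrullDim (R ⧸ P.asIdeal) := by
  have hn : Nonempty (Module.support R M) :=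
    Set.nonempty_coe_sort.2 (Module.nonempty_support_of_nontrivial)
  have hfin : FiniteDimensionalOrder (Module.support R M) := by
    rw [Order.finiteDimensionalOrder_iff_krullDim_ne_bot_and_top]
    refine ⟨Module.supportDim_ne_bot_of_nontrivial R M, ?_⟩
    have h1 : Module.supportDim R M ≤ ringKrullDim R := by
      rw [Module.supportDim_eq_ringKrullDim_quotient_annihilator]
      exact ringKrullDim_quotient_le _
    exact (h1.trans_lt (ringKrullDim_lt_top)).ne
  let p := LTSeries.longestOf (Module.support R M)
  refine ⟨p.head.1, p.head.2, ?_⟩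
  rw [ringKrullDim_quotient_eq_coheight, Module.supportDim,
    Order.krullDim_eq_length_of_finiteDimensionalOrder]
  have h1 : (p.length : ℕ∞) ≤ Order.coheight p.head := Order.length_le_coheight_head
  have h2 : Order.coheight p.head ≤ Order.coheight p.head.1 :=
    Order.coheight_le_coheight_apply_of_strictMono Subtype.val (fun a b h => h) p.head
  exact_mod_cast h1.trans h2

end TorIndependence

section PowerSeriesRegular

open IsLocalRing RingTheory.Sequence

namespace MvPowerSeries

theorem sub_truncTotal_mem_pow {σ W : Type*} [Finite σ] [CommRing W] (n : ℕ)
    (f : MvPowerSeries σ W) :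
    f - (f.truncTotal n : MvPolynomial σ W) ∈ Ideal.span (Set.range (X (R := W) (σ := σ))) ^ n := by
  set I := MvPolynomial.idealOfVars σ W
  have h1 : toAdicCompletionAlgEquiv σ W (f - (f.truncTotal n : MvPolynomial σ W)) ∈
      (I ^ n • ⊤ : Submodule (MvPolynomial σ W) (AdicCompletion I (MvPolynomial σ W))) := by
    rw [AdicCompletion.pow_smul_top_eq_ker_eval (MvPolynomial.idealOfVars_fg σ W)]
    rw [LinearMap.mem_ker, toAdicCompletionAlgEquiv_apply, map_sub, toAdicCompletion_coe]
    rw [map_sub, sub_eq_zero]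
    rfl
  have h2 := Submodule.mem_map_of_mem
    (f := (toAdicCompletionAlgEquiv σ W).symm.toLinearEquiv.toLinearMap) h1
  rw [Submodule.map_smul''] at h2
  simp only [AlgEquiv.toLinearEquiv_toLinearMap, AlgEquiv.toLinearMap_apply, AlgEquiv.symm_apply_apply] at h2
  have h3 : I.map (algebraMap (MvPolynomial σ W) (MvPowerSeries σ W)) =
      Ideal.span (Set.range (X (R := W) (σ := σ))) := by
    rw [show I = Ideal.span _ from rfl, Ideal.map_span, ← Set.range_comp]
    congr 1
    ext
    simp [MvPowerSeries.algebraMap_apply']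
  rw [← h3, ← Ideal.map_pow]
  have h4 := Submodule.smul_mono le_rfl (le_top) h2
  rw [Ideal.smul_top_eq_map] at h4
  exact h4

theorem sub_C_constantCoeff_mem {σ W : Type*} [Finite σ] [CommRing W] 
    (f : MvPowerSeries σ W) :
    f - C (constantCoeff f) ∈ Ideal.span (Set.range (X (R := W) (σ := σ)))  := by
  have := sub_truncTotal_mem_pow 1 f
  rw [pow_one] at this
  convert this using 2
  ext n
  classical
  by_cases hn : n = 0
  · subst hn; simp [coeff_truncTotal_eq_ite]
  · have : n.degree ≠ 0 := by simpa [Finsupp.degree_eq_zero_iff] using hn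
    simp [coeff_truncTotal_eq_ite, coeff_C, hn, this]

theorem mem_maximalIdeal_iff {σ W : Type*} [CommRing W] [IsLocalRing W]
    {f : MvPowerSeries σ W} :
    f ∈ maximalIdeal (MvPowerSeries σ W) ↔ constantCoeff f ∈ maximalIdeal W := by
  rw [mem_maximalIdeal, mem_maximalIdeal, mem_nonunits_iff, mem_nonunits_iff,
    isUnit_iff_constantCoeff]

theorem maximalIdeal_eq {σ W : Type*} [Finite σ] [CommRing W] [IsLocalRing W] :
    maximalIdeal (MvPowerSeries σ W) =
      (maximalIdeal W).map C ⊔ Ideal.span (Set.range (X (R := W) (σ := σ))) := by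
  apply le_antisymm
  · intro f hf
    rw [← sub_add_cancel f (C (constantCoeff f)), add_comm]
    exact Submodule.add_mem_sup (Ideal.mem_map_of_mem _ (mem_maximalIdeal_iff.1 hf))
      (sub_C_constantCoeff_mem f)
  · rw [sup_le_iff, Ideal.map_le_iff_le_comap, Ideal.span_le]
    refine ⟨fun w hw => ?_, ?_⟩
    · rw [Ideal.mem_comap, mem_maximalIdeal_iff, constantCoeff_C]
      exact hw
    · rintro _ ⟨s, rfl⟩
      rw [SetLike.mem_coe, mem_maximalIdeal_iff, constantCoeff_X]
      exact zero_mem _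

theorem ringKrullDim_add_le_ringKrullDim (W : Type*) [CommRing W] (r : ℕ) :
    ringKrullDim W + r ≤ ringKrullDim (MvPowerSeries (Fin r) W) := by
  induction r with
  | zero =>
    rw [ringKrullDim_eq_of_ringEquiv (isEmptyEquiv (σ := Fin 0) (R := W)).toRingEquiv]
    simp
  | succ r ih =>
    rw [ringKrullDim_eq_of_ringEquiv (finSuccEquiv (R := W) (n := r)).toRingEquiv]
    refine le_trans ?_ ringKrullDim_succ_le_ringKrullDim_powerseries
    push_cast
    rw [← add_assoc]
    gcongr

end MvPowerSeries

theorem IsRegularLocalOfDim.mvPowerSeries {W : Type u} [CommRing W] [IsLocalRing W] {e : ℕ}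
    (h : IsRegularLocalOfDim W e) (r : ℕ) :
    IsRegularLocalOfDim (MvPowerSeries (Fin r) W) (e + r) := by
  obtain ⟨⟨f, hf⟩, hd⟩ := h
  refine ⟨⟨Fin.append (fun i => MvPowerSeries.C (f i)) MvPowerSeries.X, ?_⟩, ?_⟩
  · rw [MvPowerSeries.maximalIdeal_eq, ← hf, Ideal.map_span, ← Set.range_comp, ← Ideal.span_union]
    congr 1
    ext y
    simp only [Set.mem_range, Set.mem_union, Function.comp_apply]
    constructor
    · rintro ⟨i, rfl⟩
      induction i using Fin.addCases with
      | left i => exact Or.inl ⟨i, by simp⟩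
      | right i => exact Or.inr ⟨i, by simp⟩
    · rintro (⟨i, rfl⟩ | ⟨i, rfl⟩)
      · exact ⟨Fin.castAdd r i, by simp⟩
      · exact ⟨Fin.natAdd e i, by simp⟩
  · refine le_trans ?_ (MvPowerSeries.ringKrullDim_add_le_ringKrullDim W r)
    push_cast
    gcongr

theorem IsRegularLocalOfDim.ringKrullDim_eq {W : Type u} [CommRing W] [IsLocalRing W]
    [IsNoetherianRing W] {e : ℕ} (h : IsRegularLocalOfDim W e) : ringKrullDim W = e := by
  obtain ⟨⟨f, hf⟩, hd⟩ := h
  exact le_antisymm (ringKrullDim_le_of_span_range_eq hf) hd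

theorem IsRegularLocalOfDim.height_add_ringKrullDim_quotient {W : Type u} [CommRing W]
    [IsLocalRing W] [IsNoetherianRing W] {e : ℕ} (h : IsRegularLocalOfDim W e) (P : Ideal W)
    [P.IsPrime] : (P.height : WithBot ℕ∞) + ringKrullDim (W ⧸ P) = e := by
  have hdim := h.ringKrullDim_eq
  obtain ⟨⟨f, hf⟩, hd⟩ := h
  have h1 := hasRegularLength_of_isWeaklyRegular (isWeaklyRegular_ofFn_of_span_range_eq hf hd)
    (fun r hr => by
      rw [← hf]
      exact Ideal.subset_span (by simpa [List.mem_ofFn] using hr))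
  rw [List.length_ofFn] at h1
  obtain ⟨_, _, _, _, h2⟩ := h1.exists_isWeaklyRegular_height hdim.le P
  exact h2

end PowerSeriesRegular

section FlatDimension

open IsLocalRing RingTheory.Sequence

theorem Ideal.height_map_mk_eq_zero_of_mem_minimalPrimes {S : Type*} [CommRing S] {I Q : Ideal S}
    (hQ : Q ∈ I.minimalPrimes) : (Q.map (Ideal.Quotient.mk I)).height = 0 := by
  have : Q.IsPrime := hQ.1.1
  have h1 : Q.map (Ideal.Quotient.mk I) ∈ minimalPrimes (S ⧸ I) := by
    have h2 := Ideal.minimalPrimes_map_of_surjective (f := Ideal.Quotient.mk I)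
      Ideal.Quotient.mk_surjective I
    simp only [Ideal.map_quotient_self, Ideal.mk_ker, sup_idem] at h2
    have h3 : Q.map (Ideal.Quotient.mk I) ∈ (⊥ : Ideal (S ⧸ I)).minimalPrimes :=
      h2 ▸ ⟨Q, hQ, rfl⟩
    simpa using h3
  have : (Q.map (Ideal.Quotient.mk I)).IsPrime :=
    Ideal.map_isPrime_of_surjective Ideal.Quotient.mk_surjective (by simpa using hQ.1.2)
  exact Ideal.height_eq_zero_iff.2 h1

theorem Ideal.exists_isPrime_height_le_add {T S : Type*} [CommRing T] [CommRing S]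
    [IsNoetherianRing T] [IsNoetherianRing S] (i j : T →+* S) (P Q : Ideal T)
    [P.IsPrime] [Q.IsPrime]
    (h : ∀ a ∉ P, ∀ c ∉ Q, i a * j c ∉ P.map i ⊔ Q.map j) :
    ∃ L : Ideal S, L.IsPrime ∧ P.map i ≤ L ∧ Q.map j ≤ L ∧ L.height ≤ P.height + Q.height := by
  let M : Submonoid S := P.primeCompl.map i ⊔ Q.primeCompl.map j
  have hdisj : Disjoint ((P.map i ⊔ Q.map j : Ideal S) : Set S) M := by
    rw [Set.disjoint_left]
    intro s hs hM
    obtain ⟨_, ⟨a, ha, rfl⟩, _, ⟨c, hc, rfl⟩, rfl⟩ := Submonoid.mem_sup.1 hM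
    exact h a ha c hc hs
  obtain ⟨L₀, hL₀, hle, hL₀M⟩ := Ideal.exists_le_prime_disjoint _ M hdisj
  obtain ⟨L, hL, hLL₀⟩ := Ideal.exists_minimalPrimes_le hle
  have hLp : L.IsPrime := hL.1.1
  have hPL : P.map i ≤ L := le_sup_left.trans hL.1.2
  have hQL : Q.map j ≤ L := le_sup_right.trans hL.1.2
  refine ⟨L, hLp, hPL, hQL, ?_⟩
  have hPc : P = L.comap i := by
    refine le_antisymm (Ideal.map_le_iff_le_comap.1 hPL) fun a ha => ?_
    by_contra haP
    exact Set.disjoint_left.1 hL₀M (hLL₀ ha) (Submonoid.mem_sup_left ⟨a, haP, rfl⟩)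
  have hQc : Q = L.comap j := by
    refine le_antisymm (Ideal.map_le_iff_le_comap.1 hQL) fun a ha => ?_
    by_contra haP
    exact Set.disjoint_left.1 hL₀M (hLL₀ ha) (Submonoid.mem_sup_right ⟨a, haP, rfl⟩)
  have h1 : L.height ≤ P.height + (L.map (Ideal.Quotient.mk (P.map i))).height := by
    let _ := i.toAlgebra
    have : L.LiesOver P := ⟨hPc⟩
    exact Ideal.height_le_height_add_of_liesOver P L
  refine h1.trans ?_
  gcongr
  set L' := L.map (Ideal.Quotient.mk (P.map i))
  have hcomap : L'.comap (Ideal.Quotient.mk (P.map i)) = L := by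
    rw [Ideal.comap_map_of_surjective' _ Ideal.Quotient.mk_surjective, Ideal.mk_ker, sup_eq_left]
    exact hPL
  have hL' : L'.IsPrime := Ideal.map_isPrime_of_surjective Ideal.Quotient.mk_surjective
    (by rw [Ideal.mk_ker]; exact hPL)
  have h2 : L' ∈ ((Q.map ((Ideal.Quotient.mk (P.map i)).comp j)) : Ideal _).minimalPrimes := by
    have h3 := Ideal.minimalPrimes_map_of_surjective (f := Ideal.Quotient.mk (P.map i))
      Ideal.Quotient.mk_surjective (Q.map j)
    rw [Ideal.mk_ker, Ideal.map_map, sup_comm] at h3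
    rw [h3]
    exact ⟨L, hL, rfl⟩
  have h4 : L'.height ≤ Q.height +
      (L'.map (Ideal.Quotient.mk (Q.map ((Ideal.Quotient.mk (P.map i)).comp j)))).height := by
    let _ := ((Ideal.Quotient.mk (P.map i)).comp j).toAlgebra
    have : L'.LiesOver Q := ⟨by
      rw [Ideal.under_def]
      change Q = L'.comap ((Ideal.Quotient.mk (P.map i)).comp j)
      rw [← Ideal.comap_comap, hcomap, ← hQc]⟩
    exact Ideal.height_le_height_add_of_liesOver Q L'
  rwa [Ideal.height_map_mk_eq_zero_of_mem_minimalPrimes h2, add_zero] at h4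

theorem maximalIdeal_comap_eq_of_eq_map {A B : Type*} [CommRing A] [CommRing B]
    [IsLocalRing A] [IsLocalRing B] {f : A →+* B} (h : maximalIdeal B = (maximalIdeal A).map f) :
    maximalIdeal A = (maximalIdeal B).comap f :=
  (maximalIdeal.isMaximal A).eq_of_le (Ideal.comap_ne_top _ (maximalIdeal.isMaximal B).ne_top)
    (Ideal.map_le_iff_le_comap.1 h.ge)

theorem ringKrullDim_le_of_maximalIdeal_eq_map {A B : Type*} [CommRing A] [CommRing B]
    [IsLocalRing A] [IsLocalRing B] [IsNoetherianRing A] [IsNoetherianRing B] (f : A →+* B)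
    (h : maximalIdeal B = (maximalIdeal A).map f) :
    ringKrullDim B ≤ ringKrullDim A := by
  let _ := f.toAlgebra
  have : (maximalIdeal B).LiesOver (maximalIdeal A) := ⟨maximalIdeal_comap_eq_of_eq_map h⟩
  have h2 := Ideal.height_le_height_add_of_liesOver (maximalIdeal A) (maximalIdeal B)
  change _ ≤ _ + ((maximalIdeal B).map (Ideal.Quotient.mk ((maximalIdeal A).map f))).height at h2
  rw [Ideal.height_map_mk_eq_zero_of_mem_minimalPrimes, add_zero] at h2
  · rw [← maximalIdeal_height_eq_ringKrullDim, ← maximalIdeal_height_eq_ringKrullDim]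
    exact_mod_cast h2
  · rw [← h, Ideal.minimalPrimes_eq_subsingleton_self]
    rfl

theorem ringKrullDim_eq_of_flat_of_maximalIdeal_eq_map {A B : Type*} [CommRing A] [CommRing B]
    [IsLocalRing A] [IsLocalRing B] [IsNoetherianRing A] [IsNoetherianRing B] [Algebra A B]
    [Module.Flat A B] (h : maximalIdeal B = (maximalIdeal A).map (algebraMap A B)) :
    ringKrullDim B = ringKrullDim A := by
  have : (maximalIdeal B).LiesOver (maximalIdeal A) := ⟨maximalIdeal_comap_eq_of_eq_map h⟩
  have h2 := Ideal.height_eq_height_add_of_liesOver_of_hasGoingDown (maximalIdeal A)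
    (maximalIdeal B)
  rw [Ideal.height_map_mk_eq_zero_of_mem_minimalPrimes, add_zero] at h2
  · rw [← maximalIdeal_height_eq_ringKrullDim, ← maximalIdeal_height_eq_ringKrullDim, h2]
  · rw [← h, Ideal.minimalPrimes_eq_subsingleton_self]
    rfl

namespace MvPowerSeries

theorem C_sub_map_C_mem {σ W : Type*} [Finite σ] [CommRing W] [IsNoetherianRing W] [IsLocalRing W]
    (f : MvPowerSeries σ W) :
    C f - map C f ∈ Ideal.span (Set.range fun s : σ =>
      (C (X s) - X s : MvPowerSeries σ (MvPowerSeries σ W))) := by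
  set K := Ideal.span (Set.range fun s : σ =>
      (C (X s) - X s : MvPowerSeries σ (MvPowerSeries σ W)))
  have hX (s : σ) : (X s : MvPowerSeries σ (MvPowerSeries σ W)) ∈ maximalIdeal _ := by
    rw [mem_maximalIdeal_iff, constantCoeff_X]; exact zero_mem _
  have hCX (s : σ) : (C (X s) : MvPowerSeries σ (MvPowerSeries σ W)) ∈ maximalIdeal _ := by
    rw [mem_maximalIdeal_iff, constantCoeff_C, mem_maximalIdeal_iff, constantCoeff_X]
    exact zero_mem _
  have hK : K ≤ maximalIdeal _ := by
    rw [Ideal.span_le]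
    rintro _ ⟨s, rfl⟩
    exact sub_mem (hCX s) (hX s)
  have : Nontrivial (MvPowerSeries σ (MvPowerSeries σ W) ⧸ K) :=
    Ideal.Quotient.nontrivial_iff.2 (ne_top_of_le_ne_top (maximalIdeal.isMaximal _).ne_top hK)
  have := IsLocalRing.of_surjective' (Ideal.Quotient.mk K) Ideal.Quotient.mk_surjective
  have key : ∀ n : ℕ, Ideal.Quotient.mk K (C f - map C f) ∈
      maximalIdeal (MvPowerSeries σ (MvPowerSeries σ W) ⧸ K) ^ n := by
    intro n
    rw [maximalIdeal_quotient_eq_map, ← Ideal.map_pow]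
    obtain ⟨g, hg, hfg⟩ : ∃ g ∈ Ideal.span (Set.range (X (R := W) (σ := σ))) ^ n,
        f = g + (f.truncTotal n : MvPolynomial σ W) :=
      ⟨_, sub_truncTotal_mem_pow n f, by ring⟩
    have h1 : C g ∈ maximalIdeal (MvPowerSeries σ (MvPowerSeries σ W)) ^ n := by
      have := Ideal.mem_map_of_mem (C (σ := σ)) hg
      rw [Ideal.map_pow] at this
      refine Ideal.pow_right_mono ?_ n this
      rw [Ideal.map_span, Ideal.span_le]
      rintro _ ⟨_, ⟨s, rfl⟩, rfl⟩
      exact hCX s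
    have h2 : map C g ∈ maximalIdeal (MvPowerSeries σ (MvPowerSeries σ W)) ^ n := by
      have := Ideal.mem_map_of_mem (map (C (σ := σ))) hg
      rw [Ideal.map_pow] at this
      refine Ideal.pow_right_mono ?_ n this
      rw [Ideal.map_span, Ideal.span_le]
      rintro _ ⟨_, ⟨s, rfl⟩, rfl⟩
      rw [map_X]
      exact hX s
    have h3 : ((Ideal.Quotient.mk K).comp C).comp MvPolynomial.coeToMvPowerSeries.ringHom =
        ((Ideal.Quotient.mk K).comp (map C)).comp MvPolynomial.coeToMvPowerSeries.ringHom := by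
      refine MvPolynomial.ringHom_ext (fun w => ?_) (fun s => ?_)
      · simp
      · simp only [RingHom.comp_apply, MvPolynomial.coeToMvPowerSeries.ringHom_apply,
          MvPolynomial.coe_X, map_X]
        rw [Ideal.Quotient.eq]
        exact Ideal.subset_span ⟨s, rfl⟩
    have h4 := RingHom.congr_fun h3 (f.truncTotal n)
    simp only [RingHom.comp_apply, MvPolynomial.coeToMvPowerSeries.ringHom_apply] at h4
    rw [hfg, map_add, map_add, map_sub, map_add, map_add, h4, add_sub_add_right_eq_sub, ← map_sub]
    exact Ideal.mem_map_of_mem _ (sub_mem h1 h2)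
  have h5 := Ideal.iInf_pow_eq_bot_of_isLocalRing
    (maximalIdeal (MvPowerSeries σ (MvPowerSeries σ W) ⧸ K)) (maximalIdeal.isMaximal _).ne_top
  rw [← Ideal.Quotient.eq_zero_iff_mem, ← Ideal.mem_bot, ← h5, Ideal.mem_iInf]
  exact key

end MvPowerSeries

end FlatDimension

section DiagonalReduction

open IsLocalRing RingTheory.Sequence

theorem ringKrullDim_quotient_le_quotient_sup_span_add {A : Type*} [CommRing A] [IsLocalRing A]
    [IsNoetherianRing A] (L : Ideal A) {r : ℕ} (f : Fin r → A) (hf : ∀ i, f i ∈ maximalIdeal A) :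
    ringKrullDim (A ⧸ L) ≤ ringKrullDim (A ⧸ (L ⊔ Ideal.span (Set.range f))) + r := by
  rcases subsingleton_or_nontrivial (A ⧸ L) with h | h
  · rw [ringKrullDim_eq_bot_of_subsingleton]
    exact bot_le
  have := IsLocalRing.of_surjective' (Ideal.Quotient.mk L) Ideal.Quotient.mk_surjective
  have h1 := ringKrullDim_le_ringKrullDim_quotient_add_encard
    (Set.range fun i => Ideal.Quotient.mk L (f i)) (by
      rw [IsLocalRing.ringJacobson_eq_maximalIdeal, maximalIdeal_quotient_eq_map]
      rintro _ ⟨i, rfl⟩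
      exact Ideal.mem_map_of_mem _ (hf i))
  have h2 : Ideal.span (Set.range fun i => Ideal.Quotient.mk L (f i)) =
      (Ideal.span (Set.range f)).map (Ideal.Quotient.mk L) := by
    rw [Ideal.map_span, ← Set.range_comp]
    rfl
  rw [h2, ringKrullDim_eq_of_ringEquiv (DoubleQuot.quotQuotEquivQuotSup _ _)] at h1
  refine h1.trans ?_
  gcongr
  have h3 : (Set.range fun i => Ideal.Quotient.mk L (f i)).encard ≤ r := by
    rw [← Set.image_univ]
    refine (Set.encard_image_le _ _).trans ?_
    simp
  exact_mod_cast h3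

theorem MvPowerSeries.ringKrullDim_quotient_sup_le {W : Type u} [CommRing W] [IsLocalRing W]
    [IsNoetherianRing W] {r : ℕ} (P Q : Ideal (MvPowerSeries (Fin r) W))
    (L : Ideal (MvPowerSeries (Fin r) (MvPowerSeries (Fin r) W)))
    (hP : P.map C ≤ L) (hQ : Q.map (map C) ≤ L) (hL : L ≠ ⊤) :
    ringKrullDim (_ ⧸ (L ⊔ Ideal.span (Set.range fun s =>
      (C (X s) - X s : MvPowerSeries (Fin r) (MvPowerSeries (Fin r) W))))) ≤
    ringKrullDim (_ ⧸ (P ⊔ Q)) := by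
  set K := Ideal.span (Set.range fun s : Fin r =>
      (C (X s) - X s : MvPowerSeries (Fin r) (MvPowerSeries (Fin r) W)))
  have hX (s : Fin r) : (X s : MvPowerSeries (Fin r) (MvPowerSeries (Fin r) W)) ∈
      maximalIdeal _ := by
    rw [mem_maximalIdeal_iff, constantCoeff_X]; exact zero_mem _
  have hCX (s : Fin r) : (C (X s) : MvPowerSeries (Fin r) (MvPowerSeries (Fin r) W)) ∈
      maximalIdeal _ := by
    rw [mem_maximalIdeal_iff, constantCoeff_C, mem_maximalIdeal_iff, constantCoeff_X]
    exact zero_mem _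
  have hKm : K ≤ maximalIdeal _ := by
    rw [Ideal.span_le]
    rintro _ ⟨s, rfl⟩
    exact sub_mem (hCX s) (hX s)
  have hLK : L ⊔ K ≠ ⊤ :=
    ne_top_of_le_ne_top (maximalIdeal.isMaximal _).ne_top (sup_le (le_maximalIdeal hL) hKm)
  have hPQ : P ⊔ Q ≤ (L ⊔ K).comap C := by
    rw [sup_le_iff]
    refine ⟨(Ideal.map_le_iff_le_comap.1 hP).trans (Ideal.comap_mono le_sup_left), fun c hc => ?_⟩
    rw [Ideal.mem_comap, ← sub_add_cancel (C c) (map C c)]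
    exact add_mem (Ideal.mem_sup_right (C_sub_map_C_mem c))
      (Ideal.mem_sup_left (hQ (Ideal.mem_map_of_mem _ hc)))
  have hPQ' : P ⊔ Q ≠ ⊤ := ne_top_of_le_ne_top (Ideal.comap_ne_top _ hLK) hPQ
  have : Nontrivial (_ ⧸ (L ⊔ K)) := Ideal.Quotient.nontrivial_iff.2 hLK
  have : Nontrivial (_ ⧸ (P ⊔ Q)) := Ideal.Quotient.nontrivial_iff.2 hPQ'
  have := IsLocalRing.of_surjective' (Ideal.Quotient.mk (L ⊔ K)) Ideal.Quotient.mk_surjective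
  have := IsLocalRing.of_surjective' (Ideal.Quotient.mk (P ⊔ Q)) Ideal.Quotient.mk_surjective
  refine ringKrullDim_le_of_maximalIdeal_eq_map (Ideal.quotientMap (L ⊔ K) C hPQ) ?_
  rw [maximalIdeal_quotient_eq_map, maximalIdeal_quotient_eq_map, Ideal.map_map,
    Ideal.quotientMap_comp_mk, ← Ideal.map_map, maximalIdeal_eq, Ideal.map_sup]
  rw [sup_eq_left, Ideal.map_le_iff_le_comap, Ideal.span_le]
  rintro _ ⟨s, rfl⟩
  rw [SetLike.mem_coe, Ideal.mem_comap]
  have h1 : Ideal.Quotient.mk (L ⊔ K) (X s) = Ideal.Quotient.mk (L ⊔ K) (C (X s)) := by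
    rw [eq_comm, Ideal.Quotient.eq]
    exact Ideal.mem_sup_right (Ideal.subset_span ⟨s, rfl⟩)
  rw [h1]
  refine Ideal.mem_map_of_mem _ (Ideal.mem_map_of_mem _ ?_)
  rw [mem_maximalIdeal_iff, constantCoeff_X]
  exact zero_mem _

theorem MvPowerSeries.ringKrullDim_quotient_add_le {W : Type u} [CommRing W] [IsLocalRing W]
    [IsNoetherianRing W] {e : ℕ} (hW : IsRegularLocalOfDim W e) {r : ℕ}
    (P Q : Ideal (MvPowerSeries (Fin r) W)) [P.IsPrime] [Q.IsPrime]
    (h : ∀ a ∉ P, ∀ c ∉ Q, (C a * map C c : MvPowerSeries (Fin r) (MvPowerSeries (Fin r) W)) ∉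
      P.map (C (σ := Fin r)) ⊔ Q.map (map (σ := Fin r) (C (σ := Fin r)))) :
    ringKrullDim (_ ⧸ P) + ringKrullDim (_ ⧸ Q) ≤ ((e + r : ℕ) : WithBot ℕ∞) +
      ringKrullDim (_ ⧸ (P ⊔ Q)) := by
  obtain ⟨L, hL, hPL, hQL, hht⟩ := Ideal.exists_isPrime_height_le_add (C (σ := Fin r))
    (map (σ := Fin r) (C (σ := Fin r))) P Q (by
      intro a ha c hc
      have := h a ha c hc
      exact this)
  have h1 := (hW.mvPowerSeries r).height_add_ringKrullDim_quotient P
  have h2 := (hW.mvPowerSeries r).height_add_ringKrullDim_quotient Q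
  have h3 := ((hW.mvPowerSeries r).mvPowerSeries r).height_add_ringKrullDim_quotient L
  have h4 := ringKrullDim_quotient_le_quotient_sup_span_add L
    (fun s => (C (X s) - X s : MvPowerSeries (Fin r) (MvPowerSeries (Fin r) W))) (fun s => by
      rw [mem_maximalIdeal_iff, mem_maximalIdeal_iff]
      simp)
  have h5 := MvPowerSeries.ringKrullDim_quotient_sup_le P Q L hPL hQL hL.ne_top
  have h6 : P ⊔ Q ≠ ⊤ := ne_top_of_le_ne_top (maximalIdeal.isMaximal _).ne_top
    (sup_le (le_maximalIdeal (Ideal.IsPrime.ne_top ‹_›)) (le_maximalIdeal (Ideal.IsPrime.ne_top ‹_›)))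
  have : Nontrivial (_ ⧸ (P ⊔ Q)) := Ideal.Quotient.nontrivial_iff.2 h6
  have hT := (hW.mvPowerSeries r).ringKrullDim_eq
  have hS := ((hW.mvPowerSeries r).mvPowerSeries r).ringKrullDim_eq
  obtain ⟨a, ha⟩ := exists_natCast_eq_of_le ringKrullDim_nonneg_of_nontrivial
    ((ringKrullDim_quotient_le P).trans hT.le)
  obtain ⟨b, hb⟩ := exists_natCast_eq_of_le ringKrullDim_nonneg_of_nontrivial
    ((ringKrullDim_quotient_le Q).trans hT.le)
  obtain ⟨c, hc⟩ := exists_natCast_eq_of_le ringKrullDim_nonneg_of_nontrivial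
    ((ringKrullDim_quotient_le (P ⊔ Q)).trans hT.le)
  obtain ⟨l, hl⟩ := exists_natCast_eq_of_le ringKrullDim_nonneg_of_nontrivial
    ((ringKrullDim_quotient_le L).trans hS.le)
  obtain ⟨x, hx⟩ := ENat.ne_top_iff_exists.1 (Ideal.height_ne_top (I := P) (Ideal.IsPrime.ne_top ‹_›))
  obtain ⟨y, hy⟩ := ENat.ne_top_iff_exists.1 (Ideal.height_ne_top (I := Q) (Ideal.IsPrime.ne_top ‹_›))
  obtain ⟨z, hz⟩ := ENat.ne_top_iff_exists.1 (Ideal.height_ne_top hL.ne_top)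
  have h7 := h4.trans (add_le_add_left h5 _)
  rw [← hx, ← hy, ← hz] at hht
  rw [← hx, ha] at h1
  rw [← hy, hb] at h2
  rw [← hz, hl] at h3
  rw [hl, hc] at h7
  rw [ha, hb, hc]
  norm_cast at *
  omega

end DiagonalReduction

section FunctionalField

open IsLocalRing RingTheory.Sequence

namespace MvPowerSeries

theorem coeff_mem_of_mem_map_C {σ T : Type*} [CommRing T] {P : Ideal T} {g : MvPowerSeries σ T}
    (hg : g ∈ P.map (C (σ := σ))) (n : σ →₀ ℕ) : coeff n g ∈ P := by
  have h1 : P.map (C (σ := σ)) ≤ RingHom.ker (map (σ := σ) (Ideal.Quotient.mk P)) := by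
    rw [Ideal.map_le_iff_le_comap]
    intro t ht
    rw [Ideal.mem_comap, RingHom.mem_ker, map_C, Ideal.Quotient.eq_zero_iff_mem.2 ht, map_zero]
  have h2 := congr_arg (coeff n) ((RingHom.mem_ker).1 (h1 hg))
  rwa [coeff_map, map_zero, Ideal.Quotient.eq_zero_iff_mem] at h2

theorem C_mul_map_mem_of_functional {σ W W' : Type*} [CommRing W] [CommRing W']
    (φ : W →+* W') (l : MvPowerSeries σ W →+ W') (hl : ∀ w t, l (C w * t) = φ w * l t)
    {P Q : Ideal (MvPowerSeries σ W)} (hP : ∀ t ∈ P, l t = 0) {a c : MvPowerSeries σ W}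
    (h : (C a * map C c : MvPowerSeries σ (MvPowerSeries σ W)) ∈
      P.map (C (σ := σ)) ⊔ Q.map (map (σ := σ) (C (σ := σ)))) :
    C (l a) * map φ c ∈ Q.map (map (σ := σ) φ) := by
  classical
  let Λ : MvPowerSeries σ (MvPowerSeries σ W) → MvPowerSeries σ W' := fun g n => l (coeff n g)
  have hΛc (g n) : coeff n (Λ g) = l (coeff n g) := rfl
  have hΛ0 : Λ 0 = 0 := by ext n; simp [hΛc]
  have hΛadd (g g') : Λ (g + g') = Λ g + Λ g' := by ext n; simp [hΛc]
  have hΛmul (g c) : Λ (g * map C c) = Λ g * map φ c := by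
    ext n
    simp only [hΛc, coeff_mul, map_sum, coeff_map]
    refine Finset.sum_congr rfl fun x _ => ?_
    rw [mul_comm, hl, mul_comm]
  have hΛP (g) (hg : g ∈ P.map (C (σ := σ))) : Λ g = 0 := by
    ext n
    rw [hΛc, hP _ (coeff_mem_of_mem_map_C hg n), map_zero]
  have hΛQ (g) (hg : g ∈ Q.map (map (σ := σ) (C (σ := σ)))) :
      Λ g ∈ Q.map (map (σ := σ) φ) := by
    suffices ∀ s, Λ (s * g) ∈ Q.map (map (σ := σ) φ) by simpa using this 1
    refine Submodule.span_induction
      (p := fun g _ => ∀ s, Λ (s * g) ∈ Q.map (map (σ := σ) φ)) ?_ ?_ ?_ ?_ hg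
    · rintro _ ⟨q, hq, rfl⟩ s
      have : Λ (s * map C q) ∈ Q.map (map (σ := σ) φ) := by
        rw [hΛmul]
        exact Ideal.mul_mem_left _ _ (Ideal.mem_map_of_mem _ hq)
      exact this
    · intro s
      rw [mul_zero, hΛ0]
      exact zero_mem _
    · intro x y _ _ hx hy s
      rw [mul_add, hΛadd]
      exact add_mem (hx s) (hy s)
    · intro t x _ hx s
      rw [smul_eq_mul, ← mul_assoc]
      exact hx _
  obtain ⟨y, hy, z, hz, hyz⟩ := Submodule.mem_sup.1 h
  have h1 := hΛmul (C a) c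
  have h2 : Λ (C a) = C (l a) := by
    ext n
    rw [hΛc, coeff_C, coeff_C]
    split_ifs <;> simp
  rw [h2, ← hyz, hΛadd, hΛP y hy, zero_add] at h1
  rw [← h1]
  exact hΛQ z hz

theorem C_mul_map_C_notMem_of_field {σ k : Type*} [Field k]
    {P Q : Ideal (MvPowerSeries σ k)} {a c : MvPowerSeries σ k} (ha : a ∉ P) (hc : c ∉ Q) :
    (C a * map C c : MvPowerSeries σ (MvPowerSeries σ k)) ∉
      P.map (C (σ := σ)) ⊔ Q.map (map (σ := σ) (C (σ := σ))) := by
  intro h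
  obtain ⟨f, hfa, hfP⟩ := Submodule.exists_le_ker_of_notMem (K := k)
    (p := P.restrictScalars k) (v := a) ha
  have h1 := C_mul_map_mem_of_functional (RingHom.id k) f.toAddMonoidHom
    (fun w t => by
      rw [← smul_eq_C_mul]
      simp) (P := P) (Q := Q) (fun t ht => hfP ht) h
  have h2 : map (σ := σ) (RingHom.id k) = RingHom.id _ := map_id
  rw [h2, Ideal.map_id, RingHom.id_apply] at h1
  apply hc
  have h3 := Ideal.mul_mem_left _ (C (f a)⁻¹) h1
  rw [← mul_assoc] at h3
  have h4 : (C (f a)⁻¹ * C (f.toAddMonoidHom a) : MvPowerSeries σ k) = 1 := by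
    rw [← map_mul]
    simp [hfa]
  rwa [h4, one_mul] at h3

theorem ringKrullDim_quotient_add_le_of_field {k : Type u} [Field k] {r : ℕ}
    (P Q : Ideal (MvPowerSeries (Fin r) k)) [P.IsPrime] [Q.IsPrime] :
    ringKrullDim (_ ⧸ P) + ringKrullDim (_ ⧸ Q) ≤ (r : WithBot ℕ∞) +
      ringKrullDim (_ ⧸ (P ⊔ Q)) := by
  have h : IsRegularLocalOfDim k 0 := ⟨⟨Fin.elim0, by
    simp [IsLocalRing.maximalIdeal_eq_bot]⟩, by simp⟩
  simpa using ringKrullDim_quotient_add_le h P Q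
    fun a ha c hc => C_mul_map_C_notMem_of_field ha hc

end MvPowerSeries

end FunctionalField

section FunctionalDiscreteValuationRing

open IsLocalRing RingTheory.Sequence

theorem Ideal.mem_of_forall_mem_sup_span_pow {A : Type*} [CommRing A] [IsLocalRing A]
    [IsNoetherianRing A] {P : Ideal A} {x a : A} (hx : x ∈ maximalIdeal A)
    (h : ∀ n : ℕ, a ∈ P ⊔ Ideal.span {x ^ n}) : a ∈ P := by
  by_cases hP : P = ⊤
  · simp [hP]
  have : Nontrivial (A ⧸ P) := Ideal.Quotient.nontrivial_iff.2 hP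
  have := IsLocalRing.of_surjective' (Ideal.Quotient.mk P) Ideal.Quotient.mk_surjective
  have h5 := Ideal.iInf_pow_eq_bot_of_isLocalRing
    (maximalIdeal (A ⧸ P)) (maximalIdeal.isMaximal _).ne_top
  rw [← Ideal.Quotient.eq_zero_iff_mem, ← Ideal.mem_bot, ← h5, Ideal.mem_iInf]
  intro n
  obtain ⟨y, hy, z, hz, hyz⟩ := Submodule.mem_sup.1 (h n)
  obtain ⟨t, rfl⟩ := Ideal.mem_span_singleton'.1 hz
  rw [← hyz, map_add, Ideal.Quotient.eq_zero_iff_mem.2 hy, zero_add, map_mul, map_pow]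
  refine Ideal.mul_mem_left _ _ (Ideal.pow_mem_pow ?_ n)
  rw [maximalIdeal_quotient_eq_map]
  exact Ideal.mem_map_of_mem _ hx

theorem IsDiscreteValuationRing.baer_quotient_span_pow {W : Type*} [CommRing W] [IsDomain W]
    [IsDiscreteValuationRing W] {π : W} (hπ : Irreducible π) (n : ℕ) :
    Module.Baer (W ⧸ Ideal.span {π ^ n}) (W ⧸ Ideal.span {π ^ n}) := by
  intro I g
  set q := Ideal.Quotient.mk (Ideal.span {π ^ n})
  obtain ⟨k, hkn, hk⟩ : ∃ k ≤ n, I = Ideal.span {q (π ^ k)} := by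
    have hI : (I.comap q).map q = I := Ideal.map_comap_of_surjective _ Ideal.Quotient.mk_surjective I
    have hle : Ideal.span {π ^ n} ≤ I.comap q := by
      rw [Ideal.span_singleton_le_iff_mem, Ideal.mem_comap,
        show q (π ^ n) = 0 from Ideal.Quotient.eq_zero_iff_mem.2 (Ideal.mem_span_singleton_self _)]
      exact zero_mem _
    have hne : I.comap q ≠ ⊥ := by
      intro h
      rw [h, le_bot_iff, Ideal.span_singleton_eq_bot] at hle
      exact pow_ne_zero n hπ.ne_zero hle
    obtain ⟨k, hk⟩ := IsDiscreteValuationRing.ideal_eq_span_pow_irreducible hne hπ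
    refine ⟨k, ?_, ?_⟩
    · rw [hk, Ideal.span_singleton_le_span_singleton] at hle
      exact (pow_dvd_pow_iff hπ.ne_zero hπ.not_isUnit).1 hle
    · rw [← hI, hk, Ideal.map_span, Set.image_singleton]
  have hmem : q (π ^ k) ∈ I := hk ▸ Ideal.mem_span_singleton_self _
  obtain ⟨y, hy⟩ := Ideal.Quotient.mk_surjective (g ⟨q (π ^ k), hmem⟩)
  have h1 : q (π ^ (n - k)) * g ⟨q (π ^ k), hmem⟩ = 0 := by
    rw [← smul_eq_mul, ← map_smul]
    convert map_zero g
    rw [Subtype.ext_iff]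
    simp only [SetLike.mk_smul_mk, smul_eq_mul, ← map_mul, ← pow_add, Nat.sub_add_cancel hkn]
    exact Ideal.Quotient.eq_zero_iff_mem.2 (Ideal.mem_span_singleton_self _)
  rw [← hy, ← map_mul, Ideal.Quotient.eq_zero_iff_mem, Ideal.mem_span_singleton] at h1
  have h2 : π ^ k ∣ y := by
    rw [← mul_dvd_mul_iff_left (pow_ne_zero (n - k) hπ.ne_zero), ← pow_add, Nat.sub_add_cancel hkn]
    exact h1
  obtain ⟨z, rfl⟩ := h2
  refine ⟨LinearMap.toSpanSingleton _ _ (q z), fun x hx => ?_⟩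
  obtain ⟨u, rfl⟩ := Ideal.mem_span_singleton'.1 (hk ▸ hx)
  have h3 : (⟨u * q (π ^ k), hx⟩ : I) = u • ⟨q (π ^ k), hmem⟩ := rfl
  rw [h3, map_smul, ← hy, LinearMap.toSpanSingleton_apply, smul_eq_mul, smul_eq_mul, map_mul,
    mul_assoc]

namespace MvPowerSeries

theorem exists_functional_eq_one {σ W : Type*} [CommRing W] [IsDomain W]
    [IsDiscreteValuationRing W] {π : W} (hπ : Irreducible π) {P : Ideal (MvPowerSeries σ W)}
    [P.IsPrime] (hP : C π ∉ P) {a : MvPowerSeries σ W} (ha : a ∉ P ⊔ Ideal.span {C π}) (n : ℕ) :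
    ∃ l : MvPowerSeries σ W →+ W ⧸ Ideal.span {π ^ n},
      (∀ w t, l (C w * t) = Ideal.Quotient.mk _ w * l t) ∧ (∀ t ∈ P, l t = 0) ∧ l a = 1 := by
  set q := Ideal.Quotient.mk (Ideal.span {π ^ n})
  set J : Ideal (MvPowerSeries σ W) := P ⊔ Ideal.span {C π ^ n}
  let ψ : W ⧸ Ideal.span {π ^ n} →+* MvPowerSeries σ W ⧸ J :=
    Ideal.quotientMap J C (by
      rw [Ideal.span_singleton_le_iff_mem, Ideal.mem_comap, map_pow]
      exact Ideal.mem_sup_right (Ideal.mem_span_singleton_self _))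
  let _ := ψ.toAlgebra
  have hinj : Function.Injective
      (LinearMap.toSpanSingleton (W ⧸ Ideal.span {π ^ n}) _ (Ideal.Quotient.mk J a)) := by
    rw [injective_iff_map_eq_zero]
    intro b hb
    obtain ⟨w, rfl⟩ := Ideal.Quotient.mk_surjective b
    rw [LinearMap.toSpanSingleton_apply, Algebra.smul_def] at hb
    change Ideal.Quotient.mk J (C w) * _ = 0 at hb
    rw [← map_mul, Ideal.Quotient.eq_zero_iff_mem] at hb
    rw [Ideal.Quotient.eq_zero_iff_mem, Ideal.mem_span_singleton]
    by_cases hw : w = 0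
    · simp [hw]
    obtain ⟨k, u, rfl⟩ := IsDiscreteValuationRing.eq_unit_mul_pow_irreducible hw hπ
    by_contra hn
    have hkn : k < n := by
      by_contra hkn
      exact hn (Dvd.dvd.mul_left (pow_dvd_pow _ (not_lt.1 hkn)) _)
    apply ha
    obtain ⟨y, hy, z, hz, hyz⟩ := Submodule.mem_sup.1 hb
    obtain ⟨t, rfl⟩ := Ideal.mem_span_singleton'.1 hz
    have h1 : C π ^ k * (C (u : W) * a - t * C π ^ (n - k)) ∈ P := by
      convert hy using 1
      rw [eq_sub_of_add_eq hyz, map_mul, map_pow, ← Nat.add_sub_of_le hkn.le, pow_add,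
        Nat.add_sub_cancel_left]
      ring
    have h2 := (Ideal.IsPrime.mem_or_mem ‹_› h1).resolve_left
      fun h => hP (Ideal.IsPrime.mem_of_pow_mem ‹_› k h)
    have h3 : C (u : W) * a ∈ P ⊔ Ideal.span {C π} := by
      rw [← sub_add_cancel (C (u : W) * a) (t * C π ^ (n - k))]
      refine add_mem (Ideal.mem_sup_left h2) (Ideal.mem_sup_right ?_)
      refine Ideal.mul_mem_left _ _ (Ideal.pow_mem_of_mem _ (Ideal.mem_span_singleton_self _) _
        (by omega))
    have h4 := Ideal.mul_mem_left _ (C ((u⁻¹ : Wˣ) : W)) h3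
    rwa [← mul_assoc, ← map_mul, Units.inv_mul, map_one, one_mul] at h4
  obtain ⟨h, hh⟩ := Module.Baer.extension_property
    (IsDiscreteValuationRing.baer_quotient_span_pow hπ n) _ hinj LinearMap.id
  refine ⟨h.toAddMonoidHom.comp (Ideal.Quotient.mk J).toAddMonoidHom, fun w t => ?_,
    fun t ht => ?_, ?_⟩
  · have h1 : Ideal.Quotient.mk J (C w * t) = q w • Ideal.Quotient.mk J t := by
      rw [Algebra.smul_def, map_mul]
      rfl
    change h (Ideal.Quotient.mk J (C w * t)) = q w * h (Ideal.Quotient.mk J t)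
    rw [h1, map_smul, smul_eq_mul]
  · change h (Ideal.Quotient.mk J t) = 0
    rw [Ideal.Quotient.eq_zero_iff_mem.2 (Ideal.mem_sup_left ht), map_zero]
  · have := LinearMap.congr_fun hh 1
    simpa using this

theorem ker_map_mk_span_singleton {σ W : Type*} [CommRing W] (w : W) :
    RingHom.ker (map (σ := σ) (Ideal.Quotient.mk (Ideal.span {w}))) = Ideal.span {C w} := by
  ext f
  rw [RingHom.mem_ker, Ideal.mem_span_singleton]
  constructor
  · intro h
    have h1 (n) : w ∣ coeff n f := by
      have := congr_arg (coeff n) h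
      rwa [coeff_map, map_zero, Ideal.Quotient.eq_zero_iff_mem, Ideal.mem_span_singleton] at this
    choose g hg using h1
    let G : MvPowerSeries σ W := g
    have hG (n) : coeff n G = g n := rfl
    refine ⟨G, ?_⟩
    ext n
    rw [coeff_C_mul, hG, hg n]
  · rintro ⟨g, rfl⟩
    rw [map_mul, map_C, Ideal.Quotient.eq_zero_iff_mem.2 (Ideal.mem_span_singleton_self _),
      map_zero, zero_mul]

theorem map_surjective_of_surjective {σ W W' : Type*} [CommRing W] [CommRing W'] {φ : W →+* W'}
    (hφ : Function.Surjective φ) : Function.Surjective (map (σ := σ) φ) := by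
  intro f
  choose g hg using fun n => hφ (coeff n f)
  let G : MvPowerSeries σ W := g
  have hG (n) : coeff n G = g n := rfl
  refine ⟨G, ?_⟩
  ext n
  rw [coeff_map, hG, hg n]

theorem C_mul_map_C_notMem_of_isDiscreteValuationRing {σ W : Type*} [Finite σ] [CommRing W]
    [IsDomain W] [IsDiscreteValuationRing W] {π : W} (hπ : Irreducible π)
    {P Q : Ideal (MvPowerSeries σ W)} [P.IsPrime] [Q.IsPrime] (hπP : C π ∉ P) (hπQ : C π ∉ Q)
    {a c : MvPowerSeries σ W} (ha : a ∉ P) (hc : c ∉ Q) :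
    (C a * map C c : MvPowerSeries σ (MvPowerSeries σ W)) ∉
      P.map (C (σ := σ)) ⊔ Q.map (map (σ := σ) (C (σ := σ))) := by
  intro h
  have hπm : (C π : MvPowerSeries σ W) ∈ maximalIdeal _ := by
    rw [mem_maximalIdeal_iff, constantCoeff_C]
    exact (IsLocalRing.mem_maximalIdeal _).2 hπ.not_isUnit
  obtain ⟨s, a', ha', hs⟩ : ∃ (s : ℕ) (a' : MvPowerSeries σ W), a' ∉ P ⊔ Ideal.span {C π} ∧
      a - C π ^ s * a' ∈ P := by
    classical
    have hex : ∃ n : ℕ, a ∉ P ⊔ Ideal.span {C π ^ n} := by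
      by_contra! hex
      exact ha (Ideal.mem_of_forall_mem_sup_span_pow hπm hex)
    obtain ⟨s, hs⟩ : ∃ s, Nat.find hex = s + 1 := by
      refine Nat.exists_eq_succ_of_ne_zero fun h0 => Nat.find_spec hex ?_
      simp [h0]
    have h1 := Nat.find_spec hex
    have h2 := Nat.find_min hex (m := s) (by omega)
    rw [not_not] at h2
    obtain ⟨y, hy, z, hz, hyz⟩ := Submodule.mem_sup.1 h2
    obtain ⟨t, rfl⟩ := Ideal.mem_span_singleton'.1 hz
    refine ⟨s, t, fun ht => h1 ?_, ?_⟩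
    · rw [hs, ← hyz]
      refine add_mem (Ideal.mem_sup_left hy) ?_
      obtain ⟨y', hy', z', hz', rfl⟩ := Submodule.mem_sup.1 ht
      obtain ⟨t', rfl⟩ := Ideal.mem_span_singleton'.1 hz'
      rw [add_mul]
      refine add_mem (Ideal.mem_sup_left (Ideal.mul_mem_right _ _ hy')) (Ideal.mem_sup_right ?_)
      exact Ideal.mem_span_singleton'.2 ⟨t', by ring⟩
    · rw [← hyz]
      ring_nf
      exact hy
  have h' : (C a' * map C (C π ^ s * c) : MvPowerSeries σ (MvPowerSeries σ W)) ∈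
      P.map (C (σ := σ)) ⊔ Q.map (map (σ := σ) (C (σ := σ))) := by
    have h1 := sub_mem h (Ideal.mem_sup_left
      (Ideal.mul_mem_right (map C c) _ (Ideal.mem_map_of_mem (C (σ := σ)) hs)))
    convert h1 using 1
    rw [map_mul, map_sub, map_mul, map_pow, map_pow, map_C]
    ring
  have h1 : C π ^ s * c ∈ Q := by
    refine Ideal.mem_of_forall_mem_sup_span_pow hπm fun n => ?_
    obtain ⟨l, hl, hlP, hla⟩ := exists_functional_eq_one hπ hπP ha' n
    have h2 := C_mul_map_mem_of_functional _ l hl hlP h'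
    rw [hla, map_one, one_mul, ← Ideal.mem_comap, Ideal.comap_map_of_surjective'
      _ (map_surjective_of_surjective Ideal.Quotient.mk_surjective), ker_map_mk_span_singleton,
      map_pow] at h2
    exact h2
  rcases Ideal.IsPrime.mem_or_mem ‹_› h1 with h2 | h2
  · exact hπQ (Ideal.IsPrime.mem_of_pow_mem ‹_› s h2)
  · exact hc h2

end MvPowerSeries

end FunctionalDiscreteValuationRing

section PowerSeriesInequality

open IsLocalRing RingTheory.Sequence

theorem Ideal.exists_isPrime_le_ringKrullDim_quotient_le {A : Type u} [CommRing A]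
    [IsNoetherianRing A] [IsLocalRing A] (I : Ideal A) (hI : I ≠ ⊤) :
    ∃ P : Ideal A, P.IsPrime ∧ I ≤ P ∧ ringKrullDim (A ⧸ I) ≤ ringKrullDim (A ⧸ P) := by
  have : Nontrivial (A ⧸ I) := Ideal.Quotient.nontrivial_iff.2 hI
  obtain ⟨P, hP, h⟩ := Module.exists_mem_support_supportDim_le (R := A) (A ⧸ I)
  rw [Module.supportDim_eq_ringKrullDim_quotient_annihilator, Ideal.annihilator_quotient] at h
  rw [Module.mem_support_iff_of_finite, Ideal.annihilator_quotient] at hP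
  exact ⟨P.asIdeal, P.2, hP, h⟩

theorem ringKrullDim_quotient_add_le_of_forall_isPrime {A : Type u} [CommRing A]
    [IsNoetherianRing A] [IsLocalRing A] {d : WithBot ℕ∞}
    (h : ∀ P Q : Ideal A, P.IsPrime → Q.IsPrime →
      ringKrullDim (A ⧸ P) + ringKrullDim (A ⧸ Q) ≤ d + ringKrullDim (A ⧸ (P ⊔ Q)))
    (I J : Ideal A) :
    ringKrullDim (A ⧸ I) + ringKrullDim (A ⧸ J) ≤ d + ringKrullDim (A ⧸ (I ⊔ J)) := by
  by_cases hI : I = ⊤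
  · have : Subsingleton (A ⧸ I) := Ideal.Quotient.subsingleton_iff.2 hI
    simp [ringKrullDim_eq_bot_of_subsingleton]
  by_cases hJ : J = ⊤
  · have : Subsingleton (A ⧸ J) := Ideal.Quotient.subsingleton_iff.2 hJ
    simp [ringKrullDim_eq_bot_of_subsingleton]
  obtain ⟨P, hP, hIP, h1⟩ := I.exists_isPrime_le_ringKrullDim_quotient_le hI
  obtain ⟨Q, hQ, hJQ, h2⟩ := J.exists_isPrime_le_ringKrullDim_quotient_le hJ
  refine (add_le_add h1 h2).trans ((h P Q hP hQ).trans ?_)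
  gcongr
  exact ringKrullDim_le_of_surjective (Ideal.Quotient.factor (sup_le_sup hIP hJQ))
    (Ideal.Quotient.factor_surjective _)

theorem ringKrullDim_quotient_map_of_surjective {A B : Type*} [CommRing A] [CommRing B]
    {φ : A →+* B} (hφ : Function.Surjective φ) (I : Ideal A) :
    ringKrullDim (B ⧸ I.map φ) = ringKrullDim (A ⧸ (I ⊔ RingHom.ker φ)) := by
  have h1 : RingHom.ker ((Ideal.Quotient.mk (I.map φ)).comp φ) = I ⊔ RingHom.ker φ := by
    rw [← RingHom.comap_ker, Ideal.mk_ker, Ideal.comap_map_of_surjective' _ hφ]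
  rw [← ringKrullDim_eq_of_ringEquiv (RingHom.quotientKerEquivOfSurjective
    (f := (Ideal.Quotient.mk (I.map φ)).comp φ) (Ideal.Quotient.mk_surjective.comp hφ)), h1]

theorem ringKrullDim_quotient_add_le_of_surjective {A B : Type*} [CommRing A] [CommRing B]
    {φ : A →+* B} (hφ : Function.Surjective φ) {d : WithBot ℕ∞}
    (h : ∀ I J : Ideal A,
      ringKrullDim (A ⧸ I) + ringKrullDim (A ⧸ J) ≤ d + ringKrullDim (A ⧸ (I ⊔ J)))
    (I J : Ideal B) :
    ringKrullDim (B ⧸ I) + ringKrullDim (B ⧸ J) ≤ d + ringKrullDim (B ⧸ (I ⊔ J)) := by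
  have h1 (K : Ideal B) : ringKrullDim (B ⧸ K) = ringKrullDim (A ⧸ K.comap φ) := by
    have := ringKrullDim_quotient_map_of_surjective hφ (K.comap φ)
    rwa [Ideal.map_comap_of_surjective _ hφ, sup_eq_left.2 (Ideal.ker_le_comap _)] at this
  have h2 : (I ⊔ J).comap φ = I.comap φ ⊔ J.comap φ := by
    conv_lhs => rw [← Ideal.map_comap_of_surjective _ hφ I, ← Ideal.map_comap_of_surjective _ hφ J,
      ← Ideal.map_sup]
    rw [Ideal.comap_map_of_surjective' _ hφ, sup_eq_left]
    exact (Ideal.ker_le_comap _).trans le_sup_left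
  rw [h1, h1, h1, h2]
  exact h _ _

namespace MvPowerSeries

theorem ringKrullDim_quotient_ideal_add_le_of_field {k : Type u} [Field k] {r : ℕ}
    (I J : Ideal (MvPowerSeries (Fin r) k)) :
    ringKrullDim (_ ⧸ I) + ringKrullDim (_ ⧸ J) ≤ (r : WithBot ℕ∞) +
      ringKrullDim (_ ⧸ (I ⊔ J)) := by
  refine ringKrullDim_quotient_add_le_of_forall_isPrime (fun P Q _ _ => ?_) I J
  have := ringKrullDim_quotient_add_le_of_field P Q
  exact this

theorem ringKrullDim_quotient_add_le_of_C_mem {W : Type u} [CommRing W] [IsDomain W]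
    [IsDiscreteValuationRing W] {π : W} (hπ : Irreducible π) {r : ℕ}
    (P Q : Ideal (MvPowerSeries (Fin r) W)) (hP : C π ∈ P) :
    ringKrullDim (_ ⧸ P) + ringKrullDim (_ ⧸ Q) ≤ ((1 + r : ℕ) : WithBot ℕ∞) +
      ringKrullDim (_ ⧸ (P ⊔ Q)) := by
  have hmax : (Ideal.span {π}).IsMaximal := hπ.maximalIdeal_eq ▸ maximalIdeal.isMaximal W
  let _ : Field (W ⧸ Ideal.span {π}) := Ideal.Quotient.field _
  have hsurj : Function.Surjective (map (σ := Fin r) (Ideal.Quotient.mk (Ideal.span {π}))) :=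
    map_surjective_of_surjective Ideal.Quotient.mk_surjective
  have h1 := ringKrullDim_quotient_ideal_add_le_of_field
    (P.map (map (σ := Fin r) (Ideal.Quotient.mk (Ideal.span {π}))))
    (Q.map (map (σ := Fin r) (Ideal.Quotient.mk (Ideal.span {π}))))
  rw [← Ideal.map_sup, ringKrullDim_quotient_map_of_surjective hsurj,
    ringKrullDim_quotient_map_of_surjective hsurj, ringKrullDim_quotient_map_of_surjective hsurj,
    ker_map_mk_span_singleton, sup_eq_left.2 (show Ideal.span {C π} ≤ P by simpa using hP),
    sup_eq_left.2 (show Ideal.span {C π} ≤ P ⊔ Q from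
      le_trans (by simpa using hP) le_sup_left)] at h1
  have h2 := ringKrullDim_quotient_le_quotient_sup_span_add Q
    (fun _ : Fin 1 => (C π : MvPowerSeries (Fin r) W)) (fun _ => by
      rw [mem_maximalIdeal_iff, constantCoeff_C]
      exact (IsLocalRing.mem_maximalIdeal _).2 hπ.not_isUnit)
  rw [Set.range_const, Nat.cast_one] at h2
  refine (add_le_add_right h2 _).trans ?_
  rw [← add_assoc]
  refine (add_le_add_left h1 _).trans (le_of_eq ?_)
  push_cast
  ring

theorem ringKrullDim_quotient_ideal_add_le_of_isDiscreteValuationRing {W : Type u} [CommRing W]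
    [IsDomain W] [IsDiscreteValuationRing W] {r : ℕ} (I J : Ideal (MvPowerSeries (Fin r) W)) :
    ringKrullDim (_ ⧸ I) + ringKrullDim (_ ⧸ J) ≤ ((1 + r : ℕ) : WithBot ℕ∞) +
      ringKrullDim (_ ⧸ (I ⊔ J)) := by
  obtain ⟨π, hπ⟩ := IsDiscreteValuationRing.exists_irreducible W
  refine ringKrullDim_quotient_add_le_of_forall_isPrime (fun P Q _ _ => ?_) I J
  by_cases hP : C π ∈ P
  · exact ringKrullDim_quotient_add_le_of_C_mem hπ P Q hP
  by_cases hQ : C π ∈ Q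
  · rw [add_comm, sup_comm]
    exact ringKrullDim_quotient_add_le_of_C_mem hπ Q P hQ
  · have hW : IsRegularLocalOfDim W 1 := ⟨⟨fun _ => π, by
      rw [hπ.maximalIdeal_eq, Set.range_const]⟩,
      by rw [IsDiscreteValuationRing.ringKrullDim_eq_one W, Nat.cast_one]⟩
    exact ringKrullDim_quotient_add_le hW P Q fun a ha c hc =>
      C_mul_map_C_notMem_of_isDiscreteValuationRing hπ hP hQ ha hc

end MvPowerSeries

end PowerSeriesInequality

section FormallySmoothField

namespace MvPolynomial

theorem algHom_sub_eq_sum_pderiv {ι F Q : Type*} [Fintype ι] [CommRing F] [CommRing Q]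
    [Algebra F Q] (u v : MvPolynomial ι F →ₐ[F] Q)
    (huv : ∀ a b, (u a - v a) * (u b - v b) = 0) (h : MvPolynomial ι F) :
    u h - v h = ∑ i, u (pderiv i h) * (u (X i) - v (X i)) := by
  classical
  induction h using MvPolynomial.induction_on with
  | C a =>
    have h1 : u (C a) = v (C a) := by
      rw [← algebraMap_eq, AlgHom.commutes, AlgHom.commutes]
    simp [h1]
  | add p q hp hq =>
    simp only [map_add, add_mul, Finset.sum_add_distrib, ← hp, ← hq]
    ring
  | mul_X p j hp =>
    have h1 : ∀ i, u (pderiv i (p * X j)) * (u (X i) - v (X i)) =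
        u (X j) * (u (pderiv i p) * (u (X i) - v (X i))) +
          if j = i then u p * (u (X j) - v (X j)) else 0 := by
      intro i
      rw [Derivation.leibniz, pderiv_X]
      by_cases hij : j = i
      · subst hij
        simp only [Pi.single_eq_same, smul_eq_mul, mul_one, map_add, map_mul, if_true]
        ring
      · simp [hij, mul_assoc]
    simp only [h1, Finset.sum_add_distrib, ← Finset.mul_sum, ← hp, Finset.sum_ite_eq,
      Finset.mem_univ, if_true, map_mul]
    linear_combination -huv p (X j)

theorem mem_ker_aeval_id_sq {F L : Type*} [Field F] [Field L] [Algebra F L] [PerfectField F]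
    (f : MvPolynomial L F) (hf : aeval (id : L → L) f = 0)
    (hd : ∀ i, aeval (id : L → L) (pderiv i f) = 0) :
    f ∈ RingHom.ker (aeval (R := F) (id : L → L)) ^ 2 := by
  classical
  set ev := aeval (R := F) (id : L → L)
  set I := RingHom.ker ev
  obtain ⟨s, h, rfl⟩ : ∃ (s : Finset L) (h : MvPolynomial s F), rename ((↑) : s → L) h = f :=
    ⟨f.vars, exists_rename_eq_of_vars_subset_range f _ Subtype.val_injective (by simp)⟩
  let E := IntermediateField.adjoin F (s : Set L)
  have : Algebra.EssFiniteType F E :=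
    IntermediateField.essFiniteType_iff.2 (IntermediateField.fg_adjoin_finset s)
  have : Algebra.FormallySmooth F E := inferInstance
  let w : (MvPolynomial L F ⧸ I ^ 2) →ₐ[F] L := Ideal.Quotient.liftₐ (I ^ 2) ev
    (fun a ha => Ideal.pow_le_self two_ne_zero ha)
  have hwmk (x) : w (Ideal.Quotient.mk _ x) = ev x := rfl
  have hw : Function.Surjective w := fun l => ⟨Ideal.Quotient.mk _ (X l), by
    rw [hwmk]
    exact aeval_X _ _⟩
  have hker : RingHom.ker (w : (MvPolynomial L F ⧸ I ^ 2) →+* L) ^ 2 = ⊥ := by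
    have h1 : RingHom.ker (w : (MvPolynomial L F ⧸ I ^ 2) →+* L) ≤
        I.map (Ideal.Quotient.mk (I ^ 2)) := by
      intro x hx
      obtain ⟨x, rfl⟩ := Ideal.Quotient.mk_surjective x
      exact Ideal.mem_map_of_mem _ hx
    rw [eq_bot_iff]
    refine (Ideal.pow_right_mono h1 2).trans ?_
    rw [← Ideal.map_pow, Ideal.map_quotient_self]
  let g : E →ₐ[F] (MvPolynomial L F ⧸ I ^ 2) :=
    Algebra.FormallySmooth.liftOfSurjective E.val w hw ⟨2, hker⟩
  have hg (e : E) : w (g e) = e :=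
    Algebra.FormallySmooth.liftOfSurjective_apply E.val w hw ⟨2, hker⟩ e
  let c : s → E := fun i => ⟨i, IntermediateField.subset_adjoin F _ i.2⟩
  let u : MvPolynomial s F →ₐ[F] (MvPolynomial L F ⧸ I ^ 2) :=
    (Ideal.Quotient.mkₐ F (I ^ 2)).comp (rename ((↑) : s → L))
  let v : MvPolynomial s F →ₐ[F] (MvPolynomial L F ⧸ I ^ 2) := g.comp (aeval c)
  have hwu (a) : w (u a) = ev (rename (↑) a) := rfl
  have hwuv : w.comp u = w.comp v := by
    ext i
    change ev (rename (↑) (X i)) = w (g (aeval c (X i)))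
    rw [hg, aeval_X, rename_X]
    exact aeval_X (R := F) (id : L → L) (i : L)
  have huv0 (x y) (hx : w x = 0) (hy : w y = 0) : x * y = 0 := by
    have h1 := Ideal.mul_mem_mul (I := RingHom.ker (w : (MvPolynomial L F ⧸ I ^ 2) →+* L))
      (J := RingHom.ker (w : (MvPolynomial L F ⧸ I ^ 2) →+* L)) hx hy
    rwa [← pow_two (RingHom.ker (w : (MvPolynomial L F ⧸ I ^ 2) →+* L)), hker,
      Ideal.mem_bot] at h1
  have huv (a) : w (u a - v a) = 0 := by
    rw [map_sub, sub_eq_zero]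
    exact AlgHom.congr_fun hwuv a
  have key := algHom_sub_eq_sum_pderiv u v (fun a b => huv0 _ _ (huv a) (huv b)) h
  rw [Finset.sum_eq_zero fun i _ => huv0 _ _ (by
    rw [hwu, ← pderiv_rename Subtype.val_injective]
    exact hd i) (huv _)] at key
  have h2 : aeval c h = 0 := by
    have hc : E.val.comp (aeval c) = ev.comp (rename ((↑) : s → L)) := by
      ext i
      change (aeval c (X i) : E).1 = ev (rename (↑) (X i))
      rw [aeval_X, rename_X]
      exact (aeval_X (R := F) (id : L → L) (i : L)).symm
    have h4 := AlgHom.congr_fun hc h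
    rw [AlgHom.comp_apply, AlgHom.comp_apply, hf] at h4
    exact (map_eq_zero E.val).1 h4
  have h3 : v h = 0 := by rw [show v h = g (aeval c h) from rfl, h2, map_zero]
  rw [h3, sub_zero] at key
  exact Ideal.Quotient.eq_zero_iff_mem.1 key

end MvPolynomial

theorem Algebra.FormallySmooth.of_perfectField_of_field (F L : Type*) [Field F] [Field L]
    [Algebra F L] [PerfectField F] : Algebra.FormallySmooth F L := by
  refine ⟨inferInstance, ⟨fun x y => ?_⟩⟩
  suffices ∀ x : Algebra.H1Cotangent F L, x = 0 by rw [this x, this y]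
  rintro ⟨x, hx⟩
  obtain ⟨f, rfl⟩ := Algebra.Extension.Cotangent.mk_surjective x
  refine Subtype.ext ((Algebra.Extension.Cotangent.mk_eq_zero_iff f).2 ?_)
  refine MvPolynomial.mem_ker_aeval_id_sq f.1 f.2 fun i => ?_
  have h1 := (Algebra.Extension.cotangentComplex_mk _ f).symm.trans hx
  have h2 := (Algebra.Generators.self F L).cotangentSpaceBasis_repr_one_tmul f.1 i
  refine h2.symm.trans ?_
  have h3 := congrArg (fun z => (Algebra.Generators.self F L).cotangentSpaceBasis.repr z i) h1
  exact h3.trans (by simp)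

end FormallySmoothField

section PowerSeriesEvaluation

theorem MvPowerSeries.exists_ringHom_of_isAdicComplete {σ W B : Type*} [Finite σ] [CommRing W]
    [CommRing B] (I : Ideal B) [hI : IsAdicComplete I B] (φ : W →+* B) (x : σ → B)
    (hx : ∀ i, x i ∈ I) :
    ∃ Φ : MvPowerSeries σ W →+* B, (∀ w, Φ (C w) = φ w) ∧ ∀ i, Φ (X i) = x i := by
  let _ : WithIdeal B := ⟨I⟩
  have had : IsAdic I := rfl
  obtain ⟨_, _⟩ := had.isAdicComplete_iff.1 hI
  let _ : UniformSpace W := ⊥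
  have : DiscreteTopology W := ⟨rfl⟩
  have : IsUniformAddGroup W := inferInstance
  have : IsLinearTopology B B := inferInstance
  have hφ : Continuous φ := continuous_of_discreteTopology
  have ha : HasEval x := by
    refine ⟨fun i => ?_, ?_⟩
    · refine (had.hasBasis_nhds_zero.tendsto_right_iff).2 fun n _ => ?_
      filter_upwards [Filter.eventually_ge_atTop n] with k hk
      exact Ideal.pow_le_pow_right hk (Ideal.pow_mem_pow (hx i) k)
    · rw [Filter.cofinite_eq_bot]
      exact Filter.tendsto_bot
  refine ⟨eval₂Hom hφ ha, fun w => ?_, fun i => ?_⟩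
  · rw [coe_eval₂Hom, eval₂_C]
  · rw [coe_eval₂Hom, eval₂_X]

theorem MvPowerSeries.exists_surjective_of_isAdicComplete {σ W B : Type*} [Finite σ] [CommRing W]
    [CommRing B] (I : Ideal B) [IsAdicComplete I B] (φ : W →+* B) (x : σ → B)
    (hx : ∀ i, x i ∈ I) [IsHausdorff (Ideal.span (Set.range x)) B]
    (hφ : ∀ b, ∃ w, b - φ w ∈ Ideal.span (Set.range x)) :
    ∃ Φ : MvPowerSeries σ W →+* B, Function.Surjective Φ := by
  obtain ⟨Φ, h1, h2⟩ := exists_ringHom_of_isAdicComplete I φ x hx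
  have h3 : (Ideal.span (Set.range (X : σ → MvPowerSeries σ W))).map Φ =
      Ideal.span (Set.range x) := by
    rw [Ideal.map_span, ← Set.range_comp]
    congr 2
    exact funext h2
  have : IsHausdorff ((Ideal.span (Set.range (X : σ → MvPowerSeries σ W))).map Φ) B := by
    rwa [h3]
  refine ⟨Φ, surjective_of_mk_map_comp_surjective
    (I := Ideal.span (Set.range (X : σ → MvPowerSeries σ W))) Φ fun b => ?_⟩
  obtain ⟨b, rfl⟩ := Ideal.Quotient.mk_surjective b
  obtain ⟨w, hw⟩ := hφ b
  refine ⟨C w, ?_⟩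
  rw [RingHom.comp_apply, h1, eq_comm, Ideal.Quotient.eq, h3]
  exact hw

end PowerSeriesEvaluation

section CoefficientField

open IsLocalRing

theorem IsHausdorff.of_ideal_le {A : Type*} [CommRing A] {I J : Ideal A} (h : I ≤ J)
    [IsHausdorff J A] : IsHausdorff I A := by
  refine ⟨fun x hx => IsHausdorff.haus ‹_› x fun n => ?_⟩
  have h1 := hx n
  rw [SModEq.zero] at h1 ⊢
  exact Submodule.smul_mono (Ideal.pow_right_mono h n) le_rfl h1

theorem ringKrullDim_quotient_add_le_of_isAdicComplete_of_algebra {B : Type u} [CommRing B]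
    [IsLocalRing B] [IsAdicComplete (maximalIdeal B) B] (F : Type*) [Field F] [PerfectField F]
    [Algebra F B] {d : ℕ} (x : Fin d → B) (hx : Ideal.span (Set.range x) = maximalIdeal B) :
    IsNoetherianRing B ∧ ∀ I J : Ideal B,
      ringKrullDim (B ⧸ I) + ringKrullDim (B ⧸ J) ≤
        (d : WithBot ℕ∞) + ringKrullDim (B ⧸ I ⊔ J) := by
  have := Algebra.FormallySmooth.of_perfectField_of_field F (ResidueField B)
  obtain ⟨g, hg⟩ := Algebra.FormallySmooth.exists_mkₐ_comp_eq_of_isAdicComplete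
    (R := F) (I := maximalIdeal B) (AlgHom.id F (ResidueField B))
  have : IsHausdorff (Ideal.span (Set.range x)) B := by
    rw [hx]
    infer_instance
  obtain ⟨Φ, hΦ⟩ := MvPowerSeries.exists_surjective_of_isAdicComplete (maximalIdeal B)
    (g : ResidueField B →+* B) x (fun i => hx ▸ Ideal.subset_span ⟨i, rfl⟩) (fun b => by
      refine ⟨residue B b, ?_⟩
      rw [hx, ← Ideal.Quotient.eq]
      exact (AlgHom.congr_fun hg (residue B b)).symm)
  refine ⟨isNoetherianRing_of_surjective _ _ Φ hΦ,
    ringKrullDim_quotient_add_le_of_surjective hΦ fun I J => ?_⟩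
  exact MvPowerSeries.ringKrullDim_quotient_ideal_add_le_of_field I J

end CoefficientField

section FormallySmoothQuotient

section

variable {A V : Type*} [CommRing A] [CommRing V] [Algebra A V]

theorem Module.Flat.quotient_map [Module.Flat A V] (I : Ideal A) :
    Module.Flat (A ⧸ I) (V ⧸ I.map (algebraMap A V)) :=
  Module.Flat.of_linearEquiv
    (Algebra.TensorProduct.quotIdealMapEquivQuotTensor V I).toLinearEquiv

theorem RingHom.FormallySmooth.quotient_pow [Module.Flat A V] (I : Ideal A)
    (h : (algebraMap (A ⧸ I) (V ⧸ I.map (algebraMap A V))).FormallySmooth) (n : ℕ) :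
    (algebraMap (A ⧸ I ^ (n + 1)) (V ⧸ (I ^ (n + 1)).map (algebraMap A V))).FormallySmooth := by
  induction n with
  | zero => rwa [zero_add, pow_one]
  | succ n ih =>
    have hle : I ^ (n + 1 + 1) ≤ I ^ (n + 1) := Ideal.pow_le_pow_right (Nat.le_succ _)
    refine RingHom.FormallySmooth.of_flat_of_ker_eq_map_of_square_zero _
      ((RingHom.flat_algebraMap_iff).2 (Module.Flat.quotient_map _))
      (Ideal.Quotient.factor hle) (Ideal.Quotient.factor (Ideal.map_mono hle)) _
      (Ideal.Quotient.factor_surjective _) (Ideal.Quotient.factor_surjective _)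
      ?_ ?_ ?_ ih
    · refine Ideal.Quotient.ringHom_ext (RingHom.ext fun a => ?_)
      rfl
    · rw [Ideal.Quotient.factor_ker, ← Ideal.map_pow, eq_bot_iff, Ideal.map_le_iff_le_comap,
        ← RingHom.ker_eq_comap_bot, Ideal.mk_ker, ← pow_mul]
      exact Ideal.pow_le_pow_right (by lia)
    · rw [Ideal.Quotient.factor_ker, Ideal.Quotient.factor_ker, Ideal.map_map, Ideal.map_map]
      rfl

end

theorem RingHom.exists_comp_eq_of_formallySmooth_int {V Q Q' : Type*} [CommRing V] [CommRing Q]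
    [CommRing Q'] (I : Ideal ℤ)
    (h : (algebraMap (ℤ ⧸ I) (V ⧸ I.map (algebraMap ℤ V))).FormallySmooth) (q : Q →+* Q')
    (hq : Function.Surjective q) (hker : IsNilpotent (RingHom.ker q))
    (hI : I.map (Int.castRingHom Q) = ⊥) (f : V →+* Q') :
    ∃ g : V →+* Q, q.comp g = f := by
  have hI1 : ∀ a ∈ I, Int.castRingHom Q a = 0 := fun a ha => by
    rw [← Ideal.mem_bot, ← hI]
    exact Ideal.mem_map_of_mem _ ha
  have hI2 : ∀ a ∈ I.map (algebraMap ℤ V), f a = 0 := fun a ha => by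
    have h1 : I.map (algebraMap ℤ V) ≤ RingHom.ker f := by
      rw [Ideal.map_le_iff_le_comap]
      intro a ha
      have h2 : f (algebraMap ℤ V a) = q (Int.castRingHom Q a) := by simp
      exact h2.trans (by rw [hI1 a ha, map_zero])
    exact h1 ha
  have := (RingHom.formallySmooth_algebraMap).1 h
  let iQ : ℤ ⧸ I →+* Q := Ideal.Quotient.lift I (Int.castRingHom Q) hI1
  let _ : Algebra (ℤ ⧸ I) Q := iQ.toAlgebra
  let _ : Algebra (ℤ ⧸ I) Q' := (q.comp iQ).toAlgebra
  let qA : Q →ₐ[ℤ ⧸ I] Q' := { q with commutes' := fun _ => rfl }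
  let fA : (V ⧸ I.map (algebraMap ℤ V)) →ₐ[ℤ ⧸ I] Q' :=
    { Ideal.Quotient.lift _ f hI2 with
      commutes' := fun r => RingHom.congr_fun (Ideal.Quotient.ringHom_ext (RingHom.ext_int _ _) :
        (Ideal.Quotient.lift _ f hI2).comp (algebraMap (ℤ ⧸ I) _) = q.comp iQ) r }
  let g := Algebra.FormallySmooth.liftOfSurjective fA qA hq hker
  refine ⟨g.toRingHom.comp (Ideal.Quotient.mk _), RingHom.ext fun v => ?_⟩
  exact Algebra.FormallySmooth.liftOfSurjective_apply fA qA hq hker (Ideal.Quotient.mk _ v)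

theorem RingHom.exists_mk_comp_eq_of_isAdicComplete {V B : Type*} [CommRing V] [CommRing B]
    [Module.Flat ℤ V] (m : Ideal B) [IsAdicComplete m B] (I : Ideal ℤ)
    (h : (algebraMap (ℤ ⧸ I) (V ⧸ I.map (algebraMap ℤ V))).FormallySmooth)
    (hI : I.map (Int.castRingHom B) ≤ m) (f : V →+* B ⧸ m) :
    ∃ g : V →+* B, (Ideal.Quotient.mk m).comp g = f := by
  have step (n : ℕ) (g : V →+* B ⧸ m ^ (n + 1)) : ∃ g' : V →+* B ⧸ m ^ (n + 1 + 1),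
      (Ideal.Quotient.factorPow m (Nat.le_succ (n + 1))).comp g' = g := by
    refine RingHom.exists_comp_eq_of_formallySmooth_int (I ^ (n + 1 + 1))
      (RingHom.FormallySmooth.quotient_pow I h (n + 1)) _
      (Ideal.Quotient.factor_surjective _) ⟨2, ?_⟩ ?_ g
    · rw [Ideal.Quotient.factor_ker, ← Ideal.map_pow, Ideal.zero_eq_bot, eq_bot_iff,
        Ideal.map_le_iff_le_comap, ← RingHom.ker_eq_comap_bot, Ideal.mk_ker, ← pow_mul]
      exact Ideal.pow_le_pow_right (by lia)
    · rw [← RingHom.ext_int ((Ideal.Quotient.mk _).comp (Int.castRingHom B)) (Int.castRingHom _),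
        ← Ideal.map_map, eq_bot_iff, Ideal.map_le_iff_le_comap (f := Ideal.Quotient.mk _),
        ← RingHom.ker_eq_comap_bot, Ideal.mk_ker, Ideal.map_pow]
      exact Ideal.pow_right_mono hI _
  choose s hs using step
  have h0 : m ≤ m ^ (0 + 1) := by rw [zero_add, pow_one]
  let F : (n : ℕ) → V →+* B ⧸ m ^ (n + 1) := fun n =>
    Nat.rec ((Ideal.Quotient.factor h0).comp f) (fun n g => s n g) n
  have hF (n : ℕ) : (Ideal.Quotient.factorPow m (Nat.le_succ (n + 1))).comp (F (n + 1)) = F n :=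
    hs n (F n)
  have ha : StrictMono fun n : ℕ => n + 1 := fun a b hab => Nat.succ_lt_succ hab
  let G := IsAdicComplete.StrictMono.liftRingHom m ha F (fun {n} => hF n)
  refine ⟨G, RingHom.ext fun v => ?_⟩
  have h1 := IsAdicComplete.StrictMono.mk_liftRingHom m ha F (fun {n} => hF n) (n := 0) v
  obtain ⟨b, hb⟩ := Ideal.Quotient.mk_surjective (f v)
  have h2 : F 0 v = Ideal.Quotient.mk _ b := by
    change Ideal.Quotient.factor h0 (f v) = _
    rw [← hb, Ideal.Quotient.factor_mk]
  rw [h2, Ideal.Quotient.eq, zero_add, pow_one] at h1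
  rw [RingHom.comp_apply, ← hb, Ideal.Quotient.eq]
  exact h1

end FormallySmoothQuotient

section PrincipalMaximalIdeal

open IsLocalRing

theorem IsLocalRing.exists_eq_unit_mul_pow {V : Type*} [CommRing V] [IsLocalRing V] {p : V}
    (hm : maximalIdeal V = Ideal.span {p}) [IsHausdorff (maximalIdeal V) V] {a : V} (ha : a ≠ 0) :
    ∃ (n : ℕ) (v : Vˣ), a = v * p ^ n := by
  classical
  have hmem (n : ℕ) (b : V) : b ∈ maximalIdeal V ^ n ↔ p ^ n ∣ b := by
    rw [hm, Ideal.span_singleton_pow, Ideal.mem_span_singleton]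
  have h1 : ∃ n, ¬ p ^ n ∣ a := by
    by_contra! h
    refine ha (IsHausdorff.haus ‹IsHausdorff (maximalIdeal V) V› a fun n => ?_)
    rw [SModEq.zero, smul_eq_mul, Ideal.mul_top, hmem]
    exact h n
  obtain ⟨n, hn, hmin⟩ : ∃ n, ¬ p ^ n ∣ a ∧ ∀ k < n, p ^ k ∣ a :=
    ⟨Nat.find h1, Nat.find_spec h1, fun k hk => not_not.1 (Nat.find_min h1 hk)⟩
  obtain _ | n := n
  · simp at hn
  obtain ⟨b, rfl⟩ := hmin n (Nat.lt_succ_self n)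
  have hb : IsUnit b := by
    by_contra hb
    have h2 : b ∈ maximalIdeal V := hb
    rw [hm, Ideal.mem_span_singleton] at h2
    exact hn (pow_succ p n ▸ mul_dvd_mul_left _ h2)
  exact ⟨n, hb.unit, by rw [mul_comm]; rfl⟩

theorem IsLocalRing.isDomain_of_maximalIdeal_eq_span {V : Type*} [CommRing V] [IsLocalRing V]
    {p : V} (hm : maximalIdeal V = Ideal.span {p}) [IsHausdorff (maximalIdeal V) V]
    (hp : ¬ IsNilpotent p) : IsDomain V := by
  have : NoZeroDivisors V := by
    refine ⟨fun {a b} hab => ?_⟩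
    by_contra! h
    obtain ⟨i, v, rfl⟩ := exists_eq_unit_mul_pow hm h.1
    obtain ⟨j, w, rfl⟩ := exists_eq_unit_mul_pow hm h.2
    refine hp ⟨i + j, ?_⟩
    rw [pow_add]
    have h1 : ((v * w : Vˣ) : V) * (p ^ i * p ^ j) = 0 := by
      rw [← hab]
      push_cast
      ring
    exact (Units.mul_right_eq_zero _).1 h1
  exact NoZeroDivisors.to_isDomain V

theorem IsLocalRing.isDiscreteValuationRing_of_maximalIdeal_eq_span {V : Type*} [CommRing V]
    [IsLocalRing V] [IsDomain V] {p : V} (hm : maximalIdeal V = Ideal.span {p})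
    [IsHausdorff (maximalIdeal V) V] (hp : p ≠ 0) : IsDiscreteValuationRing V := by
  refine IsDiscreteValuationRing.ofHasUnitMulPowIrreducibleFactorization ⟨p, ?_, fun {x} hx => ?_⟩
  · have h1 : (Ideal.span {p}).IsPrime := hm ▸ inferInstance
    exact ((Ideal.span_singleton_prime hp).1 h1).irreducible
  · obtain ⟨n, v, rfl⟩ := exists_eq_unit_mul_pow hm hx
    exact ⟨n, v, mul_comm _ _⟩

theorem IsLocalRing.formallySmooth_quotient_span_natCast {V : Type*} [CommRing V] [IsLocalRing V]
    {p : ℕ} (hp : p.Prime) (hm : maximalIdeal V = Ideal.span {(p : V)}) :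
    (algebraMap (ℤ ⧸ Ideal.span {(p : ℤ)})
      (V ⧸ (Ideal.span {(p : ℤ)}).map (algebraMap ℤ V))).FormallySmooth := by
  have h1 : (Ideal.span {(p : ℤ)}).map (algebraMap ℤ V) = maximalIdeal V := by
    rw [Ideal.map_span, hm]
    simp
  have hm1 : ((Ideal.span {(p : ℤ)}).map (algebraMap ℤ V)).IsMaximal := h1 ▸ inferInstance
  have hp' : Prime (p : ℤ) := Nat.prime_iff_prime_int.1 hp
  have hm2 : (Ideal.span {(p : ℤ)}).IsMaximal :=
    PrincipalIdealRing.isMaximal_of_irreducible hp'.irreducible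
  let _ : Field (ℤ ⧸ Ideal.span {(p : ℤ)}) := Ideal.Quotient.field _
  let _ : Field (V ⧸ (Ideal.span {(p : ℤ)}).map (algebraMap ℤ V)) := Ideal.Quotient.field _
  have : NeZero p := ⟨hp.ne_zero⟩
  have : Finite (ℤ ⧸ Ideal.span {(p : ℤ)}) :=
    Finite.of_equiv _ (Int.quotientSpanNatEquivZMod p).symm.toEquiv
  have := Algebra.FormallySmooth.of_perfectField_of_field (ℤ ⧸ Ideal.span {(p : ℤ)})
    (V ⧸ (Ideal.span {(p : ℤ)}).map (algebraMap ℤ V))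
  exact (RingHom.formallySmooth_algebraMap).2 this

theorem IsLocalRing.flat_int_of_natCast_mem {V : Type*} [CommRing V] [IsLocalRing V] [IsDomain V]
    {p : ℕ} (hp : p.Prime) (hm : (p : V) ∈ maximalIdeal V) (h0 : (p : V) ≠ 0) :
    Module.Flat ℤ V := by
  obtain ⟨q, hq⟩ := CharP.exists V
  have hq0 : q = 0 := by
    rcases CharP.char_is_prime_or_zero V q with h | h
    · exfalso
      by_cases hpq : p = q
      · exact h0 (hpq ▸ CharP.cast_eq_zero V q)
      have hc : IsCoprime (p : ℤ) (q : ℤ) :=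
        Nat.isCoprime_iff_coprime.2 ((Nat.coprime_primes hp h).2 hpq)
      obtain ⟨a, b, hab⟩ := hc
      have h2 := congrArg (Int.cast : ℤ → V) hab
      push_cast at h2
      rw [CharP.cast_eq_zero V q, mul_zero, add_zero] at h2
      exact (Ideal.ne_top_iff_one _).1 (maximalIdeal.isMaximal V).ne_top
        (h2 ▸ Ideal.mul_mem_left _ _ hm)
    · exact h
  subst hq0
  have : CharZero V := CharP.charP_to_charZero V
  infer_instance

end PrincipalMaximalIdeal

section CoefficientRing

open IsLocalRing

theorem ringKrullDim_quotient_add_le_of_isAdicComplete_of_isDiscreteValuationRing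
    {B V : Type u} [CommRing B] [IsLocalRing B] [IsAdicComplete (maximalIdeal B) B] [CommRing V]
    [IsDomain V] [IsDiscreteValuationRing V] [IsAdicComplete (maximalIdeal V) V] {p : ℕ}
    (hp : p.Prime) (hV : maximalIdeal V = Ideal.span {(p : V)}) {d : ℕ} (x : Fin d → B)
    (hx : Ideal.span {(p : B)} ⊔ Ideal.span (Set.range x) = maximalIdeal B)
    (f : V →+* B ⧸ maximalIdeal B) (hf : Function.Surjective f) :
    IsNoetherianRing B ∧ ∀ I J : Ideal B,
      ringKrullDim (B ⧸ I) + ringKrullDim (B ⧸ J) ≤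
        ((1 + d : ℕ) : WithBot ℕ∞) + ringKrullDim (B ⧸ I ⊔ J) := by
  have hp0 : (p : V) ≠ 0 := fun h => IsDiscreteValuationRing.not_a_field V (by rw [hV, h]; simp)
  have hpV : (p : V) ∈ maximalIdeal V := hV ▸ Ideal.mem_span_singleton_self _
  have hpB : (p : B) ∈ maximalIdeal B :=
    hx ▸ Ideal.mem_sup_left (Ideal.mem_span_singleton_self _)
  have hxB : Ideal.span (Set.range x) ≤ maximalIdeal B := hx ▸ le_sup_right
  have := IsLocalRing.flat_int_of_natCast_mem hp hpV hp0
  obtain ⟨g, hg⟩ := RingHom.exists_mk_comp_eq_of_isAdicComplete (maximalIdeal B)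
    (Ideal.span {(p : ℤ)}) (IsLocalRing.formallySmooth_quotient_span_natCast hp hV)
    (by rw [Ideal.map_span, Ideal.span_le]; simpa using hpB) f
  have hg1 (b : B) : ∃ w, b - g w ∈ maximalIdeal B := by
    obtain ⟨w, hw⟩ := hf (Ideal.Quotient.mk _ b)
    refine ⟨w, ?_⟩
    rw [← Ideal.Quotient.eq, ← hw, ← hg]
    rfl
  have : IsNoetherianRing B := by
    have hy : Ideal.span (Set.range (Fin.cons (p : B) x : Fin (d + 1) → B)) = maximalIdeal B := by
      rw [Fin.range_cons, Ideal.span_insert, hx]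
    have : IsHausdorff (Ideal.span (Set.range (Fin.cons (p : B) x : Fin (d + 1) → B))) B := by
      rw [hy]
      infer_instance
    obtain ⟨Φ, hΦ⟩ := MvPowerSeries.exists_surjective_of_isAdicComplete (maximalIdeal B) g
      (Fin.cons (p : B) x : Fin (d + 1) → B) (fun i => hy ▸ Ideal.subset_span ⟨i, rfl⟩)
      (by rwa [hy])
    exact isNoetherianRing_of_surjective _ _ Φ hΦ
  have : IsHausdorff (Ideal.span (Set.range x)) B := IsHausdorff.of_ideal_le hxB
  have hg2 (b : B) : ∃ w, b - g w ∈ Ideal.span (Set.range x) := by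
    let ψ : V →+* B ⧸ Ideal.span (Set.range x) := (Ideal.Quotient.mk _).comp g
    have : Nontrivial (B ⧸ Ideal.span (Set.range x)) := Ideal.Quotient.nontrivial_iff.2
      (ne_top_of_le_ne_top (maximalIdeal.isMaximal B).ne_top hxB)
    have : IsLocalRing (B ⧸ Ideal.span (Set.range x)) :=
      IsLocalRing.of_surjective' _ Ideal.Quotient.mk_surjective
    have hmap : (maximalIdeal V).map ψ =
        Ideal.span {(p : B ⧸ Ideal.span (Set.range x))} := by
      rw [hV, Ideal.map_span]
      simp
    have hle : (maximalIdeal V).map ψ ≤ maximalIdeal (B ⧸ Ideal.span (Set.range x)) := by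
      rw [maximalIdeal_quotient_eq_map, hmap, Ideal.span_singleton_le_iff_mem]
      exact map_natCast (Ideal.Quotient.mk (Ideal.span (Set.range x))) p ▸
        Ideal.mem_map_of_mem _ hpB
    have : IsHausdorff ((maximalIdeal V).map ψ) (B ⧸ Ideal.span (Set.range x)) :=
      IsHausdorff.of_ideal_le hle
    have hψ : Function.Surjective ψ := by
      refine surjective_of_mk_map_comp_surjective (I := maximalIdeal V) ψ fun c => ?_
      obtain ⟨c, rfl⟩ := Ideal.Quotient.mk_surjective c
      obtain ⟨c, rfl⟩ := Ideal.Quotient.mk_surjective c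
      obtain ⟨w, hw⟩ := hg1 c
      refine ⟨w, ?_⟩
      rw [RingHom.comp_apply, eq_comm, Ideal.Quotient.eq, RingHom.comp_apply, ← map_sub, hmap]
      rw [← hx] at hw
      have h1 := Ideal.mem_map_of_mem (Ideal.Quotient.mk (Ideal.span (Set.range x))) hw
      rw [Ideal.map_sup, Ideal.map_quotient_self, sup_bot_eq, Ideal.map_span] at h1
      simpa using h1
    obtain ⟨w, hw⟩ := hψ (Ideal.Quotient.mk _ b)
    exact ⟨w, Ideal.Quotient.eq.1 hw.symm⟩
  obtain ⟨Φ, hΦ⟩ := MvPowerSeries.exists_surjective_of_isAdicComplete (maximalIdeal B) g x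
    (fun i => hxB (Ideal.subset_span ⟨i, rfl⟩)) hg2
  refine ⟨inferInstance, ringKrullDim_quotient_add_le_of_surjective hΦ fun I J => ?_⟩
  exact MvPowerSeries.ringKrullDim_quotient_ideal_add_le_of_isDiscreteValuationRing I J

end CoefficientRing

section Completion

open IsLocalRing

theorem ringKrullDim_quotient_map_of_flat {R B : Type*} [CommRing R] [IsNoetherianRing R]
    [IsLocalRing R] [CommRing B] [IsNoetherianRing B] [IsLocalRing B] [Algebra R B]
    [Module.Flat R B] (hm : maximalIdeal B = (maximalIdeal R).map (algebraMap R B)) {I : Ideal R}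
    (hI : I ≠ ⊤) :
    ringKrullDim (B ⧸ I.map (algebraMap R B)) = ringKrullDim (R ⧸ I) := by
  have hIB : I.map (algebraMap R B) ≤ maximalIdeal B :=
    hm ▸ Ideal.map_mono (le_maximalIdeal hI)
  have := Ideal.Quotient.nontrivial_iff.2 hI
  have := Ideal.Quotient.nontrivial_iff.2
    (ne_top_of_le_ne_top (maximalIdeal.isMaximal B).ne_top hIB)
  have : IsLocalRing (R ⧸ I) := IsLocalRing.of_surjective' _ Ideal.Quotient.mk_surjective
  have : IsLocalRing (B ⧸ I.map (algebraMap R B)) :=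
    IsLocalRing.of_surjective' _ Ideal.Quotient.mk_surjective
  have := Module.Flat.quotient_map (V := B) I
  refine ringKrullDim_eq_of_flat_of_maximalIdeal_eq_map (A := R ⧸ I) ?_
  rw [maximalIdeal_quotient_eq_map, maximalIdeal_quotient_eq_map, hm, Ideal.map_map, Ideal.map_map]
  rfl

theorem ringKrullDim_quotient_add_le_of_flat {R B : Type*} [CommRing R] [IsNoetherianRing R]
    [IsLocalRing R] [CommRing B] [IsNoetherianRing B] [IsLocalRing B] [Algebra R B]
    [Module.Flat R B] (hm : maximalIdeal B = (maximalIdeal R).map (algebraMap R B))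
    {d : WithBot ℕ∞}
    (h : ∀ I J : Ideal B, ringKrullDim (B ⧸ I) + ringKrullDim (B ⧸ J) ≤
      d + ringKrullDim (B ⧸ I ⊔ J)) {I J : Ideal R} (hI : I ≠ ⊤) (hJ : J ≠ ⊤) :
    ringKrullDim (R ⧸ I) + ringKrullDim (R ⧸ J) ≤ d + ringKrullDim (R ⧸ I ⊔ J) := by
  have hIJ : I ⊔ J ≠ ⊤ := ne_top_of_le_ne_top (maximalIdeal.isMaximal R).ne_top
    (sup_le (le_maximalIdeal hI) (le_maximalIdeal hJ))
  have h1 := h (I.map (algebraMap R B)) (J.map (algebraMap R B))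
  rwa [← Ideal.map_sup, ringKrullDim_quotient_map_of_flat hm hI,
    ringKrullDim_quotient_map_of_flat hm hJ, ringKrullDim_quotient_map_of_flat hm hIJ] at h1

theorem ringKrullDim_quotient_add_le_of_span_range_eq_of_subfield {R : Type u} [CommRing R]
    [IsNoetherianRing R] [IsLocalRing R] (F : Type*) [Field F] [PerfectField F] [Algebra F R]
    {d : ℕ} (x : Fin d → R) (hx : Ideal.span (Set.range x) = maximalIdeal R) {I J : Ideal R}
    (hI : I ≠ ⊤) (hJ : J ≠ ⊤) :
    ringKrullDim (R ⧸ I) + ringKrullDim (R ⧸ J) ≤ (d : WithBot ℕ∞) + ringKrullDim (R ⧸ I ⊔ J) := by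
  let B := AdicCompletion (maximalIdeal R) R
  let _ : Algebra F B := ((algebraMap R B).comp (algebraMap F R)).toAlgebra
  have hm := AdicCompletion.maximalIdeal_eq_map (R := R)
  obtain ⟨_, h⟩ := ringKrullDim_quotient_add_le_of_isAdicComplete_of_algebra (B := B) F
    (fun i => algebraMap R B (x i)) (by
      have h1 := congrArg (Ideal.map (algebraMap R B)) hx
      rw [Ideal.map_span, ← Set.range_comp] at h1
      exact h1.trans hm.symm)
  have : Module.Flat R B := AdicCompletion.flat_of_isNoetherian _
  exact ringKrullDim_quotient_add_le_of_flat hm h hI hJ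

theorem IsLocalRing.ringKrullDim_eq_zero_of_isNilpotent {A : Type*} [CommRing A]
    [IsNoetherianRing A] [IsLocalRing A] {p : A} (hm : maximalIdeal A = Ideal.span {p})
    (hp : IsNilpotent p) : ringKrullDim A = 0 := by
  rw [← ringKrullDimZero_iff_ringKrullDim_eq_zero, ← isArtinianRing_iff_krullDimLE_zero,
    isArtinianRing_iff_isNilpotent_maximalIdeal, hm]
  obtain ⟨n, hn⟩ := hp
  exact ⟨n, by rw [Ideal.span_singleton_pow, hn]; simp⟩

theorem ringKrullDim_quotient_add_le_of_span_natCast_sup_eq {R : Type u} [CommRing R]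
    [IsNoetherianRing R] [IsLocalRing R] {p : ℕ} (hp : p.Prime) {r : ℕ} (x : Fin r → R)
    (hx : Ideal.span {(p : R)} ⊔ Ideal.span (Set.range x) = maximalIdeal R)
    (hd : ((1 + r : ℕ) : WithBot ℕ∞) ≤ ringKrullDim R) {I J : Ideal R} (hI : I ≠ ⊤) (hJ : J ≠ ⊤) :
    ringKrullDim (R ⧸ I) + ringKrullDim (R ⧸ J) ≤
      ((1 + r : ℕ) : WithBot ℕ∞) + ringKrullDim (R ⧸ I ⊔ J) := by
  have hxR : Ideal.span (Set.range x) ≤ maximalIdeal R := hx ▸ le_sup_right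
  let A := R ⧸ Ideal.span (Set.range x)
  have : Nontrivial A := Ideal.Quotient.nontrivial_iff.2
    (ne_top_of_le_ne_top (maximalIdeal.isMaximal R).ne_top hxR)
  have : IsLocalRing A := IsLocalRing.of_surjective' _ Ideal.Quotient.mk_surjective
  have hA : maximalIdeal A = Ideal.span {(p : A)} := by
    rw [maximalIdeal_quotient_eq_map, ← hx, Ideal.map_sup, Ideal.map_quotient_self, sup_bot_eq,
      Ideal.map_span, Set.image_singleton, map_natCast]
  have hpA : ¬ IsNilpotent (p : A) := fun h => by
    have h1 := ringKrullDim_quotient_le_quotient_sup_span_add (⊥ : Ideal R) x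
      (fun i => hxR (Ideal.subset_span ⟨i, rfl⟩))
    rw [bot_sup_eq, ringKrullDim_eq_of_ringEquiv (RingEquiv.quotientBot R),
      show ringKrullDim (R ⧸ Ideal.span (Set.range x)) = 0 from
        IsLocalRing.ringKrullDim_eq_zero_of_isNilpotent hA h, zero_add] at h1
    have h2 := Nat.cast_le.1 (hd.trans h1)
    lia
  let V := AdicCompletion (maximalIdeal A) A
  have hV : maximalIdeal V = Ideal.span {(p : V)} := by
    have h1 := congrArg (Ideal.map (algebraMap A V)) hA
    rw [Ideal.map_span, Set.image_singleton, map_natCast] at h1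
    exact (AdicCompletion.maximalIdeal_eq_map (R := A)).trans h1
  have hinj : Function.Injective (algebraMap A V) := AdicCompletion.of_injective _ _
  have hpV : ¬ IsNilpotent (p : V) := fun h => by
    rw [← map_natCast (algebraMap A V)] at h
    exact hpA ((IsNilpotent.map_iff hinj).1 h)
  have : IsDomain V := IsLocalRing.isDomain_of_maximalIdeal_eq_span hV hpV
  have : IsDiscreteValuationRing V :=
    IsLocalRing.isDiscreteValuationRing_of_maximalIdeal_eq_span hV
      fun h => hpV (h ▸ IsNilpotent.zero)
  let B := AdicCompletion (maximalIdeal R) R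
  have hm := AdicCompletion.maximalIdeal_eq_map (R := R)
  have : IsLocalHom (Ideal.Quotient.mk (Ideal.span (Set.range x))) :=
    IsLocalHom.of_surjective _ Ideal.Quotient.mk_surjective
  have hres : Function.Bijective
      (ResidueField.map (Ideal.Quotient.mk (Ideal.span (Set.range x)))) := by
    refine ⟨RingHom.injective _, fun y => ?_⟩
    obtain ⟨y, rfl⟩ := residue_surjective y
    obtain ⟨y, rfl⟩ := Ideal.Quotient.mk_surjective y
    exact ⟨residue R y, rfl⟩
  let e₁ := RingEquiv.ofBijective _ (AdicCompletion.residueField_map_bijective A)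
  let e₂ := RingEquiv.ofBijective _ hres
  let e₃ := RingEquiv.ofBijective _ (AdicCompletion.residueField_map_bijective R)
  let f : V →+* ResidueField B :=
    ((e₁.symm.trans (e₂.symm.trans e₃)) : ResidueField V →+* ResidueField B).comp (residue V)
  have hf : Function.Surjective f :=
    (e₁.symm.trans (e₂.symm.trans e₃)).surjective.comp residue_surjective
  obtain ⟨_, h⟩ := ringKrullDim_quotient_add_le_of_isAdicComplete_of_isDiscreteValuationRing
    (B := B) hp hV (fun i => algebraMap R B (x i)) (by
      have h1 := congrArg (Ideal.map (algebraMap R B)) hx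
      rw [Ideal.map_sup, Ideal.map_span, Ideal.map_span, ← Set.range_comp, Set.image_singleton,
        map_natCast] at h1
      exact h1.trans hm.symm) f hf
  have : Module.Flat R B := AdicCompletion.flat_of_isNoetherian _
  exact ringKrullDim_quotient_add_le_of_flat hm h hI hJ

end Completion

section Support

open IsLocalRing

theorem Module.support_tensorProduct_eq_inter {R M N : Type*} [CommRing R] [AddCommGroup M]
    [Module R M] [AddCommGroup N] [Module R N] [Module.Finite R M] [Module.Finite R N] :
    Module.support R (M ⊗[R] N) = Module.support R M ∩ Module.support R N := by
  ext P
  rw [Set.mem_inter_iff, Module.mem_support_iff_nontrivial_residueField_tensorProduct,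
    Module.mem_support_iff_nontrivial_residueField_tensorProduct,
    Module.mem_support_iff_nontrivial_residueField_tensorProduct]
  let κ := P.asIdeal.ResidueField
  rw [(TensorProduct.AlgebraTensorModule.distribBaseChange R κ M N).nontrivial_congr]
  refine ⟨fun h => ?_, fun h => ?_⟩
  · by_contra h'
    rw [not_and_or, not_nontrivial_iff_subsingleton, not_nontrivial_iff_subsingleton] at h'
    rcases h' with h' | h'
    · exact not_nontrivial_iff_subsingleton.2
        (inferInstanceAs (Subsingleton ((κ ⊗[R] M) ⊗[κ] (κ ⊗[R] N)))) h
    · exact not_nontrivial_iff_subsingleton.2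
        (inferInstanceAs (Subsingleton ((κ ⊗[R] M) ⊗[κ] (κ ⊗[R] N)))) h
  · obtain ⟨_, _⟩ := h
    exact inferInstanceAs (Nontrivial ((κ ⊗[R] M) ⊗[κ] (κ ⊗[R] N)))

theorem Module.supportDim_tensorProduct_eq {R M N : Type*} [CommRing R] [AddCommGroup M]
    [Module R M] [AddCommGroup N] [Module R N] [Module.Finite R M] [Module.Finite R N] :
    Module.supportDim R (M ⊗[R] N) =
      ringKrullDim (R ⧸ Module.annihilator R M ⊔ Module.annihilator R N) := by
  rw [Module.supportDim, ringKrullDim_quotient, Module.support_tensorProduct_eq_inter,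
    Module.support_eq_zeroLocus, Module.support_eq_zeroLocus, ← PrimeSpectrum.zeroLocus_sup]

theorem IsRegularLocalOfDim.exists_span_sup_eq {R : Type u} [CommRing R] [IsLocalRing R]
    [IsNoetherianRing R] {d : ℕ} (h : IsRegularLocalOfDim R d) {x : R} (hx : x ∈ maximalIdeal R)
    (hx2 : x ∉ maximalIdeal R ^ 2) :
    ∃ (r : ℕ) (f : Fin r → R), 1 + r = d ∧
      Ideal.span {x} ⊔ Ideal.span (Set.range f) = maximalIdeal R := by
  obtain _ | r := d
  · exfalso
    obtain ⟨⟨f, hf⟩, -⟩ := h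
    rw [← hf] at hx hx2
    simp only [Set.range_eq_empty, Ideal.span_empty] at hx hx2
    rw [Ideal.mem_bot] at hx
    exact hx2 (hx ▸ zero_mem _)
  have hle : Ideal.span {x} ≤ maximalIdeal R := (Ideal.span_singleton_le_iff_mem _).2 hx
  have : Nontrivial (R ⧸ Ideal.span {x}) := Ideal.Quotient.nontrivial_iff.2
    (ne_top_of_le_ne_top (maximalIdeal.isMaximal R).ne_top hle)
  have : IsLocalRing (R ⧸ Ideal.span {x}) :=
    IsLocalRing.of_surjective' _ Ideal.Quotient.mk_surjective
  obtain ⟨⟨g, hg⟩, -⟩ := h.quotient hx hx2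
  choose f hf using fun i => Ideal.Quotient.mk_surjective (g i)
  refine ⟨r, f, add_comm _ _, ?_⟩
  have h1 : (Ideal.span (Set.range f)).map (Ideal.Quotient.mk (Ideal.span {x})) =
      (maximalIdeal R).map (Ideal.Quotient.mk (Ideal.span {x})) := by
    rw [← maximalIdeal_quotient_eq_map, ← hg, Ideal.map_span, ← Set.range_comp]
    congr 2
    exact funext hf
  have h2 := congrArg (Ideal.comap (Ideal.Quotient.mk (Ideal.span {x}))) h1
  rwa [Ideal.comap_map_of_surjective' _ Ideal.Quotient.mk_surjective,
    Ideal.comap_map_of_surjective' _ Ideal.Quotient.mk_surjective, Ideal.mk_ker,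
    sup_eq_left.2 hle, sup_comm] at h2

theorem Subring.exists_perfectField_algebra {R : Type*} [CommRing R] {K : Subring R}
    (hK : IsField K) :
    ∃ (F : Type) (_ : Field F) (_ : PerfectField F), Nonempty (Algebra F R) := by
  let _ : Field K := hK.toField
  obtain ⟨p, hp⟩ := CharP.exists K
  rcases CharP.char_is_prime_or_zero K p with h | h
  · have : Fact p.Prime := ⟨h⟩
    let _ : Algebra (ZMod p) K := ZMod.algebra K p
    exact ⟨ZMod p, inferInstance, inferInstance, ⟨(K.subtype.comp (algebraMap _ K)).toAlgebra⟩⟩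
  · subst h
    have : CharZero K := CharP.charP_to_charZero K
    exact ⟨ℚ, inferInstance, inferInstance, ⟨(K.subtype.comp (algebraMap ℚ K)).toAlgebra⟩⟩

end Support

section UnramifiedRegular

open IsLocalRing

theorem IsRegularLocal.exists_isRegularLocalOfDim {R : Type u} [CommRing R] [IsLocalRing R]
    (hR : IsRegularLocal R) :
    ∃ d : ℕ, IsRegularLocalOfDim R d ∧ ringKrullDim R = d := by
  obtain ⟨-, s, hs, hcard⟩ := hR
  refine ⟨s.card, ⟨⟨fun i => s.equivFin.symm i, ?_⟩, hcard.le⟩, hcard.symm⟩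
  rw [← hs]
  congr 1
  ext a
  refine ⟨?_, fun ha => ⟨s.equivFin ⟨a, ha⟩, by simp⟩⟩
  rintro ⟨i, rfl⟩
  exact (s.equivFin.symm i).2

/-- Serre's dimension inequality for proper ideals of an unramified regular local ring. -/
theorem IsUnramifiedLocal.ringKrullDim_quotient_add_le {R : Type u} [CommRing R] [IsLocalRing R]
    (hR : IsRegularLocal R) (hur : IsUnramifiedLocal R) {I J : Ideal R} (hI : I ≠ ⊤)
    (hJ : J ≠ ⊤) :
    ringKrullDim (R ⧸ I) + ringKrullDim (R ⧸ J) ≤ ringKrullDim R + ringKrullDim (R ⧸ I ⊔ J) := by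
  have := hR.1
  obtain ⟨d, hreg, hd⟩ := hR.exists_isRegularLocalOfDim
  rw [hd]
  rcases hur with ⟨K, hK⟩ | ⟨-, p, hp, hchar, hp2⟩
  · obtain ⟨F, _, _, ⟨_⟩⟩ := Subring.exists_perfectField_algebra hK
    obtain ⟨⟨x, hx⟩, -⟩ := hreg
    exact ringKrullDim_quotient_add_le_of_span_range_eq_of_subfield F x hx hI hJ
  · have hpm : (p : R) ∈ maximalIdeal R := by
      rw [← residue_eq_zero_iff, map_natCast]
      exact CharP.cast_eq_zero _ p
    obtain ⟨r, x, rfl, hx⟩ := hreg.exists_span_sup_eq hpm hp2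
    exact ringKrullDim_quotient_add_le_of_span_natCast_sup_eq hp x hx hd.ge hI hJ

end UnramifiedRegular

theorem stmt_15 (R : Type u) [CommRing R] [IsLocalRing R] (hR : IsRegularLocal R)
    (hur : IsUnramifiedLocal R)
    (M N : Type u) [AddCommGroup M] [Module R M] [AddCommGroup N] [Module R N]
    [Module.Finite R M] [Module.Finite R N] [Nontrivial M] [Nontrivial N]
    (htor : ∀ i : ℕ, 0 < i →
      IsZero (((Tor (ModuleCat.{u} R) i).obj (ModuleCat.of R M)).obj (ModuleCat.of R N))) :
    moduleDim R M + moduleDim R N = ringDim R + moduleDim R (M ⊗[R] N) := by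
  have := hR.1
  simp only [moduleDim, ringDim]
  refine le_antisymm ?_ ?_
  · rw [← Module.supportDim_eq_ringKrullDim_quotient_annihilator (R := R) (M := M ⊗[R] N),
      Module.supportDim_tensorProduct_eq]
    exact hur.ringKrullDim_quotient_add_le hR
      (fun h => not_subsingleton M (Module.annihilator_eq_top_iff.1 h))
      (fun h => not_subsingleton N (Module.annihilator_eq_top_iff.1 h))
  · simp only [← Module.supportDim_eq_ringKrullDim_quotient_annihilator]
    obtain ⟨d, hreg, hd⟩ := hR.exists_isRegularLocalOfDim
    obtain ⟨⟨f, hf⟩, -⟩ := id hreg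
    have hMN : Nontrivial (M ⊗[R] N) := by
      rw [← Module.nonempty_support_iff (R := R), Module.support_tensorProduct_eq_inter]
      exact ⟨IsLocalRing.closedPoint R, IsLocalRing.closedPoint_mem_support R M,
        IsLocalRing.closedPoint_mem_support R N⟩
    obtain ⟨P, hP, hdim⟩ := Module.exists_mem_support_supportDim_le (R := R) (M ⊗[R] N)
    rw [Module.support_tensorProduct_eq_inter] at hP
    exact (add_le_add_right hdim _).trans
      (ringKrullDim_add_ringKrullDim_quotient_le_of_tor_eq_zero
        (isWeaklyRegular_ofFn_of_span_range_eq hf hreg.2)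
        ((ofList_ofFn f).trans hf) (List.length_ofFn) hd htor hP.1 hP.2)
end

section
/- Let (R,m) be a Cohen–Macaulay Noetherian local ring and M, N finitely generated R-modules with N ≠ 0. Assume: (i) the depth formula holds for M and N at every localization, i.e., for every prime q in supp(M ⊗_R N), depth M_q + depth N_q = depth R_q + depth (M ⊗_R N)_q; (ii) (DI) holds at every localization: for every prime q and all nonzero finitely generated R_q-modules A and B with pd_{R_q} B < ∞ and A ⊗_{R_q} B of finite length, dim A + dim B ≤ dim R_q; (iii) there exists a finitely generated R-module L with pd_R L < ∞ and supp L = supp N. If M ⊗_R N satisfies Serre's condition S_n, i.e., depth (M ⊗_R N)_p ≥ min{n, ht p} for every prime p in supp(M ⊗_R N), then every prime p ∈ supp M with ht p < n belongs to supp N. -/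
/-!
STATEMENT 18: Let `R` be a Cohen–Macaulay Noetherian local ring and `M`, `N` finitely generated
with `N ≠ 0`. Assume (i) the depth formula for `M`, `N` holds at every localization at a prime
of `supp (M ⊗ N)`, (ii) (DI) holds at every localization, and (iii) there is a finitely
generated module `L` of finite projective dimension with `supp L = supp N`. If `M ⊗_R N`
satisfies Serre's condition `S_n`, then every prime `p ∈ supp M` with `ht p < n` lies in
`supp N`.
-/

open CategoryTheory CategoryTheory.Limits

open scoped TensorProduct

universe u

/-- The depth of a module over a Noetherian local ring: the supremum of lengths of `M`-regular
sequences of elements of the maximal ideal. -/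
noncomputable def moduleDepth (R : Type u) [CommRing R] [IsLocalRing R]
    (M : Type u) [AddCommGroup M] [Module R M] : ℕ∞ :=
  sSup {n : ℕ∞ | ∃ rs : List R, n = (rs.length : ℕ∞) ∧
    (∀ x ∈ rs, x ∈ IsLocalRing.maximalIdeal R) ∧ RingTheory.Sequence.IsRegular M rs}

/-- A module has finite projective dimension iff for some `n` the functors `Ext^i(M, -)`
vanish for all `i > n`. -/
def HasFinitePD (R : Type u) [CommRing R] (M : Type u) [AddCommGroup M] [Module R M] : Prop :=
  ∃ n : ℕ, ∀ i : ℕ, n < i → ∀ L : ModuleCat.{u} R,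
    IsZero (((Ext R (ModuleCat.{u} R) i).obj (Opposite.op (ModuleCat.of R M))).obj L)


section FiniteProjectiveDimension

variable {R : Type u} [CommRing R]

/-- Vanishing of the derived-functor `Ext` in positive degree, read off a projective resolution. -/
lemma isZero_Ext_succ_iff {X : ModuleCat.{u} R} (P : ProjectiveResolution X)
    (Y : ModuleCat.{u} R) (k : ℕ) :
    IsZero (((Ext R (ModuleCat.{u} R) (k + 1)).obj (Opposite.op X)).obj Y) ↔
      ∀ f : P.complex.X (k + 1) ⟶ Y, P.complex.d (k + 2) (k + 1) ≫ f = 0 →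
        ∃ g : P.complex.X k ⟶ Y, P.complex.d (k + 1) k ≫ g = f := by
  rw [(P.isoExt (R := R) (k + 1) Y).isZero_iff, ← HomologicalComplex.exactAt_iff_isZero_homology,
    HomologicalComplex.exactAt_iff' _ k (k + 1) (k + 2) (by simp) (by simp),
    ShortComplex.moduleCat_exact_iff]
  rfl

/-- Vanishing of the derived-category `Ext` in positive degree, read off a projective resolution. -/
lemma forall_abelianExt_succ_eq_zero_iff {X : ModuleCat.{u} R} (P : ProjectiveResolution X)
    (Y : ModuleCat.{u} R) (k : ℕ) :
    (∀ e : Abelian.Ext.{u} X Y (k + 1), e = 0) ↔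
      ∀ f : P.complex.X (k + 1) ⟶ Y, P.complex.d (k + 2) (k + 1) ≫ f = 0 →
        ∃ g : P.complex.X k ⟶ Y, P.complex.d (k + 1) k ≫ g = f := by
  refine ⟨fun h f hf ↦ (P.extMk_eq_zero_iff f (k + 2) rfl hf k rfl).mp (h _), fun h e ↦ ?_⟩
  obtain ⟨f, hf, rfl⟩ := P.extMk_surjective e (k + 2) rfl
  exact (P.extMk_eq_zero_iff f (k + 2) rfl hf k rfl).mpr (h f hf)

lemma hasFinitePD_iff_exists_hasProjectiveDimensionLE (M : Type u) [AddCommGroup M] [Module R M] :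
    HasFinitePD R M ↔ ∃ n, HasProjectiveDimensionLE (ModuleCat.of R M) n := by
  have P := projectiveResolution (ModuleCat.of R M)
  refine exists_congr fun n ↦ ?_
  rw [HasProjectiveDimensionLE, hasProjectiveDimensionLT_iff.{u}]
  refine forall_congr' fun i ↦ forall_congr' fun hi ↦ forall_congr' fun Y ↦ ?_
  obtain ⟨k, rfl⟩ := Nat.exists_eq_succ_of_ne_zero (Nat.ne_zero_of_lt hi)
  exact (isZero_Ext_succ_iff P Y k).trans (forall_abelianExt_succ_eq_zero_iff P Y k).symm

lemma HasFinitePD.localizedModule {M : Type u} [AddCommGroup M] [Module R M]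
    (h : HasFinitePD R M) (S : Submonoid R) :
    HasFinitePD (Localization S) (LocalizedModule S M) := by
  rw [hasFinitePD_iff_exists_hasProjectiveDimensionLE] at h ⊢
  obtain ⟨n, hn⟩ := h
  refine ⟨n, ?_⟩
  have := ModuleCat.localizedModule_hasProjectiveDimensionLE n S (ModuleCat.of R M)
  rw [← projectiveDimension_le_iff] at this ⊢
  exact (ModuleCat.projectiveDimension_eq_of_linearEquiv (Shrink.linearEquiv _ _)).symm.trans_le
    this

end FiniteProjectiveDimension

section RegularSequences

open RingTheory.Sequence IsLocalRing Pointwise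

theorem maximalIdeal_smul_top_lt_top {R : Type u} [CommRing R] [IsLocalRing R] (M : Type u)
    [AddCommGroup M] [Module R M] [Module.Finite R M] [Nontrivial M] :
    maximalIdeal R • (⊤ : Submodule R M) < ⊤ :=
  (Submodule.top_ne_ideal_smul_of_le_jacobson_annihilator
    (maximalIdeal_le_jacobson (Module.annihilator R M))).symm.lt_top

variable {R : Type u} [CommRing R] [IsLocalRing R] [IsNoetherianRing R]

/-- If `M` has a regular sequence of length `n + 1`, then `M/xM` has one of length `n` for every
`M`-regular element `x` of the maximal ideal. -/
theorem exists_isRegular_quotSMulTop {M : Type u} [AddCommGroup M] [Module R M]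
    [Module.Finite R M] [Nontrivial M] {x : R} (hxm : x ∈ maximalIdeal R)
    (hx : IsSMulRegular M x) {n : ℕ} {rs : List R} (hlen : rs.length = n + 1)
    (hmem : ∀ r ∈ rs, r ∈ maximalIdeal R) (hreg : IsRegular M rs) :
    ∃ rs' : List R, rs'.length = n ∧ (∀ r ∈ rs', r ∈ maximalIdeal R) ∧
      IsRegular (QuotSMulTop x M) rs' := by
  have : Nontrivial (QuotSMulTop x M) := nontrivial_quotSMulTop_of_mem_maximalIdeal M hxm
  have hsupp : Module.support R (R ⧸ maximalIdeal R) =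
      PrimeSpectrum.zeroLocus (maximalIdeal R : Set R) := by
    rw [Module.support_eq_zeroLocus, Ideal.annihilator_quotient]
  let K := ModuleCat.of R (R ⧸ maximalIdeal R)
  have hx' : IsSMulRegular (ModuleCat.of R M) x := hx
  have hext := ModuleCat.subsingleton_ext_of_exists_isRegular (maximalIdeal R) K hsupp.subset
    (ModuleCat.of R M) (maximalIdeal_smul_top_lt_top M) rs hmem hreg
  refine ModuleCat.exists_isRegular_of_exists_subsingleton_ext (maximalIdeal R) n
    (ModuleCat.of R (QuotSMulTop x M)) (maximalIdeal_smul_top_lt_top _) K hsupp fun i hi ↦ ?_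
  have zero1 := AddCommGrpCat.isZero_of_iff_subsingleton.mpr (hext i (by lia))
  have zero2 := AddCommGrpCat.isZero_of_iff_subsingleton.mpr (hext (i + 1) (by lia))
  exact AddCommGrpCat.subsingleton_of_isZero <| ShortComplex.Exact.isZero_of_both_zeros
    ((Abelian.Ext.covariant_sequence_exact₃' K hx'.smulShortComplex_shortExact) i (i + 1) rfl)
    (zero1.eq_zero_of_src _) (zero2.eq_zero_of_tgt _)

theorem exists_le_mem_associatedPrimes_quotSMulTop {M : Type u} [AddCommGroup M] [Module R M]
    [Module.Finite R M] {P : Ideal R} (hP : P ∈ associatedPrimes R M) {x : R}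
    (hxm : x ∈ maximalIdeal R) (hx : IsSMulRegular M x) :
    ∃ Q ∈ associatedPrimes R (QuotSMulTop x M), P ≤ Q ∧ x ∈ Q := by
  let T : Submodule R M := Submodule.torsionBySet R M P
  have hT : T ≠ ⊥ := by
    obtain ⟨hPp, y, hy⟩ := isAssociatedPrime_iff.mp hP
    intro h
    have hyT : y ∈ T := by
      rw [Submodule.mem_torsionBySet_iff]
      rintro ⟨a, ha⟩
      have : a ∈ P := ha
      rw [hy, Submodule.mem_colon_singleton] at this
      simpa using this
    rw [h, Submodule.mem_bot] at hyT
    subst hyT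
    apply hPp.ne_top
    rw [hy, Ideal.eq_top_iff_one, Submodule.mem_colon_singleton]
    simp
  have hTx : ¬ T ≤ x • (⊤ : Submodule R M) := by
    intro h
    refine hT (Submodule.eq_bot_of_le_smul_of_le_jacobson_bot (Ideal.span {x}) T
      (IsNoetherian.noetherian T) ?_ ?_)
    · intro t ht
      obtain ⟨s, -, rfl⟩ := h ht
      rw [Submodule.ideal_span_singleton_smul]
      refine Submodule.smul_mem_pointwise_smul _ _ _ ?_
      rw [Submodule.mem_torsionBySet_iff] at ht ⊢
      intro a
      apply hx
      have := ht a
      simp only [DistribSMul.toLinearMap_apply, smul_zero] at this ⊢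
      rwa [smul_comm]
    · rw [Ideal.span_singleton_le_iff_mem, jacobson_eq_maximalIdeal _ bot_ne_top]
      exact hxm
  obtain ⟨t, htT, ht⟩ := Set.not_subset.mp hTx
  have hne : (Submodule.Quotient.mk t : QuotSMulTop x M) ≠ 0 := by
    rwa [Ne, Submodule.Quotient.mk_eq_zero]
  obtain ⟨Q, hQ, hle⟩ := exists_le_isAssociatedPrime_of_isNoetherianRing R _ hne
  refine ⟨Q, hQ, fun a ha ↦ hle ?_, hle ?_⟩
  · have := (Submodule.mem_torsionBySet_iff _ _).mp htT ⟨a, ha⟩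
    simp only at this
    rw [Submodule.mem_colon_singleton, Submodule.mem_bot, ← Submodule.Quotient.mk_smul, this,
      Submodule.Quotient.mk_zero]
  · rw [Submodule.mem_colon_singleton, Submodule.mem_bot, ← Submodule.Quotient.mk_smul,
      Submodule.Quotient.mk_eq_zero]
    exact Submodule.smul_mem_pointwise_smul _ _ _ trivial

theorem length_le_ringKrullDim_quotient_of_mem_associatedPrimes {rs : List R} :
    ∀ {M : Type u} [AddCommGroup M] [Module R M] [Module.Finite R M]
      {P : Ideal R}, P ∈ associatedPrimes R M → (∀ r ∈ rs, r ∈ maximalIdeal R) →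
      IsRegular M rs → (rs.length : WithBot ℕ∞) ≤ ringKrullDim (R ⧸ P) := by
  induction rs with
  | nil =>
    intro M _ _ _ P hP _ _
    have := hP.isPrime
    simpa using ringKrullDim_nonneg_of_nontrivial
  | cons x rs ih =>
    intro M _ _ _ P hP hmem hreg
    have := hP.isPrime
    rw [isRegular_cons_iff] at hreg
    simp only [List.mem_cons, forall_eq_or_imp] at hmem
    obtain ⟨Q, hQ, hPQ, hxQ⟩ := exists_le_mem_associatedPrimes_quotSMulTop hP hmem.1 hreg.1
    have hxP : x ∉ P := fun h ↦ by
      have : x ∈ ⋃ p ∈ associatedPrimes R M, (p : Set R) := Set.mem_biUnion hP h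
      rw [biUnion_associatedPrimes_eq_compl_regular] at this
      exact this hreg.1
    have hx : Ideal.Quotient.mk P x ∈ nonZeroDivisors (R ⧸ P) := by
      rw [mem_nonZeroDivisors_iff_ne_zero, Ne, Ideal.Quotient.eq_zero_iff_mem]
      exact hxP
    have := ringKrullDim_succ_le_of_surjective (Ideal.Quotient.factor hPQ)
      (Ideal.Quotient.factor_surjective hPQ) hx
      (by simpa [Ideal.Quotient.eq_zero_iff_mem] using hxQ)
    refine le_trans ?_ this
    push_cast [List.length_cons]
    gcongr
    exact ih hQ hmem.2 hreg.2

/-- If `M` is Cohen–Macaulay of dimension `n`, every prime `p` of its support contains a weakly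
regular sequence of length at least `n - dim R/p`. -/
theorem exists_isWeaklyRegular_mem_of_supportDim_le (n : ℕ) :
    ∀ {M : Type u} [AddCommGroup M] [Module R M] [Module.Finite R M] [Nontrivial M]
      {rs : List R}, rs.length = n → (∀ r ∈ rs, r ∈ maximalIdeal R) → IsRegular M rs →
      Module.supportDim R M ≤ n → ∀ p ∈ Module.support R M,
      ∃ xs : List R, (∀ x ∈ xs, x ∈ p.asIdeal) ∧ IsWeaklyRegular M xs ∧
        (n : WithBot ℕ∞) ≤ xs.length + ringKrullDim (R ⧸ p.asIdeal) := by
  induction n with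
  | zero =>
    intro M _ _ _ _ rs _ _ _ _ p _
    exact ⟨[], by simp, by simp, by simpa using ringKrullDim_nonneg_of_nontrivial⟩
  | succ n ih =>
    intro M _ _ _ _ rs hlen hmem hreg hdim p hp
    by_cases h : ∃ x ∈ p.asIdeal, IsSMulRegular M x
    · obtain ⟨x, hxp, hx⟩ := h
      have hxm : x ∈ maximalIdeal R := le_maximalIdeal p.isPrime.ne_top hxp
      have : Nontrivial (QuotSMulTop x M) := nontrivial_quotSMulTop_of_mem_maximalIdeal M hxm
      obtain ⟨rs', hlen', hmem', hreg'⟩ :=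
        exists_isRegular_quotSMulTop hxm hx hlen hmem hreg
      have hdim' : Module.supportDim R (QuotSMulTop x M) ≤ n := by
        rw [← Module.supportDim_quotSMulTop_succ_eq_supportDim hx hxm] at hdim
        push_cast at hdim
        exact ENat.WithBot.add_le_add_one_right_iff.mp hdim
      obtain ⟨xs, hxs, hreg, hle⟩ := ih hlen' hmem' hreg' hdim' p (by
        rw [Module.support_quotSMulTop]
        exact ⟨hp, by simpa [PrimeSpectrum.mem_zeroLocus] using hxp⟩)
      refine ⟨x :: xs, by simpa using ⟨hxp, hxs⟩, by simpa using ⟨hx, hreg⟩, ?_⟩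
      push_cast [List.length_cons]
      rw [add_right_comm]
      gcongr
    · push Not at h
      have hsub : (p.asIdeal : Set R) ⊆ ⋃ P ∈ associatedPrimes R M, (P : Set R) := by
        rw [biUnion_associatedPrimes_eq_compl_regular]
        exact fun x hx ↦ h x hx
      obtain ⟨P, hP, hle⟩ := (Ideal.subset_union_prime_finite
        (associatedPrimes.finite R M) (f := id) 0 0 (fun P hP _ _ ↦ hP.isPrime)).mp hsub
      refine ⟨[], by simp, by simp, ?_⟩
      have := length_le_ringKrullDim_quotient_of_mem_associatedPrimes hP hmem hreg
      rw [hlen] at this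
      simpa using this.trans
        (ringKrullDim_le_of_surjective _ (Ideal.Quotient.factor_surjective hle))

end RegularSequences

section Depth

open RingTheory.Sequence IsLocalRing

theorem height_add_ringKrullDim_quotient_le {R : Type u} [CommRing R] (p : Ideal R)
    [hp : p.IsPrime] :
    (p.height : WithBot ℕ∞) + ringKrullDim (R ⧸ p) ≤ ringKrullDim R := by
  let P : PrimeSpectrum R := ⟨p, hp⟩
  have h1 : ringKrullDim (R ⧸ p) = Order.coheight P := by
    rw [ringKrullDim_quotient, Order.coheight_eq_krullDim_Ici]
    rfl
  have : Nonempty (PrimeSpectrum R) := ⟨P⟩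
  rw [h1, ringKrullDim, Order.krullDim_eq_iSup_height_add_coheight_of_nonempty,
    show p.height = Order.height P from P.height_eq_orderHeight, ← WithBot.coe_add,
    WithBot.coe_le_coe]
  exact le_iSup (fun a : PrimeSpectrum R ↦ Order.height a + Order.coheight a) P

variable {R : Type u} [CommRing R] [IsLocalRing R]

theorem length_le_moduleDepth {M : Type u}
    [AddCommGroup M] [Module R M] {rs : List R}
    (hmem : ∀ x ∈ rs, x ∈ maximalIdeal R) (hreg : IsRegular M rs) :
    (rs.length : ℕ∞) ≤ moduleDepth R M :=
  le_sSup ⟨rs, rfl, hmem, hreg⟩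

theorem exists_isRegular_length_eq {M : Type u} [AddCommGroup M] [Module R M]
    [Nontrivial M] {d : ℕ} (hd : moduleDepth R M = d) :
    ∃ rs : List R, rs.length = d ∧ (∀ x ∈ rs, x ∈ maximalIdeal R) ∧ IsRegular M rs := by
  set s := {n : ℕ∞ | ∃ rs : List R, n = (rs.length : ℕ∞) ∧
    (∀ x ∈ rs, x ∈ maximalIdeal R) ∧ IsRegular M rs}
  have hd' : sSup s = d := hd
  have hsne : s.Nonempty := ⟨0, [], by simp, by simp, IsRegular.nil R M⟩
  have : Nonempty s := hsne.to_subtype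
  obtain ⟨rs, h, hmem, hreg⟩ :=
    ENat.sSup_mem_of_nonempty_of_lt_top (hd' ▸ ENat.natCast_lt_top d : sSup s < ⊤)
  refine ⟨rs, ?_, hmem, hreg⟩
  rw [hd'] at h
  exact_mod_cast h.symm

variable [IsNoetherianRing R]

theorem exists_ringKrullDim_eq_natCast (R : Type u) [CommRing R] [IsLocalRing R]
    [IsNoetherianRing R] : ∃ d : ℕ, ringKrullDim R = d := by
  rw [← maximalIdeal_height_eq_ringKrullDim]
  obtain ⟨d, hd⟩ := ENat.ne_top_iff_exists.mp 
    (Ideal.height_ne_top_of_isPrime (I := maximalIdeal R))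
  exact ⟨d, by rw [← hd]; rfl⟩

theorem length_le_supportDim {M : Type u} [AddCommGroup M] [Module R M] [Module.Finite R M]
    {rs : List R} (hreg : IsRegular M rs) :
    (rs.length : WithBot ℕ∞) ≤ Module.supportDim R M := by
  rw [← Module.supportDim_add_length_eq_supportDim_of_isRegular rs hreg]
  have : Nontrivial (M ⧸ Ideal.ofList rs • (⊤ : Submodule R M)) :=
    Submodule.Quotient.nontrivial_iff.mpr hreg.top_ne_smul.symm
  refine le_add_of_nonneg_left (Order.krullDim_nonneg_iff.mpr ?_)
  exact (Module.nonempty_support_of_nontrivial (R := R)).to_subtype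

theorem moduleDepth_le_supportDim (M : Type u) [AddCommGroup M] [Module R M]
    [Module.Finite R M] [Nontrivial M] :
    (moduleDepth R M : WithBot ℕ∞) ≤ Module.supportDim R M := by
  obtain ⟨e, he⟩ := WithBot.ne_bot_iff_exists.mp (Module.supportDim_ne_bot_of_nontrivial R M)
  rw [← he, WithBot.coe_le_coe]
  refine sSup_le ?_
  rintro _ ⟨rs, rfl, -, hreg⟩
  have := length_le_supportDim hreg
  rw [← he] at this
  exact WithBot.coe_le_coe.mp this

/-- The localization of a Cohen–Macaulay local ring at a prime `p` is Cohen–Macaulay, and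
`dim R ≤ ht p + dim R/p`. -/
theorem localization_of_moduleDepth_eq_ringKrullDim
    (hCM : (moduleDepth R R : WithBot ℕ∞) = ringKrullDim R) (p : Ideal R) [hp : p.IsPrime] :
    (moduleDepth (Localization.AtPrime p) (Localization.AtPrime p) : WithBot ℕ∞) =
        ringKrullDim (Localization.AtPrime p) ∧
      ringKrullDim R ≤ p.height + ringKrullDim (R ⧸ p) := by
  obtain ⟨d, hd⟩ := exists_ringKrullDim_eq_natCast R
  have hdepth : moduleDepth R R = d := by
    rw [hd] at hCM
    exact WithBot.coe_eq_coe.mp hCM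
  obtain ⟨rs, hlen, hmem, hreg⟩ := exists_isRegular_length_eq hdepth
  obtain ⟨xs, hxs, hxreg, hle⟩ := exists_isWeaklyRegular_mem_of_supportDim_le d hlen hmem hreg
    (by rw [Module.supportDim_self_eq_ringKrullDim, hd]) ⟨p, hp⟩
    (by simp [Module.support_eq_zeroLocus, Module.annihilator_eq_bot.mpr inferInstance])
  have hlocal : IsNoetherianRing (Localization.AtPrime p) :=
    IsLocalization.isNoetherianRing p.primeCompl _ inferInstance
  have hloc := hxreg.isRegular_of_isLocalization_of_mem (Localization.AtPrime p) p hxs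
  have hxs_le := length_le_moduleDepth (fun x hx ↦ by
    obtain ⟨r, hr, rfl⟩ := List.mem_map.mp hx
    exact (IsLocalization.AtPrime.to_map_mem_maximal_iff _ p r).mpr (hxs r hr)) hloc
  rw [List.length_map] at hxs_le
  have hdim := moduleDepth_le_supportDim (R := Localization.AtPrime p) (Localization.AtPrime p)
  rw [Module.supportDim_self_eq_ringKrullDim] at hdim
  have hht := IsLocalization.AtPrime.ringKrullDim_eq_height p (Localization.AtPrime p)
  have hxs_ht : (xs.length : WithBot ℕ∞) ≤ p.height := by
    rw [← hht]
    exact le_trans (WithBot.coe_le_coe.mpr hxs_le) hdim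
  have hquot : IsLocalRing (R ⧸ p) :=
    .of_surjective' (Ideal.Quotient.mk p) Ideal.Quotient.mk_surjective
  obtain ⟨c, hc⟩ := exists_ringKrullDim_eq_natCast (R ⧸ p)
  have hupper := height_add_ringKrullDim_quotient_le p
  simp only at hle
  rw [hc, hd] at hupper
  rw [hc] at hle
  refine ⟨le_antisymm hdim ?_, ?_⟩
  · rw [hht]
    exact (ENat.WithBot.add_le_add_natCast_right_iff.mp (hupper.trans hle)).trans
      (WithBot.coe_le_coe.mpr hxs_le)
  · rw [hc, hd]
    exact hle.trans (by gcongr)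

end Depth

section Support

theorem Module.support_tensorProduct {R : Type u} [CommRing R] (M N : Type u) [AddCommGroup M]
    [Module R M] [AddCommGroup N] [Module R N] [Module.Finite R M] [Module.Finite R N] :
    Module.support R (M ⊗[R] N) = Module.support R M ∩ Module.support R N := by
  ext p
  let K := p.asIdeal.ResidueField
  rw [Set.mem_inter_iff, mem_support_iff_nontrivial_residueField_tensorProduct,
    mem_support_iff_nontrivial_residueField_tensorProduct,
    mem_support_iff_nontrivial_residueField_tensorProduct,
    (TensorProduct.AlgebraTensorModule.distribBaseChange R K M N).nontrivial_congr]
  refine ⟨fun h ↦ ⟨?_, ?_⟩, fun ⟨_, _⟩ ↦ inferInstance⟩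
  · by_contra hM
    rw [not_nontrivial_iff_subsingleton] at hM
    exact not_subsingleton (K ⊗[R] M ⊗[K] (K ⊗[R] N)) inferInstance
  · by_contra hN
    rw [not_nontrivial_iff_subsingleton] at hN
    exact not_subsingleton (K ⊗[R] M ⊗[K] (K ⊗[R] N)) inferInstance

theorem Module.support_localizedModule {R : Type u} [CommRing R] (S : Submonoid R) (M : Type u)
    [AddCommGroup M] [Module R M] :
    Module.support (Localization S) (LocalizedModule S M) =
      PrimeSpectrum.comap (algebraMap R (Localization S)) ⁻¹' Module.support R M := by
  ext P
  rw [Set.mem_preimage, Module.mem_support_iff', Module.mem_support_iff']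
  constructor
  · rintro ⟨y, hy⟩
    induction y using LocalizedModule.induction_on with
    | _ m s =>
      refine ⟨m, fun r hr h0 ↦ hy (algebraMap R _ r) hr ?_⟩
      rw [algebraMap_smul, LocalizedModule.smul'_mk, h0, LocalizedModule.zero_mk]
  · rintro ⟨m, hm⟩
    refine ⟨LocalizedModule.mk m 1, fun z hz h0 ↦ ?_⟩
    obtain ⟨r, s, rfl⟩ := IsLocalization.exists_mk'_eq S z
    rw [← Localization.mk_eq_mk', LocalizedModule.mk_smul_mk, ← LocalizedModule.zero_mk 1,
      LocalizedModule.mk_eq] at h0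
    obtain ⟨c, hc⟩ := h0
    refine hm (c * r) (fun hcr ↦ ?_) (by simpa [mul_smul, Submonoid.smul_def] using hc)
    rw [PrimeSpectrum.comap_asIdeal, Ideal.mem_comap, map_mul] at hcr
    rcases P.isPrime.mem_or_mem hcr with h | h
    · exact P.isPrime.ne_top (Ideal.eq_top_of_isUnit_mem _ h (IsLocalization.map_units _ c))
    · exact hz (by rwa [IsLocalization.mk'_mem_iff])

theorem isFiniteLength_of_support_subset {R : Type u} [CommRing R] [IsLocalRing R]
    [IsNoetherianRing R] {M : Type u} [AddCommGroup M] [Module R M] [hM : Module.Finite R M]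
    (h : Module.support R M ⊆ {IsLocalRing.closedPoint R}) : IsFiniteLength R M := by
  rw [← Module.length_ne_top_iff]
  induction hM using IsNoetherianRing.induction_on_isQuotientEquivQuotientPrime R with
  | subsingleton N => simp
  | quotient N p e =>
    have hp : p = IsLocalRing.closedPoint R := h (by
      rw [e.support_eq, Module.mem_support_iff_of_finite, Ideal.annihilator_quotient])
    have : IsSimpleModule R N := by
      subst hp
      rw [isSimpleModule_iff_quot_maximal]
      exact ⟨_, IsLocalRing.maximalIdeal.isMaximal R, ⟨e⟩⟩
    simp
  | exact N₁ N₂ N₃ f g hf hg hfg h₁ h₃ =>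
    rw [Module.support_of_exact hfg hf hg, Set.union_subset_iff] at h
    rw [Module.length_eq_add_of_exact f g hf hg hfg]
    exact WithTop.add_ne_top.mpr ⟨h₁ h.1, h₃ h.2⟩

end Support

theorem moduleDim_eq_supportDim (R : Type u) [CommRing R] (M : Type u) [AddCommGroup M]
    [Module R M] [Module.Finite R M] : moduleDim R M = Module.supportDim R M :=
  (Module.supportDim_eq_ringKrullDim_quotient_annihilator R M).symm

theorem stmt_18 (R : Type u) [CommRing R] [IsLocalRing R] [IsNoetherianRing R]
    (hCM : (moduleDepth R R : WithBot ℕ∞) = ringDim R)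
    (M N : Type u) [AddCommGroup M] [Module R M] [AddCommGroup N] [Module R N]
    [Module.Finite R M] [Module.Finite R N] [Nontrivial N]
    (n : ℕ)
    (hdepthformula : ∀ q ∈ Module.support R (M ⊗[R] N),
      moduleDepth (Localization.AtPrime q.asIdeal)
          (LocalizedModule q.asIdeal.primeCompl M) +
        moduleDepth (Localization.AtPrime q.asIdeal)
          (LocalizedModule q.asIdeal.primeCompl N) =
      moduleDepth (Localization.AtPrime q.asIdeal) (Localization.AtPrime q.asIdeal) +
        moduleDepth (Localization.AtPrime q.asIdeal)
          (LocalizedModule q.asIdeal.primeCompl (M ⊗[R] N)))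
    (hDIloc : ∀ (q : Ideal R) [q.IsPrime],
      ∀ (A B : Type u) [AddCommGroup A] [Module (Localization.AtPrime q) A]
        [AddCommGroup B] [Module (Localization.AtPrime q) B]
        [Module.Finite (Localization.AtPrime q) A] [Module.Finite (Localization.AtPrime q) B]
        [Nontrivial A] [Nontrivial B],
        HasFinitePD (Localization.AtPrime q) B →
        IsFiniteLength (Localization.AtPrime q) (A ⊗[Localization.AtPrime q] B) →
        moduleDim (Localization.AtPrime q) A + moduleDim (Localization.AtPrime q) B ≤
          ringDim (Localization.AtPrime q))
    (hL : ∃ (L : Type u) (_ : AddCommGroup L) (_ : Module R L),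
      Module.Finite R L ∧ HasFinitePD R L ∧ Module.support R L = Module.support R N)
    (hSn : ∀ p ∈ Module.support R (M ⊗[R] N),
      min (n : ℕ∞) (Order.height p) ≤
        moduleDepth (Localization.AtPrime p.asIdeal)
          (LocalizedModule p.asIdeal.primeCompl (M ⊗[R] N))) :
    ∀ p ∈ Module.support R M, Order.height p < (n : ℕ∞) → p ∈ Module.support R N := by
  intro p hpM hpn
  by_contra hpN
  obtain ⟨L, _, _, _, hLpd, hLsupp⟩ := hL
  have hI : p.asIdeal ⊔ Module.annihilator R N ≤ IsLocalRing.maximalIdeal R :=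
    sup_le (IsLocalRing.le_maximalIdeal p.isPrime.ne_top)
      (Module.annihilator_le_of_mem_support (IsLocalRing.closedPoint_mem_support R N))
  obtain ⟨q, hq, -⟩ := Ideal.exists_minimalPrimes_le hI
  obtain ⟨Q, rfl⟩ : ∃ Q : PrimeSpectrum R, Q.asIdeal = q := ⟨⟨q, hq.1.1⟩, rfl⟩
  have hpQ : p.asIdeal ≤ Q.asIdeal := le_sup_left.trans hq.1.2
  have hQM : Q ∈ Module.support R M := Module.mem_support_mono hpQ hpM
  have hQN : Q ∈ Module.support R N :=
    Module.mem_support_iff_of_finite.mpr (le_sup_right.trans hq.1.2)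
  have hQ : Q ∈ Module.support R (M ⊗[R] N) := by
    rw [Module.support_tensorProduct]
    exact ⟨hQM, hQN⟩
  have hlt : p < Q := lt_of_le_of_ne hpQ fun h ↦ hpN (h ▸ hQN)
  let S := Q.asIdeal.primeCompl
  let A := Localization.AtPrime Q.asIdeal
  have : IsNoetherianRing A := IsLocalization.isNoetherianRing S A inferInstance
  have : Nontrivial (LocalizedModule S M) := hQM
  have : Nontrivial (LocalizedModule S N) := hQN
  have : Nontrivial (LocalizedModule S L) := Module.mem_support_iff.mp (hLsupp ▸ hQN)
  have hdisj : Disjoint (S : Set R) (p.asIdeal : Set R) :=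
    Set.disjoint_left.mpr fun x hx hxp ↦ hx (hpQ hxp)
  let p' : Ideal A := p.asIdeal.map (algebraMap R A)
  have hp' : p'.IsPrime := IsLocalization.isPrime_of_isPrime_disjoint S A _ p.isPrime hdisj
  have hheight : p'.height = Order.height p :=
    (IsLocalization.height_map_of_disjoint S p.asIdeal hdisj).trans p.height_eq_orderHeight
  obtain ⟨hCMQ, -⟩ := localization_of_moduleDepth_eq_ringKrullDim hCM Q.asIdeal
  obtain ⟨-, hA⟩ := localization_of_moduleDepth_eq_ringKrullDim hCMQ p'
  have hsupp : Module.support A (LocalizedModule S L) =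
      Module.support A (LocalizedModule S N) := by
    rw [Module.support_localizedModule, Module.support_localizedModule, hLsupp]
  have hfl : IsFiniteLength A ((A ⧸ p') ⊗[A] LocalizedModule S L) := by
    refine isFiniteLength_of_support_subset fun P hP ↦ ?_
    rw [Module.support_tensorProduct, Module.support_localizedModule, hLsupp] at hP
    have hle : p' ≤ P.asIdeal := by
      simpa [Ideal.annihilator_quotient] using Module.annihilator_le_of_mem_support hP.1
    have hQP : Q.asIdeal ≤ P.asIdeal.comap (algebraMap R A) :=
      hq.2 ⟨inferInstance, sup_le (Ideal.map_le_iff_le_comap.mp hle)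
        (Module.annihilator_le_of_mem_support hP.2)⟩ fun r hr ↦ by
          by_contra hrQ
          exact P.isPrime.ne_top (Ideal.eq_top_of_isUnit_mem _ hr
            (IsLocalization.map_units A (⟨r, hrQ⟩ : S)))
    refine Set.mem_singleton_iff.mpr (PrimeSpectrum.ext ?_)
    refine le_antisymm (IsLocalRing.le_maximalIdeal P.isPrime.ne_top) ?_
    rw [← Ideal.map_le_iff_le_comap, Localization.AtPrime.map_eq_maximalIdeal] at hQP
    exact hQP
  have hDI := hDIloc Q.asIdeal (A ⧸ p') (LocalizedModule S L) (hLpd.localizedModule S) hfl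
  have hdimN : Module.supportDim A (LocalizedModule S N) ≤ Order.height p := by
    rw [moduleDim_eq_supportDim, moduleDim_eq_supportDim,
      Module.supportDim_quotient_eq_ringKrullDim] at hDI
    have : IsLocalRing (A ⧸ p') :=
      .of_surjective' (Ideal.Quotient.mk p') Ideal.Quotient.mk_surjective
    obtain ⟨c, hc⟩ := exists_ringKrullDim_eq_natCast (A ⧸ p')
    have h := hDI.trans hA
    rw [hc, hheight, add_comm, ENat.WithBot.add_le_add_natCast_right_iff] at h
    rwa [Module.supportDim, hsupp] at h
  have hdepth : moduleDepth A (LocalizedModule S (M ⊗[R] N)) ≤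
      moduleDepth A (LocalizedModule S N) := by
    have hM : moduleDepth A (LocalizedModule S M) ≤ moduleDepth A A := by
      rw [← WithBot.coe_le_coe, hCMQ]
      exact (moduleDepth_le_supportDim _).trans (Module.supportDim_le_ringKrullDim _ _)
    have hfin : moduleDepth A A ≠ ⊤ := fun h ↦ by
      obtain ⟨d, hd⟩ := exists_ringKrullDim_eq_natCast A
      rw [hd, h] at hCMQ
      exact ENat.top_ne_natCast d (WithBot.coe_eq_coe.mp hCMQ)
    rw [← ENat.add_le_add_iff_left hfin, ← hdepthformula Q hQ]
    gcongr
  have hmin : min (n : ℕ∞) (Order.height Q) ≤ Order.height p :=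
    ((hSn Q hQ).trans hdepth).trans
      (WithBot.coe_le_coe.mp ((moduleDepth_le_supportDim _).trans hdimN))
  rcases min_le_iff.mp hmin with h | h
  · exact absurd hpn h.not_gt
  · exact absurd (Order.height_strictMono hlt (hpn.trans (ENat.natCast_lt_top n))) h.not_gt
end
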